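/- arXiv:1711.01064 — 3 statements merged into one kernel-verified Lean document; each statement's English description precedes it below -/
import Mathlib

section
/- For M ≥ 1 and 0 ≤ N ≤ M, the following Cauchy-type identity holds: Σ_{x ⊔ x̄ = {1,2,…,M}} F̄_{M,M−N}(z_1,…,z_{M−N}|w_1,…,w_M|x̄_1,…,x̄_{M−N}) · F_{M,N}(z_{M−N+1},…,z_M|w_1,…,w_M|x_1,…,x_N) = (a²−a⁻²)^M ∏_{i=1}^M w_i^M ∏_{i=1}^M (b w_i⁻¹−b⁻¹)(a²z_i²−a⁻²z_i⁻²) × [∏_{i,j=1}^M (a²+a⁻²−z_i⁻²w_j−z_i²w_j⁻¹)(a²+a⁻²−z_i⁻²w_j⁻¹−z_i²w_j)] / [∏_{1≤i<j≤M}(−z_i⁻¹z_j+z_i z_j⁻¹)(z_i⁻¹z_j⁻¹−z_i z_j)(−w_j⁻¹+w_i⁻¹)(w_i w_j−1)] × det_{M×M}( 1 / [(a²+a⁻²−z_i⁻²w_j−z_i²w_j⁻¹)(a²+a⁻²−z_i⁻²w_j⁻¹−z_i²w_j)] ), where the sum is over all pairs of increasing sequences x = {x_1 < ⋯ < x_N}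 and x̄ = {x̄_1 < ⋯ < x̄_{M−N}} of integers in {1,…,M} whose disjoint union is {1,2,…,M}. -/
open Finset

def eps {N : ℕ} (τ : Fin N → Bool) (j : Fin N) : ℤ := if τ j then 1 else -1

noncomputable def pairFactor (a Z1 Z2 : ℂ) (t1 t2 : ℤ) : ℂ :=
  ((a ^ (2:ℤ) * Z1 ^ t1 * Z2 ^ t2 - a ^ (-2:ℤ) * Z1 ^ (-t1) * Z2 ^ (-t2)) *
   (a ^ (2:ℤ) * Z1 ^ (-t1) * Z2 ^ t2 - a ^ (-2:ℤ) * Z1 ^ t1 * Z2 ^ (-t2))) /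
  ((Z1 ^ t1 * Z2 ^ t2 - Z1 ^ (-t1) * Z2 ^ (-t2)) *
   (Z1 ^ (-t1) * Z2 ^ t2 - Z1 ^ t1 * Z2 ^ (-t2)))

/-- The symmetric function `F_{M,N}(z_1,…,z_N|w_1,…,w_M|x_1,…,x_N)`,
where `x k` for `k = 0,…,N-1` encodes `x_{k+1}`. -/
noncomputable def FF (a b : ℂ) (M N : ℕ) (z : Fin N → ℂ) (w : Fin M → ℂ) (x : ℕ → ℕ) : ℂ :=
  (a ^ (2:ℤ) - a ^ (-2:ℤ)) ^ N *
  (∏ j, (-(a ^ (2:ℤ) * z j ^ (2:ℤ)) + a ^ (-2:ℤ) * z j ^ (-2:ℤ))) *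
  ∑ σ : Equiv.Perm (Fin N), ∑ τ : Fin N → Bool,
    (∏ j, (z j ^ (2 * eps τ j) - z j ^ (-(2 * eps τ j)))⁻¹) *
    (∏ p ∈ Finset.univ.filter (fun p : Fin N × Fin N => p.1 < p.2),
      pairFactor a (z (σ p.1)) (z (σ p.2)) (eps τ (σ p.1)) (eps τ (σ p.2))) *
    (∏ k, (b * a⁻¹ * z (σ k) ^ (-(eps τ (σ k))) - b⁻¹ * a * z (σ k) ^ (eps τ (σ k)))) *
    (∏ k, ∏ j : Fin M, (a * z (σ k) ^ (-(eps τ (σ k))) - a⁻¹ * z (σ k) ^ (eps τ (σ k)) * w j)) *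
    (∏ k : Fin N, ∏ j ∈ Finset.univ.filter (fun j : Fin M => (j : ℕ) + 1 < x k.val),
      (a * z (σ k) ^ (-(eps τ (σ k))) * w j - a⁻¹ * z (σ k) ^ (eps τ (σ k)))) *
    (∏ k : Fin N, ∏ j ∈ Finset.univ.filter (fun j : Fin M => x k.val ≤ (j : ℕ)),
      (a * z (σ k) ^ (eps τ (σ k)) - a⁻¹ * z (σ k) ^ (-(eps τ (σ k))) * w j))

/-- The dual symmetric function `F̄_{M,N}(z_1,…,z_N|w_1,…,w_M|x̄_1,…,x̄_N)`. -/
noncomputable def FBar (a b : ℂ) (M N : ℕ) (z : Fin N → ℂ) (w : Fin M → ℂ) (x : ℕ → ℕ) : ℂ :=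
  (a ^ (2:ℤ) - a ^ (-2:ℤ)) ^ N *
  (∏ j, (-(a ^ (2:ℤ) * z j ^ (2:ℤ)) + a ^ (-2:ℤ) * z j ^ (-2:ℤ))) *
  ∑ σ : Equiv.Perm (Fin N), ∑ τ : Fin N → Bool,
    (∏ j, (z j ^ (2 * eps τ j) - z j ^ (-(2 * eps τ j)))⁻¹) *
    (∏ p ∈ Finset.univ.filter (fun p : Fin N × Fin N => p.1 < p.2),
      pairFactor a (z (σ p.1)) (z (σ p.2)) (eps τ (σ p.1)) (eps τ (σ p.2))) *
    (∏ k, (b * a * z (σ k) ^ (eps τ (σ k)) - b⁻¹ * a⁻¹ * z (σ k) ^ (-(eps τ (σ k))))) *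
    (∏ k, ∏ j : Fin M, (a * z (σ k) ^ (-(eps τ (σ k))) * w j - a⁻¹ * z (σ k) ^ (eps τ (σ k)))) *
    (∏ k : Fin N, ∏ j ∈ Finset.univ.filter (fun j : Fin M => (j : ℕ) + 1 < x k.val),
      (a * z (σ k) ^ (-(eps τ (σ k))) - a⁻¹ * z (σ k) ^ (eps τ (σ k)) * w j)) *
    (∏ k : Fin N, ∏ j ∈ Finset.univ.filter (fun j : Fin M => x k.val ≤ (j : ℕ)),
      (a * z (σ k) ^ (eps τ (σ k)) * w j - a⁻¹ * z (σ k) ^ (-(eps τ (σ k)))))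

/-- `xfun T k` is the `(k+1)`-st smallest element of `T`, in 1-based labelling. -/
def xfun {M : ℕ} (T : Finset (Fin M)) (k : ℕ) : ℕ :=
  ((T.sort (· ≤ ·)).map (fun j : Fin M => (j : ℕ) + 1)).getD k 0



noncomputable def cA (a : ℂ) (g : Bool) (u w : ℂ) : ℂ :=
  if g then a * u⁻¹ - a⁻¹ * u * w else a * u⁻¹ * w - a⁻¹ * u

noncomputable def cbd (a b : ℂ) (g : Bool) (u : ℂ) : ℂ :=
  if g then b * a⁻¹ * u⁻¹ - b⁻¹ * a * u else b * a * u - b⁻¹ * a⁻¹ * u⁻¹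

noncomputable def cpr (a u v : ℂ) : ℂ :=
  ((a ^ 2 * u * v - (a⁻¹) ^ 2 * u⁻¹ * v⁻¹) * (a ^ 2 * u⁻¹ * v - (a⁻¹) ^ 2 * u * v⁻¹)) /
  ((u * v - u⁻¹ * v⁻¹) * (u⁻¹ * v - u * v⁻¹))

noncomputable def cloc (a b : ℂ) (g : Bool) {n : ℕ} (u : ℂ) (w : Fin n → ℂ) (p : Fin n) : ℂ :=
  (u ^ 2 - (u⁻¹) ^ 2)⁻¹ * cbd a b g u * (∏ j, cA a g u (w j)) *
    ∏ j, (if j < p then cA a (!g) u (w j) else if p < j then cA a g u⁻¹ (w j) else 1)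

noncomputable def cTT (a b : ℂ) {n : ℕ} (g : Fin n → Bool) (u w : Fin n → ℂ)
    (π : Equiv.Perm (Fin n)) : ℂ :=
  (∏ p, cloc a b (g (π p)) (u (π p)) w p) *
  ∏ q, ∏ p, (if p < q then (if g (π p) = g (π q) then cpr a (u (π p)) (u (π q)) else 1) else 1)

noncomputable def csg (z : ℂ) (t : Bool) : ℂ := if t then z else z⁻¹

noncomputable def cLL (a b : ℂ) {n : ℕ} (g : Fin n → Bool) (z w : Fin n → ℂ) : ℂ :=
  ∑ π : Equiv.Perm (Fin n), ∑ τ : Fin n → Bool, cTT a b g (fun i => csg (z i) (τ i)) w π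

noncomputable def cKK (a : ℂ) (gi gk : Bool) (ui uk y : ℂ) : ℂ :=
  cA a gk uk y * cA a gk uk⁻¹ y * (if gk = gi then cpr a uk ui else 1)

noncomputable def cXX (z : ℂ) : ℂ := z ^ 2 + (z⁻¹) ^ 2

noncomputable def cqq (a z w : ℂ) : ℂ :=
  cA a true z w * cA a true z⁻¹ w * (cA a false z w * cA a false z⁻¹ w)

noncomputable def cdW (w y : ℂ) : ℂ := (y - w) * (w * y - 1)

noncomputable def cdd (f : ℂ → ℂ → ℂ) {n : ℕ} (x : Fin n → ℂ) : ℂ :=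
  ∏ q, ∏ p, (if p < q then f (x p) (x q) else 1)

noncomputable def cRR (a b : ℂ) {n : ℕ} (z w : Fin n → ℂ) : ℂ :=
  (∏ j, (w j / b - b)) * (∏ i, ∏ j, cqq a (z i) (w j)) *
   Matrix.det (Matrix.of fun i j : Fin n => (cqq a (z i) (w j))⁻¹) /
   (cdd (fun x y => cXX y - cXX x) z * cdd cdW w)

noncomputable def cnd (a : ℂ) (g : Bool) (u : ℂ) : ℂ :=
  if g then a ^ 2 * u ^ 2 else (a⁻¹) ^ 2 * (u⁻¹) ^ 2

/-! permutations -/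
def cPhi {n : ℕ} (x : Fin (n + 1) × Equiv.Perm (Fin n)) : Equiv.Perm (Fin (n + 1)) :=
  ((finSuccEquiv' (Fin.last n)).trans (Equiv.optionCongr x.2)).trans (finSuccEquiv' x.1).symm

lemma cPhi_last {n : ℕ} (x : Fin (n + 1) × Equiv.Perm (Fin n)) : cPhi x (Fin.last n) = x.1 := by
  simp [cPhi]

lemma cPhi_castSucc {n : ℕ} (x : Fin (n + 1) × Equiv.Perm (Fin n)) (p : Fin n) :
    cPhi x p.castSucc = x.1.succAbove (x.2 p) := by
  rw [← Fin.succAbove_last_apply]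
  simp only [cPhi, Equiv.trans_apply, finSuccEquiv'_succAbove, Equiv.optionCongr_apply,
    Option.map_some, finSuccEquiv'_symm_some]

lemma cPhi_bij {n : ℕ} : Function.Bijective (cPhi (n := n)) := by
  rw [Fintype.bijective_iff_injective_and_card]
  constructor
  · rintro ⟨i, π⟩ ⟨i', π'⟩ h
    have h1 : i = i' := by
      have := congrArg (fun e => e (Fin.last n)) h
      simpa [cPhi_last] using this
    subst h1
    congr 1
    ext p : 1
    have := congrArg (fun e => e p.castSucc) h
    simpa [cPhi_castSucc] using this
  · simp [Fintype.card_perm, Nat.factorial_succ]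

lemma cTT_succ (a b : ℂ) {n : ℕ} (g : Fin (n+1) → Bool) (u w : Fin (n+1) → ℂ)
    (i : Fin (n+1)) (π : Equiv.Perm (Fin n)) :
    cTT a b g u w (cPhi (i, π)) =
      cloc a b (g i) (u i) w (Fin.last n) *
      (∏ k, cKK a (g i) (g (i.succAbove k)) (u i) (u (i.succAbove k)) (w (Fin.last n))) *
      cTT a b (fun k => g (i.succAbove k)) (fun k => u (i.succAbove k)) (fun k => w k.castSucc) π := by
  have h1 : ∀ (g : Bool) (u : ℂ) (p : Fin n), cloc a b g u w p.castSucc =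
      cloc a b g u (fun k => w k.castSucc) p *
        (cA a g u (w (Fin.last n)) * cA a g u⁻¹ (w (Fin.last n))) := by
    intro g u p
    simp only [cloc, Fin.prod_univ_castSucc, Fin.castSucc_lt_castSucc_iff, Fin.castSucc_lt_last,
      if_true, not_lt_of_gt (Fin.castSucc_lt_last p), if_false]
    ring
  unfold cTT
  rw [Fin.prod_univ_castSucc]
  simp only [cPhi_last, cPhi_castSucc, h1]
  rw [Finset.prod_mul_distrib]
  rw [← Equiv.prod_comp π (fun k => cKK a (g i) (g (i.succAbove k)) (u i) (u (i.succAbove k)) (w (Fin.last n)))]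
  rw [Fin.prod_univ_castSucc (f := fun q => ∏ p, _)]
  simp only [Fin.prod_univ_castSucc (n := n), cPhi_last, cPhi_castSucc,
    Fin.castSucc_lt_castSucc_iff, Fin.castSucc_lt_last, lt_irrefl,
      if_true, not_lt_of_gt (Fin.castSucc_lt_last _), if_false, mul_one, cKK, Finset.prod_mul_distrib]
  ring

lemma cpr_inv (a u v : ℂ) : cpr a u⁻¹ v = cpr a u v := by
  simp only [cpr, inv_inv]
  congr 1 <;> ring

lemma cKK_sg (a : ℂ) (gi gk : Bool) (ui uk y : ℂ) (t : Bool) :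
    cKK a gi gk ui (csg uk t) y = cKK a gi gk ui uk y := by
  cases t
  · have h : csg uk false = uk⁻¹ := by simp [csg]
    rw [h]
    simp only [cKK, cpr_inv, inv_inv]
    rw [mul_comm (cA a gk uk⁻¹ y)]
  · simp [csg]

noncomputable def cAi (a b : ℂ) {n : ℕ} (g : Fin (n+1) → Bool) (z : Fin (n+1) → ℂ) (w : Fin n → ℂ)
    (y : ℂ) (i : Fin (n+1)) : ℂ :=
  ∑ t : Bool, ((csg (z i) t) ^ 2 - ((csg (z i) t)⁻¹) ^ 2)⁻¹ * cbd a b (g i) (csg (z i) t) *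
    cA a (g i) (csg (z i) t) y *
    (∏ j, cA a (g i) (csg (z i) t) (w j) * cA a (!(g i)) (csg (z i) t) (w j)) *
    ∏ k, cKK a (g i) (g (i.succAbove k)) (csg (z i) t) (z (i.succAbove k)) y

lemma cLL_succ (a b : ℂ) {n : ℕ} (g : Fin (n+1) → Bool) (z w : Fin (n+1) → ℂ) :
    cLL a b g z w = ∑ i, cAi a b g z (fun k => w k.castSucc) (w (Fin.last n)) i *
      cLL a b (fun k => g (i.succAbove k)) (fun k => z (i.succAbove k)) (fun k => w k.castSucc) := by
  unfold cLL
  rw [← cPhi_bij.sum_comp, Fintype.sum_prod_type]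
  refine Finset.sum_congr rfl fun i _ => ?_
  rw [Finset.mul_sum]
  refine Finset.sum_congr rfl fun π _ => ?_
  rw [← (Fin.insertNthEquiv (fun _ => Bool) i).sum_comp, Fintype.sum_prod_type]
  unfold cAi
  rw [Finset.sum_mul]
  refine Finset.sum_congr rfl fun t _ => ?_
  rw [Finset.mul_sum]
  refine Finset.sum_congr rfl fun τ _ => ?_
  rw [cTT_succ]
  simp only [Fin.insertNthEquiv_apply, Fin.insertNth_apply_same, Fin.insertNth_apply_succAbove, cKK_sg]
  congr 2
  simp only [cloc, Fin.prod_univ_castSucc, Fin.castSucc_lt_last,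
      if_true, lt_irrefl, if_false, Finset.prod_mul_distrib]
  ring

/-! node lemmas -/
lemma cnd_zero (a : ℂ) (ha : a ≠ 0) (g : Bool) (u : ℂ) (hu : u ≠ 0) : cA a g u⁻¹ (cnd a g u) = 0 := by
  cases g <;> simp [cA, cnd] <;> field_simp <;> ring

lemma cnd_bd (a b : ℂ) (ha : a ≠ 0) (hb : b ≠ 0) (g : Bool) (u : ℂ) (hu : u ≠ 0)
    (h : u ^ 2 - (u⁻¹) ^ 2 ≠ 0) :
    (u ^ 2 - (u⁻¹) ^ 2)⁻¹ * cbd a b g u * cA a g u (cnd a g u) = cnd a g u / b - b := by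
  rw [mul_assoc, inv_mul_eq_iff_eq_mul₀ h]
  cases g <;> simp [cA, cnd, cbd] <;> field_simp <;> ring

lemma cnd_w (a : ℂ) (ha : a ≠ 0) (g : Bool) (u : ℂ) (hu : u ≠ 0) (w : ℂ) :
    cA a g u w * cA a (!g) u w * cdW w (cnd a g u) = cnd a g u * cqq a u w := by
  cases g <;> simp [cA, cnd, cqq, cdW] <;> field_simp <;> ring

lemma cden (u v : ℂ) (hu : u ≠ 0) (hv : v ≠ 0) :
   (v * u - v⁻¹ * u⁻¹) * (v⁻¹ * u - v * u⁻¹) = cXX u - cXX v := by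
  simp only [cXX]; field_simp; ring

lemma cnd_k (a : ℂ) (ha : a ≠ 0) (g g' : Bool) (u v : ℂ) (hu : u ≠ 0) (hv : v ≠ 0)
    (h : cXX u - cXX v ≠ 0) :
    cqq a v (cnd a g u) = cnd a g u * cKK a g g' u v (cnd a g u) * (cXX u - cXX v) := by
  by_cases hg : g' = g
  · subst hg
    simp only [cKK, if_true, cpr, cden u v hu hv]
    rw [mul_assoc, mul_assoc (_ * _), div_mul_cancel₀ _ h]
    cases g' <;> simp [cA, cnd, cqq] <;> field_simp <;> ring
  · simp only [cKK, if_neg hg, cXX]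
    cases g <;> cases g' <;> simp at hg <;> simp [cA, cnd, cqq] <;> field_simp <;> ring


/-! polynomial functions -/
def cP (d : ℕ) (f : ℂ → ℂ) : Prop := ∃ p : Polynomial ℂ, p.natDegree ≤ d ∧ ∀ y, f y = p.eval y

lemma cP_const (c : ℂ) : cP 0 (fun _ => c) := ⟨Polynomial.C c, by simp, by simp⟩

lemma cP.mono {d e : ℕ} {f : ℂ → ℂ} (h : cP d f) (hde : d ≤ e) : cP e f := by
  obtain ⟨p, hp, h⟩ := h
  exact ⟨p, hp.trans hde, h⟩

lemma cP.mul {d e : ℕ} {f g : ℂ → ℂ} (hf : cP d f) (hg : cP e g) : cP (d + e) (fun y => f y * g y) := by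
  obtain ⟨p, hp, h⟩ := hf
  obtain ⟨q, hq, h'⟩ := hg
  exact ⟨p * q, Polynomial.natDegree_mul_le.trans (by omega), fun y => by simp [h, h']⟩

lemma cP.sub {d : ℕ} {f g : ℂ → ℂ} (hf : cP d f) (hg : cP d g) : cP d (fun y => f y - g y) := by
  obtain ⟨p, hp, h⟩ := hf
  obtain ⟨q, hq, h'⟩ := hg
  exact ⟨p - q, (Polynomial.natDegree_sub_le _ _).trans (by simp [hp, hq]), fun y => by simp [h, h']⟩

lemma cP.sum {ι : Type*} (s : Finset ι) {d : ℕ} {f : ι → ℂ → ℂ} (hf : ∀ i ∈ s, cP d (f i)) :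
    cP d (fun y => ∑ i ∈ s, f i y) := by
  choose! p hp h using hf
  refine ⟨∑ i ∈ s, p i, Polynomial.natDegree_sum_le_of_forall_le s _ hp, fun y => ?_⟩
  rw [Polynomial.eval_finsetSum]
  exact Finset.sum_congr rfl fun i hi => h i hi y

lemma cP.prod {ι : Type*} (s : Finset ι) {d : ℕ} {f : ι → ℂ → ℂ} (hf : ∀ i ∈ s, cP d (f i)) :
    cP (s.card * d) (fun y => ∏ i ∈ s, f i y) := by
  choose! p hp h using hf
  refine ⟨∏ i ∈ s, p i, (Polynomial.natDegree_prod_le s _).trans ?_, fun y => ?_⟩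
  · exact (Finset.sum_le_card_nsmul s _ d hp).trans (by simp)
  rw [Polynomial.eval_prod]
  exact Finset.prod_congr rfl fun i hi => h i hi y

lemma cP_lin (c d : ℂ) : cP 1 (fun y => c + d * y) :=
  ⟨Polynomial.C c + Polynomial.C d * Polynomial.X, by compute_degree, by simp⟩

lemma cP_cA (a : ℂ) (g : Bool) (u : ℂ) : cP 1 (cA a g u) := by
  cases g
  · convert cP_lin (-(a⁻¹ * u)) (a * u⁻¹) using 2; simp [cA]; ring
  · convert cP_lin (a * u⁻¹) (-(a⁻¹ * u)) using 2; simp [cA]; ring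

lemma cP_cdW (w : ℂ) : cP 2 (cdW w) := by
  have := (cP_lin (-w) 1).mul (cP_lin (-1) w)
  convert this using 2
  simp only [cdW]; ring

lemma cP_cqq (a z : ℂ) : cP 4 (cqq a z) :=
  ((cP_cA a true z).mul (cP_cA a true z⁻¹)).mul ((cP_cA a false z).mul (cP_cA a false z⁻¹))

lemma cP_cKK (a : ℂ) (g g' : Bool) (u v : ℂ) : cP 2 (cKK a g g' u v) :=
  ((cP_cA a g' v).mul (cP_cA a g' v⁻¹)).mul (cP_const _)

lemma cP_cAi (a b : ℂ) {n : ℕ} (g : Fin (n+1) → Bool) (z : Fin (n+1) → ℂ) (w : Fin n → ℂ)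
    (i : Fin (n+1)) : cP (1 + n * 2) (fun y => cAi a b g z w y i) := by
  unfold cAi
  refine cP.sum _ fun t _ => ?_
  have h := (((cP_const (((csg (z i) t) ^ 2 - ((csg (z i) t)⁻¹) ^ 2)⁻¹ * cbd a b (g i) (csg (z i) t))).mul
    (cP_cA a (g i) (csg (z i) t))).mul (cP_const (∏ j, cA a (g i) (csg (z i) t) (w j) *
      cA a (!(g i)) (csg (z i) t) (w j)))).mul (cP.prod Finset.univ
      (f := fun k => cKK a (g i) (g (i.succAbove k)) (csg (z i) t) (z (i.succAbove k)))
        (fun k _ => cP_cKK _ _ _ _ _))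
  exact h.mono (by simp)

noncomputable def cBi (a : ℂ) {n : ℕ} (z : Fin (n+1) → ℂ) (w : Fin n → ℂ)
    (y : ℂ) (i : Fin (n+1)) : ℂ :=
  (∏ k, cqq a (z (i.succAbove k)) y) * (∏ k, (cXX (z i) - cXX (z (i.succAbove k)))⁻¹) *
    ∏ j, cqq a (z i) (w j)

lemma cP_cBi (a : ℂ) {n : ℕ} (z : Fin (n+1) → ℂ) (w : Fin n → ℂ)
    (i : Fin (n+1)) : cP (n * 4) (fun y => cBi a z w y i) := by
  unfold cBi
  have h := ((cP.prod Finset.univ (f := fun k => cqq a (z (i.succAbove k)))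
    (fun k _ => cP_cqq _ _)).mul (cP_const (∏ k, (cXX (z i) - cXX (z (i.succAbove k)))⁻¹))).mul
    (cP_const (∏ j, cqq a (z i) (w j)))
  exact h.mono (by simp)

lemma csign_aux (i n : ℕ) (h : i ≤ n) :
    ∏ k ∈ Finset.range n, (if i ≤ k then (-1 : ℂ) else 1) = (-1) ^ (i + n) := by
  induction n, h using Nat.le_induction with
  | base =>
    rw [Finset.prod_congr rfl (g := fun _ => (1 : ℂ))]
    · simp [← two_mul]
    · intro k hk
      rw [if_neg]
      simpa using hk
  | succ n hn ih =>
    rw [Finset.prod_range_succ, ih, if_pos hn, ← add_assoc, pow_succ]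

lemma cdd_X {n : ℕ} (z : Fin (n+1) → ℂ) (i : Fin (n+1)) :
    cdd (fun x y => cXX y - cXX x) z = (-1) ^ ((i : ℕ) + n) *
      (∏ k, (cXX (z i) - cXX (z (i.succAbove k)))) *
      cdd (fun x y => cXX y - cXX x) (fun k => z (i.succAbove k)) := by
  unfold cdd
  rw [Fin.prod_univ_succAbove _ i]
  simp only [Fin.prod_univ_succAbove (M := ℂ) _ i, Fin.succAbove_lt_succAbove_iff, lt_irrefl, if_false, one_mul,
    Finset.prod_mul_distrib]
  rw [← mul_assoc, ← csign_aux i n (by omega), ← Fin.prod_univ_eq_prod_range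
    (fun k => if (i : ℕ) ≤ k then (-1 : ℂ) else 1) n]
  congr 1
  rw [← Finset.prod_mul_distrib, ← Finset.prod_mul_distrib]
  refine Finset.prod_congr rfl fun k _ => ?_
  by_cases h : (i : ℕ) ≤ k
  · have h1 : i < i.succAbove k := Fin.lt_succAbove_iff_le_castSucc _ _ |>.2 h
    rw [if_neg (not_lt_of_gt h1), if_pos h1, if_pos h]
    ring
  · have h1 : i.succAbove k < i := Fin.succAbove_lt_iff_castSucc_lt _ _ |>.2 (by simpa [Fin.lt_def] using h)
    rw [if_neg (not_lt_of_gt h1), if_pos h1, if_neg h]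
    ring

lemma cdd_last (f : ℂ → ℂ → ℂ) {n : ℕ} (w : Fin (n+1) → ℂ) :
    cdd f w = cdd f (fun k => w k.castSucc) * ∏ j : Fin n, f (w j.castSucc) (w (Fin.last n)) := by
  unfold cdd
  rw [Fin.prod_univ_castSucc]
  simp only [Fin.prod_univ_castSucc, not_lt_of_gt (Fin.castSucc_lt_last _),
    Fin.castSucc_lt_castSucc_iff, Fin.castSucc_lt_last, lt_irrefl, if_true, if_false, mul_one]

noncomputable def cdm (a : ℂ) {n : ℕ} (z : Fin (n+1) → ℂ) (w : Fin n → ℂ) (i : Fin (n+1)) : ℂ :=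
  Matrix.det (Matrix.of fun k j : Fin n => (cqq a (z (i.succAbove k)) (w j))⁻¹)

noncomputable def cC0 (a b : ℂ) {n : ℕ} (z : Fin (n+1) → ℂ) (w : Fin n → ℂ) : ℂ :=
  (∏ j, (w j / b - b)) * (∏ i, ∏ j, cqq a (z i) (w j)) /
    (cdd (fun x y => cXX y - cXX x) z * cdd cdW w)

lemma cBR (a b : ℂ) {n : ℕ} (z : Fin (n+1) → ℂ) (w : Fin n → ℂ) (y : ℂ) (i : Fin (n+1)) :
    cBi a z w y i * cRR a b (fun k => z (i.succAbove k)) w =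
      cC0 a b z w * ((-1) ^ ((i : ℕ) + n) * (∏ k, cqq a (z (i.succAbove k)) y) * cdm a z w i) := by
  unfold cBi cRR cC0 cdm
  rw [cdd_X z i, Fin.prod_univ_succAbove (fun i => ∏ j, cqq a (z i) (w j)) i, Finset.prod_inv_distrib]
  have h : ((-1 : ℂ) ^ ((i : ℕ) + n))⁻¹ = (-1) ^ ((i : ℕ) + n) := by
    rw [← inv_pow]; norm_num
  have h2 : ((-1 : ℂ) ^ ((i : ℕ) + n)) * (-1) ^ ((i : ℕ) + n) = 1 := by
    rw [← mul_pow]; norm_num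
  simp only [div_eq_mul_inv, mul_inv, h]
  linear_combination (-1 : ℂ) * (∏ j, (w j * b⁻¹ - b)) * ((∏ j, cqq a (z i) (w j)) *
    (∏ k, ∏ j, cqq a (z (i.succAbove k)) (w j))) *
    ((∏ k, (cXX (z i) - cXX (z (i.succAbove k))))⁻¹ *
    (cdd (fun x y => cXX y - cXX x) (fun k => z (i.succAbove k)))⁻¹ * (cdd cdW w)⁻¹) *
    (∏ k, cqq a (z (i.succAbove k)) y) *
    (Matrix.det (Matrix.of fun k j : Fin n => (cqq a (z (i.succAbove k)) (w j))⁻¹)) * h2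

lemma cNum (a : ℂ) {n : ℕ} (z w : Fin (n+1) → ℂ) (h : ∀ i, cqq a (z i) (w (Fin.last n)) ≠ 0) :
    ∑ i : Fin (n+1), (-1) ^ ((i : ℕ) + n) * (∏ k, cqq a (z (i.succAbove k)) (w (Fin.last n))) *
      cdm a z (fun k => w k.castSucc) i =
    (∏ i, cqq a (z i) (w (Fin.last n))) *
      Matrix.det (Matrix.of fun i j : Fin (n+1) => (cqq a (z i) (w j))⁻¹) := by
  rw [Matrix.det_succ_column _ (Fin.last n), Finset.mul_sum]
  refine Finset.sum_congr rfl fun i _ => ?_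
  rw [Fin.prod_univ_succAbove _ i]
  have : Matrix.det ((Matrix.of fun i j : Fin (n+1) => (cqq a (z i) (w j))⁻¹).submatrix i.succAbove
    (Fin.last n).succAbove) = cdm a z (fun k => w k.castSucc) i := by
    unfold cdm
    congr 1
    ext k j
    simp [Fin.succAbove_last]
  rw [this]
  simp only [Matrix.of_apply, Fin.val_last]
  field_simp [h i]

lemma cRR_succ (a b : ℂ) {n : ℕ} (z w : Fin (n+1) → ℂ) (h : ∀ i, cqq a (z i) (w (Fin.last n)) ≠ 0)
    (hw : ∀ j : Fin n, cdW (w j.castSucc) (w (Fin.last n)) ≠ 0) :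
    (∏ j : Fin n, cdW (w j.castSucc) (w (Fin.last n))) * cRR a b z w =
     (w (Fin.last n) / b - b) * ∑ i, cBi a z (fun k => w k.castSucc) (w (Fin.last n)) i *
      cRR a b (fun k => z (i.succAbove k)) (fun k => w k.castSucc) := by
  simp only [cBR]
  rw [← Finset.mul_sum, cNum a z w h]
  unfold cRR cC0
  have h' : (∏ j : Fin n, cdW (w j.castSucc) (w (Fin.last n))) ≠ 0 :=
    Finset.prod_ne_zero_iff.2 fun j _ => hw j
  rw [cdd_last cdW w, Fin.prod_univ_castSucc (fun j => w j / b - b)]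
  simp only [Fin.prod_univ_castSucc (fun j => cqq a _ (w j)), Finset.prod_mul_distrib]
  generalize cdd cdW _ = X
  generalize cdd _ z = Y
  simp only [div_eq_mul_inv, mul_inv]
  field_simp

lemma cqq_sg (a z w : ℂ) (t : Bool) : cqq a (csg z t) w = cqq a z w := by
  cases t
  · simp only [csg, cqq, Bool.false_eq_true, if_false, inv_inv]; ring
  · simp [csg]

lemma cXX_sg (z : ℂ) (t : Bool) : cXX (csg z t) = cXX z := by
  cases t
  · simp only [csg, cXX, Bool.false_eq_true, if_false, inv_inv]; ring
  · simp [csg]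

lemma cqq_inv (a z w : ℂ) (ha : a ≠ 0) (hz : z ≠ 0) (hw : w ≠ 0) : cqq a z w⁻¹ = (w⁻¹) ^ 4 * cqq a z w := by
  simp [cqq, cA]; field_simp

lemma cqq_sg' (a z w : ℂ) (t : Bool) (ha : a ≠ 0) (hz : z ≠ 0) (hw : w ≠ 0) :
    cqq a z (csg w t) = (if t then 1 else (w⁻¹) ^ 4) * cqq a z w := by
  cases t <;> simp [csg, cqq_inv a z w ha hz hw]

lemma cqq_nd (a z : ℂ) (g : Bool) (ha : a ≠ 0) (hz : z ≠ 0) : cqq a z (cnd a g z) = 0 := by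
  have := cnd_zero a ha g z hz
  cases g <;> simp [cqq, this]

lemma csg_ne (z : ℂ) (t : Bool) (hz : z ≠ 0) : csg z t ≠ 0 := by
  cases t <;> simp [csg, hz]

lemma csg_not (z : ℂ) (t : Bool) : csg z (!t) = (csg z t)⁻¹ := by
  cases t <;> simp [csg]

structure cGen (a : ℂ) {n : ℕ} (g : Fin n → Bool) (z w : Fin n → ℂ) : Prop where
  hz : ∀ i, z i ≠ 0
  hw : ∀ i, w i ≠ 0
  hq : ∀ i j, cqq a (z i) (w j) ≠ 0
  hX : ∀ i k, i ≠ k → cXX (z i) ≠ cXX (z k)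
  h4 : ∀ i, (z i) ^ 2 - ((z i)⁻¹) ^ 2 ≠ 0
  hnd : Function.Injective (fun x : Fin n × Bool => cnd a (g x.1) (csg (z x.1) x.2))
  hwn : Function.Injective (fun x : Fin n × Bool => csg (w x.1) x.2)

lemma cGen.succ {a : ℂ} {n : ℕ} {g : Fin (n+1) → Bool} {z w : Fin (n+1) → ℂ} (h : cGen a g z w)
    (i : Fin (n+1)) : cGen a (fun k => g (i.succAbove k)) (fun k => z (i.succAbove k))
      (fun k => w k.castSucc) where
  hz _ := h.hz _
  hw _ := h.hw _
  hq _ _ := h.hq _ _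
  hX k l hkl := h.hX _ _ (by simpa using hkl)
  h4 _ := h.h4 _
  hnd := by
    rintro ⟨k, s⟩ ⟨l, t⟩ hkl
    have := h.hnd (a₁ := (i.succAbove k, s)) (a₂ := (i.succAbove l, t)) hkl
    simpa using this
  hwn := by
    rintro ⟨k, s⟩ ⟨l, t⟩ hkl
    have := h.hwn (a₁ := (k.castSucc, s)) (a₂ := (l.castSucc, t)) hkl
    simpa using this

lemma cdW_sg_zero (w : ℂ) (t : Bool) (hw : w ≠ 0) : cdW w (csg w t) = 0 := by
  cases t <;> simp [cdW, csg, hw]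

lemma cAi_ne (a b : ℂ) (ha : a ≠ 0) {n : ℕ} (g : Fin (n+1) → Bool) (z : Fin (n+1) → ℂ) (w : Fin n → ℂ)
    (i k : Fin (n+1)) (hik : k ≠ i) (t : Bool) (hz : z i ≠ 0) :
    cAi a b g z w (cnd a (g i) (csg (z i) t)) k = 0 := by
  unfold cAi
  refine Finset.sum_eq_zero fun s _ => ?_
  obtain ⟨l, hl⟩ := Fin.exists_succAbove_eq hik.symm
  refine mul_eq_zero_of_right _ (Finset.prod_eq_zero (Finset.mem_univ l) ?_)
  rw [hl, ← cKK_sg _ _ _ _ _ _ t, cKK, cnd_zero a ha _ _ (csg_ne _ _ hz)]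
  simp

lemma cBi_ne (a : ℂ) (ha : a ≠ 0) {n : ℕ} (g : Fin (n+1) → Bool) (z : Fin (n+1) → ℂ) (w : Fin n → ℂ)
    (i k : Fin (n+1)) (hik : k ≠ i) (t : Bool) (hz : z i ≠ 0) :
    cBi a z w (cnd a (g i) (csg (z i) t)) k = 0 := by
  unfold cBi
  obtain ⟨l, hl⟩ := Fin.exists_succAbove_eq hik.symm
  refine mul_eq_zero_of_left (mul_eq_zero_of_left (Finset.prod_eq_zero (Finset.mem_univ l) ?_) _) _
  rw [hl, ← cqq_sg _ _ _ t, cqq_nd a _ _ ha (csg_ne _ _ hz)]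

lemma cAB (a b : ℂ) (ha : a ≠ 0) (hb : b ≠ 0) {n : ℕ} (g : Fin (n+1) → Bool) (z : Fin (n+1) → ℂ)
    (w : Fin n → ℂ) (i : Fin (n+1)) (t : Bool) (hz : ∀ i, z i ≠ 0)
    (hX : ∀ i k, i ≠ k → cXX (z i) ≠ cXX (z k)) (h4 : (z i) ^ 2 - ((z i)⁻¹) ^ 2 ≠ 0) :
    (∏ j, cdW (w j) (cnd a (g i) (csg (z i) t))) * cAi a b g z w (cnd a (g i) (csg (z i) t)) i =
    ((cnd a (g i) (csg (z i) t)) / b - b) * cBi a z w (cnd a (g i) (csg (z i) t)) i := by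
  have hu : csg (z i) t ≠ 0 := csg_ne _ _ (hz i)
  have h4' : (csg (z i) t) ^ 2 - ((csg (z i) t)⁻¹) ^ 2 ≠ 0 := by
    cases t
    · simp only [csg, Bool.false_eq_true, if_false, inv_inv]
      rw [← neg_sub]
      exact neg_ne_zero.2 h4
    · simpa [csg] using h4
  unfold cAi
  rw [Fintype.sum_eq_single t]
  swap
  · intro s hs
    have : s = !t := by cases s <;> cases t <;> simp_all
    rw [this, csg_not, cnd_zero a ha _ _ hu]
    simp
  rw [cnd_bd a b ha hb _ _ hu h4']
  unfold cBi
  simp only [← cqq_sg a (z i) _ t, ← cXX_sg (z i) t]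
  set u := csg (z i) t
  set y := cnd a (g i) u with hy
  have hy0 : y ≠ 0 := by
    rw [hy]; unfold cnd
    split_ifs <;> simp [ha, hu]
  have hyn : y ^ n = ∏ _k : Fin n, y := by simp
  have e1 : (∏ j, cdW (w j) y) * (∏ j, cA a (g i) u (w j) * cA a (!(g i)) u (w j)) =
      y ^ n * ∏ j, cqq a u (w j) := by
    rw [← Finset.prod_mul_distrib]
    rw [hyn, ← Finset.prod_mul_distrib]
    refine Finset.prod_congr rfl fun j _ => ?_
    rw [← cnd_w a ha _ u hu, mul_comm]
  have e2 : (∏ k, cqq a (z (i.succAbove k)) y) * (∏ k, (cXX u - cXX (z (i.succAbove k)))⁻¹) =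
      y ^ n * ∏ k, cKK a (g i) (g (i.succAbove k)) u (z (i.succAbove k)) y := by
    rw [← Finset.prod_mul_distrib]
    rw [hyn, ← Finset.prod_mul_distrib]
    refine Finset.prod_congr rfl fun k _ => ?_
    have hne : cXX u - cXX (z (i.succAbove k)) ≠ 0 := by
      rw [cXX_sg, sub_ne_zero]
      exact hX _ _ (Fin.succAbove_ne i k).symm
    rw [cnd_k a ha (g i) (g (i.succAbove k)) u _ hu (hz _) hne, mul_inv_cancel_right₀ hne]
  rw [e2]
  linear_combination ((y / b - b) * ∏ k, cKK a (g i) (g (i.succAbove k)) u (z (i.succAbove k)) y) * e1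

theorem cMain (a b : ℂ) (ha : a ≠ 0) (hb : b ≠ 0) : ∀ {n : ℕ} (g : Fin n → Bool) (z w : Fin n → ℂ),
    cGen a g z w → cLL a b g z w = cRR a b z w := by
  intro n
  induction n with
  | zero =>
    intro g z w _
    simp [cLL, cRR, cTT, cdd]
  | succ n ih =>
    intro g z w h
    set w' : Fin n → ℂ := fun k => w k.castSucc with hw'
    set R : Fin (n+1) → ℂ := fun i => cRR a b (fun k => z (i.succAbove k)) w' with hR
    have key : ∀ y, (∏ j, cdW (w' j) y) * (∑ i, cAi a b g z w' y i * R i) -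
        (y / b - b) * (∑ i, cBi a z w' y i * R i) = 0 := by
      have hP : cP (4 * n + 1) (fun y => (∏ j, cdW (w' j) y) * (∑ i, cAi a b g z w' y i * R i) -
        (y / b - b) * (∑ i, cBi a z w' y i * R i)) := by
        refine cP.sub ?_ ?_
        · refine ((cP.prod Finset.univ (f := fun j => cdW (w' j)) (fun j _ => cP_cdW _)).mul
            (cP.sum Finset.univ (f := fun i y => cAi a b g z w' y i * R i)
              (fun i _ => (cP_cAi a b g z w' i).mul (cP_const _)))).mono ?_
          simp; omega
        · have h1 : cP 1 (fun y => y / b - b) := by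
            convert cP_lin (-b) (b⁻¹) using 2; ring
          refine (h1.mul
            (cP.sum Finset.univ (f := fun i y => cBi a z w' y i * R i)
              (fun i _ => (cP_cBi a z w' i).mul (cP_const _)))).mono ?_
          omega
      obtain ⟨p, hp, hpe⟩ := hP
      have hp0 : p = 0 := by
        refine Polynomial.eq_zero_of_natDegree_lt_card_of_eval_eq_zero p
          (ι := (Fin (n+1) × Bool) ⊕ (Fin n × Bool))
          (f := Sum.elim (fun x => cnd a (g x.1) (csg (z x.1) x.2)) (fun x => csg (w' x.1) x.2)) ?_ ?_ ?_
        · refine Function.Injective.sumElim h.hnd ?_ ?_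
          · rintro ⟨k, s⟩ ⟨l, t⟩ hkl
            have := h.hwn (a₁ := (k.castSucc, s)) (a₂ := (l.castSucc, t)) hkl
            simpa using this
          · rintro ⟨i, t⟩ ⟨j, s⟩ hij
            have h1 := cqq_nd a (csg (z i) t) (g i) ha (csg_ne _ _ (h.hz i))
            simp only at hij
            rw [cqq_sg, hij, cqq_sg' _ _ _ _ ha (h.hz _) (h.hw _)] at h1
            rcases mul_eq_zero.1 h1 with h1 | h1
            · split_ifs at h1
              · simp at h1
              · exact h.hw _ (by simpa using h1)
            · exact h.hq _ _ h1
        · rintro (⟨i, t⟩ | ⟨j, t⟩)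
          · rw [← hpe]
            simp only [Sum.elim_inl]
            rw [Fintype.sum_eq_single i, Fintype.sum_eq_single i]
            · have := cAB a b ha hb g z w' i t h.hz h.hX (h.h4 i)
              linear_combination R i * this
            · intro k hk
              rw [cBi_ne a ha g z w' i k hk t (h.hz i), zero_mul]
            · intro k hk
              rw [cAi_ne a b ha g z w' i k hk t (h.hz i), zero_mul]
          · rw [← hpe]
            simp only [Sum.elim_inr]
            rw [Finset.prod_eq_zero (Finset.mem_univ j) (cdW_sg_zero _ _ (h.hw _))]
            have h0 : ∑ i, cBi a z w' (csg (w' j) t) i * R i = 0 := by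
              simp only [hR, cBR]
              rw [← Finset.mul_sum]
              have hne : ∀ i, cqq a (z i) (csg (w' j) t) ≠ 0 := by
                intro i
                rw [cqq_sg' _ _ _ _ ha (h.hz _) (h.hw _)]
                refine mul_ne_zero ?_ (h.hq _ _)
                split_ifs
                · simp
                · have := h.hw j.castSucc
                  simpa [hw'] using this
              have := cNum a z (Fin.snoc w' (csg (w' j) t) : Fin (n+1) → ℂ) (by simpa using hne)
              simp only [Fin.snoc_last, Fin.snoc_castSucc] at this
              rw [this]
              refine mul_eq_zero_of_right _ (mul_eq_zero_of_right _ ?_)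
              rw [← Matrix.det_transpose]
              have e : Matrix.transpose (Matrix.of fun i k : Fin (n+1) =>
                  (cqq a (z i) ((Fin.snoc w' (csg (w' j) t) : Fin (n+1) → ℂ) k))⁻¹) (Fin.last n) =
                (if t then 1 else ((w' j)⁻¹) ^ 4)⁻¹ • Matrix.transpose (Matrix.of fun i k : Fin (n+1) =>
                  (cqq a (z i) ((Fin.snoc w' (csg (w' j) t) : Fin (n+1) → ℂ) k))⁻¹) j.castSucc := by
                ext i
                simp only [Matrix.transpose_apply, Matrix.of_apply, Fin.snoc_last, Fin.snoc_castSucc,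
                  Pi.smul_apply, smul_eq_mul]
                rw [cqq_sg' _ _ _ _ ha (h.hz _) (h.hw _), mul_inv]
              rw [← Matrix.updateRow_eq_self (Matrix.transpose _) (Fin.last n), e,
                Matrix.det_updateRow_smul]
              refine mul_eq_zero_of_right _ ?_
              refine Matrix.det_zero_of_row_eq (i := Fin.last n) (j := j.castSucc)
                (Fin.castSucc_lt_last j).ne' ?_
              rw [Matrix.updateRow_self, Matrix.updateRow_ne (Fin.castSucc_lt_last j).ne]
            rw [h0]; ring
        · simp; omega
      intro y
      exact (hpe y).trans (by rw [hp0]; simp)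
    rw [cLL_succ]
    have e : ∀ i : Fin (n+1), cLL a b (fun k => g (i.succAbove k)) (fun k => z (i.succAbove k))
      (fun k => w k.castSucc) = R i := fun i => ih _ _ _ (h.succ i)
    simp only [e]
    have hdW : ∀ j : Fin n, cdW (w j.castSucc) (w (Fin.last n)) ≠ 0 := by
      intro j hj
      rcases mul_eq_zero.1 hj with hj | hj
      · have := h.hwn (a₁ := (Fin.last n, true)) (a₂ := (j.castSucc, true)) (by
          simpa [csg, sub_eq_zero] using hj)
        simp at this
        exact (Fin.castSucc_lt_last j).ne' this
      · have := h.hwn (a₁ := (Fin.last n, true)) (a₂ := (j.castSucc, false)) (by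
          simp only [csg, if_true]
          have := h.hw j.castSucc
          simp
          field_simp
          linear_combination hj)
        simp at this
    have := cRR_succ a b z w (fun i => h.hq _ _) hdW
    refine mul_left_cancel₀ (Finset.prod_ne_zero_iff.2 fun j _ => hdW j :
      (∏ j : Fin n, cdW (w j.castSucc) (w (Fin.last n))) ≠ 0) ?_
    rw [this]
    exact sub_eq_zero.1 (key (w (Fin.last n)))


/-! removing the genericity assumption -/
section
open Filter Topology

lemma cA_cont (g : Bool) (u : ℂ) {f h : ℂ → ℂ} {t : ℂ} (hf : ContinuousAt f t) (h0 : f t ≠ 0)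
    (hh : ContinuousAt h t) : ContinuousAt (fun s => cA (f s) g u (h s)) t := by
  have := hf.inv₀ h0
  cases g <;> simp only [cA, if_true, Bool.false_eq_true, if_false] <;> fun_prop

lemma cbd_cont (b : ℂ) (g : Bool) (u : ℂ) {f : ℂ → ℂ} {t : ℂ} (hf : ContinuousAt f t) (h0 : f t ≠ 0) :
    ContinuousAt (fun s => cbd (f s) b g u) t := by
  have := hf.inv₀ h0
  cases g <;> simp only [cbd, if_true, Bool.false_eq_true, if_false] <;> fun_prop

lemma cpr_cont (u v : ℂ) {f : ℂ → ℂ} {t : ℂ} (hf : ContinuousAt f t) (h0 : f t ≠ 0) :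
    ContinuousAt (fun s => cpr (f s) u v) t := by
  have := hf.inv₀ h0
  simp only [cpr]
  refine ContinuousAt.div_const ?_ _
  fun_prop

lemma cqq_cont (z : ℂ) {f h : ℂ → ℂ} {t : ℂ} (hf : ContinuousAt f t) (h0 : f t ≠ 0)
    (hh : ContinuousAt h t) : ContinuousAt (fun s => cqq (f s) z (h s)) t := by
  unfold cqq
  exact ((cA_cont _ _ hf h0 hh).mul (cA_cont _ _ hf h0 hh)).mul
    ((cA_cont _ _ hf h0 hh).mul (cA_cont _ _ hf h0 hh))

lemma cprod_cont {ι : Type*} (s : Finset ι) {F : ι → ℂ → ℂ} {t : ℂ} (h : ∀ i, ContinuousAt (F i) t) :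
    ContinuousAt (fun x => ∏ i ∈ s, F i x) t := tendsto_finsetProd s fun i _ => h i

lemma csum_cont {ι : Type*} (s : Finset ι) {F : ι → ℂ → ℂ} {t : ℂ} (h : ∀ i, ContinuousAt (F i) t) :
    ContinuousAt (fun x => ∑ i ∈ s, F i x) t := tendsto_finsetSum s fun i _ => h i

lemma cLL_cont (b : ℂ) {n : ℕ} (g : Fin n → Bool) (z : Fin n → ℂ) {f : ℂ → ℂ} {h : Fin n → ℂ → ℂ} {t : ℂ}
    (hf : ContinuousAt f t) (h0 : f t ≠ 0) (hh : ∀ j, ContinuousAt (h j) t) :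
    ContinuousAt (fun s => cLL (f s) b g z (fun j => h j s)) t := by
  unfold cLL cTT cloc
  refine csum_cont _ fun π => csum_cont _ fun τ => ContinuousAt.mul (cprod_cont _ fun p => ?_)
    (cprod_cont _ fun q => cprod_cont _ fun p => ?_)
  · refine ContinuousAt.mul (ContinuousAt.mul (ContinuousAt.mul continuousAt_const
      (cbd_cont _ _ _ hf h0)) (cprod_cont _ fun j => cA_cont _ _ hf h0 (hh j)))
      (cprod_cont _ fun j => ?_)
    split_ifs
    · exact cA_cont _ _ hf h0 (hh j)
    · exact cA_cont _ _ hf h0 (hh j)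
    · exact continuousAt_const
  · split_ifs
    · exact cpr_cont _ _ hf h0
    · exact continuousAt_const
    · exact continuousAt_const

lemma cdd_ne (f : ℂ → ℂ → ℂ) {n : ℕ} (x : Fin n → ℂ) (h : ∀ p q, p ≠ q → f (x p) (x q) ≠ 0) :
    cdd f x ≠ 0 := by
  unfold cdd
  refine Finset.prod_ne_zero_iff.2 fun q _ => Finset.prod_ne_zero_iff.2 fun p _ => ?_
  split_ifs with hpq
  · exact h _ _ hpq.ne
  · exact one_ne_zero

lemma cRR_cont (b : ℂ) {n : ℕ} (z : Fin n → ℂ) {f : ℂ → ℂ} {h : Fin n → ℂ → ℂ} {t : ℂ}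
    (hf : ContinuousAt f t) (h0 : f t ≠ 0) (hh : ∀ j, ContinuousAt (h j) t)
    (hq : ∀ i j, cqq (f t) (z i) (h j t) ≠ 0)
    (hX : ∀ i k, i ≠ k → cXX (z i) ≠ cXX (z k))
    (hW : ∀ j k, j ≠ k → cdW (h j t) (h k t) ≠ 0) :
    ContinuousAt (fun s => cRR (f s) b z (fun j => h j s)) t := by
  unfold cRR
  refine ContinuousAt.div (ContinuousAt.mul (ContinuousAt.mul (cprod_cont _ fun j => ?_)
    (cprod_cont _ fun i => cprod_cont _ fun j => cqq_cont _ hf h0 (hh j))) ?_)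
    (ContinuousAt.mul continuousAt_const ?_) ?_
  · exact ((hh j).div_const _).sub continuousAt_const
  · simp only [Matrix.det_apply, Matrix.of_apply]
    refine csum_cont _ fun σ => ContinuousAt.const_smul (cprod_cont _ fun i => ?_) _
    exact (cqq_cont _ hf h0 (hh i)).inv₀ (hq _ _)
  · unfold cdd cdW
    refine cprod_cont _ fun q => cprod_cont _ fun p => ?_
    have h1 := hh q
    have h2 := hh p
    split_ifs
    · fun_prop
    · exact continuousAt_const
  · exact mul_ne_zero (cdd_ne _ _ fun p q hpq => sub_ne_zero.2 (hX _ _ hpq.symm)) (cdd_ne _ _ hW)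

lemma csg_sq_inj {n : ℕ} (z : Fin n → ℂ) (hX : ∀ i k, i ≠ k → cXX (z i) ≠ cXX (z k))
    (h4 : ∀ i, (z i) ^ 2 - ((z i)⁻¹) ^ 2 ≠ 0) (x y : Fin n × Bool)
    (h : csg (z x.1) x.2 ^ 2 = csg (z y.1) y.2 ^ 2) : x = y := by
  obtain ⟨i, s⟩ := x
  obtain ⟨k, t⟩ := y
  simp only at h
  have hik : i = k := by
    by_contra hik
    apply hX i k hik
    rw [← cXX_sg (z i) s, ← cXX_sg (z k) t, cXX, cXX, inv_pow, inv_pow, h]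
  subst hik
  have := h4 i
  cases s <;> cases t <;> simp only [csg, if_true, Bool.false_eq_true, if_false] at h
  · rfl
  · exact absurd (by rw [h]; ring) this
  · exact absurd (by rw [h]; ring) this
  · rfl

theorem cMain2 (a b : ℂ) (ha : a ≠ 0) (hb : b ≠ 0) {n : ℕ} (g : Fin n → Bool) (z w : Fin n → ℂ)
    (hz : ∀ i, z i ≠ 0) (hw : ∀ i, w i ≠ 0) (hq : ∀ i j, cqq a (z i) (w j) ≠ 0)
    (hX : ∀ i k, i ≠ k → cXX (z i) ≠ cXX (z k))
    (h4 : ∀ i, (z i) ^ 2 - ((z i)⁻¹) ^ 2 ≠ 0)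
    (hww : ∀ j k, j ≠ k → w j ≠ w k) (hww1 : ∀ j k, j ≠ k → w j * w k ≠ 1) :
    cLL a b g z w = cRR a b z w := by
  have ca : ContinuousAt (fun t : ℂ => a + t) 0 := by fun_prop
  have cw : ∀ j, ContinuousAt (fun t : ℂ => w j + t) 0 := fun j => by fun_prop
  have ea : ∀ᶠ t in 𝓝[≠] (0 : ℂ), a + t ≠ 0 :=
    (ca.eventually_ne (by simpa using ha)).filter_mono nhdsWithin_le_nhds
  have ew : ∀ᶠ t in 𝓝[≠] (0 : ℂ), ∀ j, w j + t ≠ 0 := eventually_all.2 fun j =>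
    ((cw j).eventually_ne (by simpa using hw j)).filter_mono nhdsWithin_le_nhds
  have eq : ∀ᶠ t in 𝓝[≠] (0 : ℂ), ∀ i j, cqq (a + t) (z i) (w j + t) ≠ 0 :=
    eventually_all.2 fun i => eventually_all.2 fun j =>
    ((cqq_cont (z i) ca (by simpa using ha) (cw j)).eventually_ne
      (by simpa using hq i j)).filter_mono nhdsWithin_le_nhds
  have ea4 : ∀ᶠ t in 𝓝[≠] (0 : ℂ), ∀ x y : Fin n × Bool,
      (a + t) ^ 4 ≠ (csg (z x.1) x.2 ^ 2 * csg (z y.1) y.2 ^ 2)⁻¹ :=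
    eventually_all.2 fun x => eventually_all.2 fun y => by
      have hd : HasDerivAt (fun t : ℂ => (a + t) ^ 4) (4 * (a + 0) ^ 3 * 1) 0 := by
        simpa using ((hasDerivAt_id (0 : ℂ)).const_add a).fun_pow 4
      exact hd.eventually_ne (by simpa using ha)
  have ew2 : ∀ᶠ t in 𝓝[≠] (0 : ℂ), ∀ j, (w j + t) ^ 2 ≠ 1 :=
    eventually_all.2 fun j => by
      have hd : HasDerivAt (fun t : ℂ => (w j + t) ^ 2) (2 * (w j + 0) ^ 1 * 1) 0 := by
        simpa using ((hasDerivAt_id (0 : ℂ)).const_add (w j)).fun_pow 2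
      exact hd.eventually_ne (by simpa using hw j)
  have eww : ∀ᶠ t in 𝓝[≠] (0 : ℂ), ∀ j k, j ≠ k → (w j + t) * (w k + t) ≠ 1 :=
    eventually_all.2 fun j => eventually_all.2 fun k => by
      by_cases hjk : j = k
      · simp [hjk]
      · have := (((cw j).mul (cw k)).eventually_ne (y := 1)
          (by simpa using hww1 j k hjk)).filter_mono (nhdsWithin_le_nhds (s := {0}ᶜ))
        filter_upwards [this] with t ht _ using ht
  have hev : ∀ᶠ t in 𝓝[≠] (0 : ℂ), cLL (a + t) b g z (fun j => w j + t) =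
      cRR (a + t) b z (fun j => w j + t) := by
    filter_upwards [ea, ew, eq, ea4, ew2, eww] with t h1 h2 h3 h5 h6 h7
    refine cMain _ b h1 hb g z _ ⟨hz, h2, h3, hX, h4, ?_, ?_⟩
    · intro x y hxy
      simp only [cnd] at hxy
      have hx := csg_ne _ x.2 (hz x.1)
      have hy := csg_ne _ y.2 (hz y.1)
      split_ifs at hxy
      · refine csg_sq_inj z hX h4 x y ?_
        exact mul_left_cancel₀ (pow_ne_zero 2 h1) hxy
      · exfalso
        apply h5 x y
        field_simp at hxy ⊢
        linear_combination hxy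
      · exfalso
        apply h5 x y
        field_simp at hxy ⊢
        linear_combination -hxy
      · refine csg_sq_inj z hX h4 x y ?_
        have := mul_left_cancel₀ (pow_ne_zero 2 (inv_ne_zero h1)) hxy
        simpa using this
    · rintro ⟨j, s⟩ ⟨k, r⟩ hjk
      have hj := h2 j
      have hk := h2 k
      simp only at hjk
      by_cases hsr : s = r
      · subst hsr
        have : w j + t = w k + t := by
          cases s <;> simpa [csg] using hjk
        have : j = k := by
          by_contra hne
          exact hww j k hne (by simpa using this)
        rw [this]
      · exfalso
        have hone : (w j + t) * (w k + t) = 1 := by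
          cases s <;> cases r <;> simp only [csg, if_true, Bool.false_eq_true, if_false] at hjk hsr
          · exact absurd trivial hsr
          · rw [← hjk]; exact mul_inv_cancel₀ hj
          · rw [hjk]; exact inv_mul_cancel₀ hk
          · exact absurd trivial hsr
        by_cases hne : j = k
        · subst hne
          exact h6 j (by rw [pow_two]; exact hone)
        · exact h7 j k hne hone
  have c1 := (cLL_cont b g z ca (by simpa using ha) cw).tendsto.mono_left
    (nhdsWithin_le_nhds (s := {0}ᶜ))
  have c2 := (cRR_cont b z ca (by simpa using ha) cw (by simpa using hq) hX (by
    intro j k hjk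
    simp only [add_zero, cdW]
    exact mul_ne_zero (sub_ne_zero.2 (hww _ _ hjk.symm)) (sub_ne_zero.2 (hww1 _ _ hjk)))).tendsto.mono_left
    (nhdsWithin_le_nhds (s := {0}ᶜ))
  have := tendsto_nhds_unique (c1.congr' hev) c2
  simpa using this

end


/-! relating the original sums to `cLL` -/

lemma czpow_eps (z : ℂ) {N : ℕ} (τ : Fin N → Bool) (j : Fin N) : z ^ (eps τ j) = csg z (τ j) := by
  unfold eps csg
  split_ifs <;> simp

lemma czpow_eps2 (z : ℂ) {N : ℕ} (τ : Fin N → Bool) (j : Fin N) :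
    z ^ (2 * eps τ j) = (csg z (τ j)) ^ 2 := by
  rw [mul_comm, zpow_mul, czpow_eps]
  norm_cast

lemma cpair_eq (a x y : ℂ) (s t : ℤ) : pairFactor a x y s t = cpr a (x ^ s) (y ^ t) := by
  have h : a ^ (-2 : ℤ) = (a⁻¹) ^ 2 := by
    rw [zpow_neg, inv_pow]; norm_cast
  have h' : a ^ (2 : ℤ) = a ^ 2 := by norm_cast
  simp only [pairFactor, cpr, zpow_neg, h', ← inv_pow]

noncomputable def cHalf (a b : ℂ) (g : Bool) {M N : ℕ} (x : Fin N → Fin M) (v : Fin N → ℂ) (w : Fin M → ℂ)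
    (σ : Equiv.Perm (Fin N)) : ℂ :=
  (∏ k, cloc a b g (v (σ k)) w (x k)) *
    ∏ q, ∏ p, (if p < q then cpr a (v (σ p)) (v (σ q)) else 1)

noncomputable def cpre (a : ℂ) {N : ℕ} (z : Fin N → ℂ) : ℂ := (a ^ (2:ℤ) - a ^ (-2:ℤ)) ^ N *
  (∏ j, (-(a ^ (2:ℤ) * z j ^ (2:ℤ)) + a ^ (-2:ℤ) * z j ^ (-2:ℤ)))

lemma cpairs {N : ℕ} (f : Fin N → Fin N → ℂ) :
    ∏ p ∈ Finset.univ.filter (fun p : Fin N × Fin N => p.1 < p.2), f p.1 p.2 =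
    ∏ q, ∏ p, (if p < q then f p q else 1) := by
  rw [Finset.prod_filter, Fintype.prod_prod_type, Finset.prod_comm]

lemma cfilt {M : ℕ} (x : ℕ) (p : Fin M) (hx : x = (p : ℕ) + 1) (f h : Fin M → ℂ) :
    ∏ j, (if j < p then f j else if p < j then h j else 1) =
    (∏ j ∈ Finset.univ.filter (fun j : Fin M => (j : ℕ) + 1 < x), f j) *
    ∏ j ∈ Finset.univ.filter (fun j : Fin M => x ≤ (j : ℕ)), h j := by
  rw [Finset.prod_filter, Finset.prod_filter, ← Finset.prod_mul_distrib]
  refine Finset.prod_congr rfl fun j _ => ?_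
  subst hx
  rcases lt_trichotomy j p with hj | hj | hj
  · have : (j : ℕ) < p := hj
    rw [if_pos hj, if_pos (by omega), if_neg (by omega), mul_one]
  · subst hj
    simp
  · have h1 : (p : ℕ) < j := hj
    rw [if_neg (not_lt_of_gt hj), if_pos hj, if_neg (by omega), if_pos (by omega), one_mul]

lemma cFF_eq (a b : ℂ) (M N : ℕ) (z : Fin N → ℂ) (w : Fin M → ℂ) (x : ℕ → ℕ) (p : Fin N → Fin M)
    (hx : ∀ k : Fin N, x k = (p k : ℕ) + 1) :
    FF a b M N z w x = cpre a z * ∑ σ : Equiv.Perm (Fin N), ∑ τ : Fin N → Bool,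
      cHalf a b true p (fun i => csg (z i) (τ i)) w σ := by
  unfold FF cpre
  congr 1
  refine Finset.sum_congr rfl fun σ _ => Finset.sum_congr rfl fun τ _ => ?_
  rw [← Equiv.prod_comp σ]
  simp only [zpow_neg, czpow_eps, czpow_eps2, cpair_eq]
  rw [cpairs (fun i j => cpr a (csg (z (σ i)) (τ (σ i))) (csg (z (σ j)) (τ (σ j))))]
  simp only [cHalf, cloc, cfilt _ _ (hx _), Finset.prod_mul_distrib, cbd, cA, if_true, Bool.not_true,
    Bool.false_eq_true, if_false, inv_inv, inv_pow]
  ring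

lemma cFBar_eq (a b : ℂ) (M N : ℕ) (z : Fin N → ℂ) (w : Fin M → ℂ) (x : ℕ → ℕ) (p : Fin N → Fin M)
    (hx : ∀ k : Fin N, x k = (p k : ℕ) + 1) :
    FBar a b M N z w x = cpre a z * ∑ σ : Equiv.Perm (Fin N), ∑ τ : Fin N → Bool,
      cHalf a b false p (fun i => csg (z i) (τ i)) w σ := by
  unfold FBar cpre
  congr 1
  refine Finset.sum_congr rfl fun σ _ => Finset.sum_congr rfl fun τ _ => ?_
  rw [← Equiv.prod_comp σ]
  simp only [zpow_neg, czpow_eps, czpow_eps2, cpair_eq]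
  rw [cpairs (fun i j => cpr a (csg (z (σ i)) (τ (σ i))) (csg (z (σ j)) (τ (σ j))))]
  simp only [cHalf, cloc, cfilt _ _ (hx _), Finset.prod_mul_distrib, cbd, cA, if_true, Bool.not_false,
    Bool.false_eq_true, if_false, inv_inv, inv_pow]
  ring

lemma cxfun {M N : ℕ} (S : Finset (Fin M)) (hS : S.card = N) (k : Fin N) :
    xfun S k = (S.orderEmbOfFin hS k : ℕ) + 1 := by
  have hk : (k : ℕ) < (S.sort (· ≤ ·)).length := by simp [hS]
  unfold xfun
  rw [List.getD_eq_getElem _ _ (by simpa using hk), List.getElem_map, Finset.orderEmbOfFin_apply]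
  rfl

lemma clt_aux {M N : ℕ} (h : N ≤ M) (k : Fin N) : M - N + (k : ℕ) < M := by
  have := k.isLt
  omega

noncomputable def ceV {M N : ℕ} (h : N ≤ M) : Fin N ⊕ Fin (M - N) ≃ Fin M :=
  Equiv.ofBijective (Sum.elim (fun k : Fin N => (⟨M - N + (k : ℕ), clt_aux h k⟩ : Fin M))
    (fun k => Fin.castLE (Nat.sub_le M N) k)) (by
    rw [Fintype.bijective_iff_injective_and_card]
    constructor
    · refine Function.Injective.sumElim ?_ ?_ ?_
      · intro x y hxy
        simp only [Fin.mk.injEq] at hxy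
        ext; omega
      · exact Fin.castLE_injective _
      · intro x y hxy
        have := congrArg Fin.val hxy
        simp at this
        omega
    · simp; omega)

def cg (M N : ℕ) (i : Fin M) : Bool := decide (M - N ≤ (i : ℕ))

lemma cg_inl {M N : ℕ} (h : N ≤ M) (k : Fin N) : cg M N (ceV h (Sum.inl k)) = true := by
  simp [cg, ceV]

lemma cg_inr {M N : ℕ} (h : N ≤ M) (k : Fin (M - N)) : cg M N (ceV h (Sum.inr k)) = false := by
  simp [cg, ceV]
  have := k.isLt
  omega

lemma ccompl {M N : ℕ} {S : Finset (Fin M)} (hS : S.card = N) : Sᶜ.card = M - N := by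
  rw [Finset.card_compl, hS, Fintype.card_fin]

noncomputable def cPsi {M N : ℕ} (h : N ≤ M)
    (x : {S : Finset (Fin M) // S.card = N} × (Equiv.Perm (Fin N) × Equiv.Perm (Fin (M - N)))) :
    Equiv.Perm (Fin M) :=
  (finSumEquivOfFinset x.1.2 (ccompl x.1.2)).symm.trans ((Equiv.sumCongr x.2.1 x.2.2).trans (ceV h))

lemma cPsi_inl {M N : ℕ} (h : N ≤ M)
    (x : {S : Finset (Fin M) // S.card = N} × (Equiv.Perm (Fin N) × Equiv.Perm (Fin (M - N))))
    (k : Fin N) : cPsi h x (x.1.1.orderEmbOfFin x.1.2 k) = ceV h (Sum.inl (x.2.1 k)) := by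
  rw [← finSumEquivOfFinset_inl x.1.2 (ccompl x.1.2)]
  simp only [cPsi, Equiv.trans_apply, Equiv.symm_apply_apply, Equiv.sumCongr_apply, Sum.map_inl]

lemma cPsi_inr {M N : ℕ} (h : N ≤ M)
    (x : {S : Finset (Fin M) // S.card = N} × (Equiv.Perm (Fin N) × Equiv.Perm (Fin (M - N))))
    (k : Fin (M - N)) :
    cPsi h x (x.1.1ᶜ.orderEmbOfFin (ccompl x.1.2) k) = ceV h (Sum.inr (x.2.2 k)) := by
  rw [← finSumEquivOfFinset_inr x.1.2 (ccompl x.1.2)]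
  simp only [cPsi, Equiv.trans_apply, Equiv.symm_apply_apply, Equiv.sumCongr_apply, Sum.map_inr]

lemma cPsi_mem {M N : ℕ} (h : N ≤ M)
    (x : {S : Finset (Fin M) // S.card = N} × (Equiv.Perm (Fin N) × Equiv.Perm (Fin (M - N))))
    (p : Fin M) : p ∈ x.1.1 ↔ cg M N (cPsi h x p) = true := by
  obtain ⟨q, rfl⟩ := (finSumEquivOfFinset x.1.2 (ccompl x.1.2)).surjective p
  rcases q with k | k
  · rw [finSumEquivOfFinset_inl, cPsi_inl, cg_inl]
    simp [Finset.orderEmbOfFin_mem]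
  · rw [finSumEquivOfFinset_inr, cPsi_inr, cg_inr]
    have := Finset.mem_compl.1 (Finset.orderEmbOfFin_mem x.1.1ᶜ (ccompl x.1.2) k)
    simp only [Bool.false_eq_true, iff_false]
    exact this

lemma cPsi_bij {M N : ℕ} (h : N ≤ M) : Function.Bijective (cPsi h) := by
  rw [Fintype.bijective_iff_injective_and_card]
  constructor
  · intro x y hxy
    have h1 : x.1 = y.1 := by
      ext p
      rw [cPsi_mem h x, cPsi_mem h y, hxy]
    obtain ⟨S, σ, σ'⟩ := x
    obtain ⟨S', ρ, ρ'⟩ := y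
    simp only at h1
    subst h1
    have h2 : σ = ρ := by
      ext k : 1
      have e1 := cPsi_inl h (S, σ, σ') k
      have e2 := cPsi_inl h (S, ρ, ρ') k
      rw [hxy] at e1
      have := e1.symm.trans e2
      simpa using this
    have h3 : σ' = ρ' := by
      ext k : 1
      have e1 := cPsi_inr h (S, σ, σ') k
      have e2 := cPsi_inr h (S, ρ, ρ') k
      rw [hxy] at e1
      have := e1.symm.trans e2
      simpa using this
    rw [h2, h3]
  · rw [Fintype.card_prod, Fintype.card_prod, Fintype.card_perm, Fintype.card_perm, Fintype.card_perm,
      Fintype.card_finset_len]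
    simp only [Fintype.card_fin]
    rw [← mul_assoc, Nat.choose_mul_factorial_mul_factorial h]

lemma cTT_Psi (a b : ℂ) {M N : ℕ} (h : N ≤ M) (u w : Fin M → ℂ)
    (S : {S : Finset (Fin M) // S.card = N}) (σ : Equiv.Perm (Fin N)) (σ' : Equiv.Perm (Fin (M - N))) :
    cTT a b (cg M N) u w (cPsi h (S, σ, σ')) =
      cHalf a b false (S.1ᶜ.orderEmbOfFin (ccompl S.2)) (fun k => u (ceV h (Sum.inr k))) w σ' *
      cHalf a b true (S.1.orderEmbOfFin S.2) (fun k => u (ceV h (Sum.inl k))) w σ := by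
  have e1 := cPsi_inl h (S, σ, σ')
  have e2 := cPsi_inr h (S, σ, σ')
  simp only at e1 e2
  unfold cTT cHalf
  simp only [← Equiv.prod_comp (finSumEquivOfFinset S.2 (ccompl S.2)), Fintype.prod_sum_type,
    finSumEquivOfFinset_inl, finSumEquivOfFinset_inr, e1, e2, cg_inl, cg_inr, OrderEmbedding.lt_iff_lt,
    if_true, Bool.false_eq_true, if_false, reduceCtorEq, ite_self, Finset.prod_const_one, mul_one, one_mul]
  ring

lemma cLL_eq (a b : ℂ) {M N : ℕ} (h : N ≤ M) (z w : Fin M → ℂ) :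
    cLL a b (cg M N) z w = ∑ S : {S : Finset (Fin M) // S.card = N},
      (∑ σ : Equiv.Perm (Fin (M - N)), ∑ τ : Fin (M - N) → Bool,
        cHalf a b false (S.1ᶜ.orderEmbOfFin (ccompl S.2)) (fun k => csg (z (ceV h (Sum.inr k))) (τ k)) w σ) *
      (∑ σ : Equiv.Perm (Fin N), ∑ τ : Fin N → Bool,
        cHalf a b true (S.1.orderEmbOfFin S.2) (fun k => csg (z (ceV h (Sum.inl k))) (τ k)) w σ) := by
  unfold cLL
  rw [← (cPsi_bij h).sum_comp, Fintype.sum_prod_type]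
  refine Finset.sum_congr rfl fun S _ => ?_
  rw [Fintype.sum_prod_type, Finset.sum_comm, Finset.sum_mul_sum]
  refine Finset.sum_congr rfl fun σ' _ => Finset.sum_congr rfl fun σ _ => ?_
  rw [Finset.sum_mul_sum]
  rw [← (Equiv.arrowCongr (ceV h) (Equiv.refl Bool)).sum_comp,
    ← (Equiv.sumArrowEquivProdArrow (Fin N) (Fin (M - N)) Bool).symm.sum_comp, Fintype.sum_prod_type,
    Finset.sum_comm]
  refine Finset.sum_congr rfl fun τ' _ => Finset.sum_congr rfl fun τ _ => ?_
  rw [cTT_Psi]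
  simp [Equiv.arrowCongr, Equiv.sumArrowEquivProdArrow]

lemma cpairs' {n : ℕ} (f : ℂ → ℂ → ℂ) (x : Fin n → ℂ) :
    ∏ p ∈ Finset.univ.filter (fun p : Fin n × Fin n => p.1 < p.2), f (x p.1) (x p.2) = cdd f x :=
  cpairs (fun p q => f (x p) (x q))

lemma cprodpairs {n : ℕ} (w : Fin n → ℂ) :
    cdd (fun x y => x * y) w = ∏ i, w i ^ (n - 1) := by
  induction n with
  | zero => simp [cdd]
  | succ n ih =>
    rw [cdd_last, ih, Fin.prod_univ_castSucc (fun i => w i ^ (n + 1 - 1)), Finset.prod_mul_distrib]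
    simp only [Finset.prod_const, Finset.card_fin, Nat.add_sub_cancel, ← mul_assoc]
    congr 1
    rw [← Finset.prod_mul_distrib]
    refine Finset.prod_congr rfl fun i _ => ?_
    have : n - 1 + 1 = n := by have := i.isLt; omega
    rw [← pow_succ, this]

lemma cdd_mul (f h : ℂ → ℂ → ℂ) {n : ℕ} (x : Fin n → ℂ) :
    cdd f x * cdd h x = cdd (fun x y => f x y * h x y) x := by
  unfold cdd
  simp only [← Finset.prod_mul_distrib]
  refine Finset.prod_congr rfl fun q _ => Finset.prod_congr rfl fun p _ => ?_
  split_ifs <;> simp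

lemma cdd_congr (f h : ℂ → ℂ → ℂ) {n : ℕ} (x : Fin n → ℂ) (hx : ∀ p q, f (x p) (x q) = h (x p) (x q)) :
    cdd f x = cdd h x := by
  unfold cdd
  simp only [hx]

noncomputable def cQ (a z w : ℂ) : ℂ :=
  (a ^ (2:ℤ) + a ^ (-2:ℤ) - z ^ (-2:ℤ) * w - z ^ (2:ℤ) * w⁻¹) *
        (a ^ (2:ℤ) + a ^ (-2:ℤ) - z ^ (-2:ℤ) * w⁻¹ - z ^ (2:ℤ) * w)

lemma cqq_Q (a z w : ℂ) (ha : a ≠ 0) (hz : z ≠ 0) (hw : w ≠ 0) : cqq a z w = w ^ 2 * cQ a z w := by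
  have h : ∀ x : ℂ, x ^ (-2 : ℤ) = (x⁻¹) ^ 2 := fun x => by
    rw [zpow_neg, inv_pow]; norm_cast
  have h' : ∀ x : ℂ, x ^ (2 : ℤ) = x ^ 2 := fun x => by norm_cast
  simp only [cQ, cqq, cA, h, h', if_true, Bool.false_eq_true, if_false]
  field_simp
  ring

lemma cpre_mul (a : ℂ) {M N : ℕ} (h : N ≤ M) (z : Fin M → ℂ) :
    cpre a (fun k => z (ceV h (Sum.inr k))) * cpre a (fun k => z (ceV h (Sum.inl k))) = cpre a z := by
  unfold cpre
  rw [← Equiv.prod_comp (ceV h) (fun j => (-(a ^ (2:ℤ) * z j ^ (2:ℤ)) + a ^ (-2:ℤ) * z j ^ (-2:ℤ))),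
    Fintype.prod_sum_type]
  have : (a ^ (2:ℤ) - a ^ (-2:ℤ)) ^ M = (a ^ (2:ℤ) - a ^ (-2:ℤ)) ^ (M - N) * (a ^ (2:ℤ) - a ^ (-2:ℤ)) ^ N := by
    rw [← pow_add, Nat.sub_add_cancel h]
  rw [this]
  ring

lemma cdetQ (a : ℂ) {M : ℕ} (z w : Fin M → ℂ) (ha : a ≠ 0) (hz : ∀ j, z j ≠ 0) (hw : ∀ j, w j ≠ 0) :
    Matrix.det (Matrix.of fun i j : Fin M => (cqq a (z i) (w j))⁻¹) =
    (∏ j, w j ^ 2)⁻¹ * Matrix.det (Matrix.of fun i j : Fin M => (cQ a (z i) (w j))⁻¹) := by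
  rw [← Finset.prod_inv_distrib, ← Matrix.det_mul_row]
  congr 1
  ext i j
  simp only [Matrix.of_apply]
  rw [cqq_Q a _ _ ha (hz i) (hw j), mul_inv]

lemma cprodQ (a : ℂ) {M : ℕ} (z w : Fin M → ℂ) (ha : a ≠ 0) (hz : ∀ j, z j ≠ 0) (hw : ∀ j, w j ≠ 0) :
    ∏ i, ∏ j, cqq a (z i) (w j) = (∏ j, w j ^ 2) ^ M * ∏ i, ∏ j, cQ a (z i) (w j) := by
  have : ∀ i j, cqq a (z i) (w j) = w j ^ 2 * cQ a (z i) (w j) := fun i j =>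
    cqq_Q a _ _ ha (hz i) (hw j)
  simp only [this, Finset.prod_mul_distrib, Finset.prod_const, Finset.card_fin]

lemma cfinal (a b : ℂ) {M : ℕ} (hM : 1 ≤ M) (z w : Fin M → ℂ)
    (ha : a ≠ 0) (hb : b ≠ 0) (hz : ∀ j, z j ≠ 0) (hw : ∀ j, w j ≠ 0) :
    cpre a z * cRR a b z w = (a ^ (2:ℤ) - a ^ (-2:ℤ)) ^ M * (∏ i, w i ^ M) *
      (∏ i, (b * (w i)⁻¹ - b⁻¹) * (a ^ (2:ℤ) * z i ^ (2:ℤ) - a ^ (-2:ℤ) * z i ^ (-2:ℤ))) *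
      ((∏ i, ∏ j, cQ a (z i) (w j)) /
       (∏ p ∈ Finset.univ.filter (fun p : Fin M × Fin M => p.1 < p.2),
        (-((z p.1)⁻¹ * z p.2) + z p.1 * (z p.2)⁻¹) *
        ((z p.1)⁻¹ * (z p.2)⁻¹ - z p.1 * z p.2) *
        (-(w p.2)⁻¹ + (w p.1)⁻¹) * (w p.1 * w p.2 - 1))) *
      Matrix.det (Matrix.of fun i j : Fin M => (cQ a (z i) (w j))⁻¹) := by
  have hp : (∏ p ∈ Finset.univ.filter (fun p : Fin M × Fin M => p.1 < p.2),
        (-((z p.1)⁻¹ * z p.2) + z p.1 * (z p.2)⁻¹) *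
        ((z p.1)⁻¹ * (z p.2)⁻¹ - z p.1 * z p.2) *
        (-(w p.2)⁻¹ + (w p.1)⁻¹) * (w p.1 * w p.2 - 1)) =
      cdd (fun x y => cXX y - cXX x) z * cdd (fun x y => (-y⁻¹ + x⁻¹) * (x * y - 1)) w := by
    rw [← cpairs', ← cpairs', ← Finset.prod_mul_distrib]
    refine Finset.prod_congr rfl fun p _ => ?_
    have h1 := hz p.1
    have h2 := hz p.2
    unfold cXX
    rw [← mul_assoc]
    congr 2
    field_simp
    ring
  have hW : cdd cdW w = (∏ i, w i ^ (M - 1)) * cdd (fun x y => (-y⁻¹ + x⁻¹) * (x * y - 1)) w := by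
    rw [← cprodpairs, cdd_mul]
    refine cdd_congr _ _ _ fun p q => ?_
    have h1 := hw p
    have h2 := hw q
    unfold cdW
    field_simp
    ring
  have hA : (∏ j, (-(a ^ (2:ℤ) * z j ^ (2:ℤ)) + a ^ (-2:ℤ) * z j ^ (-2:ℤ))) * (∏ j, (w j / b - b)) =
      (∏ i, w i) * (∏ i, (b * (w i)⁻¹ - b⁻¹) *
        (a ^ (2:ℤ) * z i ^ (2:ℤ) - a ^ (-2:ℤ) * z i ^ (-2:ℤ))) := by
    rw [← Finset.prod_mul_distrib, ← Finset.prod_mul_distrib]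
    refine Finset.prod_congr rfl fun j _ => ?_
    have h1 := hw j
    have e : w j * (b * (w j)⁻¹ - b⁻¹) = - (w j / b - b) := by
      field_simp
      ring
    rw [← mul_assoc, e]
    ring
  have hP : ∏ i, w i ≠ 0 := Finset.prod_ne_zero_iff.2 fun i _ => hw i
  unfold cpre cRR
  rw [cprodQ a z w ha hz hw, cdetQ a z w ha hz hw, hW, hp]
  simp only [Finset.prod_pow] at *
  generalize cdd (fun x y => (-y⁻¹ + x⁻¹) * (x * y - 1)) w = E
  generalize cdd (fun x y => cXX y - cXX x) z = D
  generalize Matrix.det (Matrix.of fun i j : Fin M => (cQ a (z i) (w j))⁻¹) = T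
  generalize (∏ i, ∏ j, cQ a (z i) (w j)) = Q
  generalize (∏ i, (b * (w i)⁻¹ - b⁻¹) *
        (a ^ (2:ℤ) * z i ^ (2:ℤ) - a ^ (-2:ℤ) * z i ^ (-2:ℤ))) = R at *
  generalize (∏ j, (-(a ^ (2:ℤ) * z j ^ (2:ℤ)) + a ^ (-2:ℤ) * z j ^ (-2:ℤ))) = A at *
  generalize (∏ j, (w j / b - b)) = B at *
  generalize (∏ i, w i) = W at *
  generalize (a ^ (2:ℤ) - a ^ (-2:ℤ)) = c
  obtain ⟨m, rfl⟩ : ∃ m, M = m + 1 := ⟨M - 1, by omega⟩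
  rw [Nat.add_sub_cancel]
  have hk : W * (W ^ 2) ^ (m + 1) * (W ^ 2)⁻¹ * (W ^ m)⁻¹ = W ^ (m + 1) := by
    field_simp
    ring
  calc _ = c ^ (m + 1) * (A * B) * ((W ^ 2) ^ (m + 1) * (W ^ 2)⁻¹ * (W ^ m)⁻¹) * (Q * T * (D⁻¹ * E⁻¹)) := by
        simp only [div_eq_mul_inv, mul_inv]; ring
    _ = c ^ (m + 1) * R * (W * (W ^ 2) ^ (m + 1) * (W ^ 2)⁻¹ * (W ^ m)⁻¹) * (Q * T * (D⁻¹ * E⁻¹)) := by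
        rw [hA]; ring
    _ = _ := by
        rw [hk]; simp only [div_eq_mul_inv, mul_inv]; ring

/-- Theorem 6.2: the Cauchy-type identity obtained by evaluating the reflecting-end
domain wall boundary partition function in two ways.  The sum runs over all subsets
`S ⊆ {1,…,M}` of cardinality `N` (encoding the increasing sequence `x`), with
complement `Sᶜ` (encoding `x̄`); `xfun` lists the elements in increasing order in
1-based labelling.  The variables `z_1,…,z_{M−N}` go to `F̄` and `z_{M−N+1},…,z_M`
to `F`. -/
theorem cauchy_identity (a b : ℂ) (M N : ℕ) (hM : 1 ≤ M) (hNM : N ≤ M)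
    (z w : Fin M → ℂ)
    (ha : a ≠ 0) (hb : b ≠ 0) (hz : ∀ j, z j ≠ 0) (hw : ∀ j, w j ≠ 0)
    (hz4 : ∀ j, z j ^ 4 ≠ 1)
    (hzz : ∀ j k, j ≠ k → z j ^ 2 * z k ^ 2 ≠ 1)
    (hzz' : ∀ j k, j ≠ k → z j ^ 2 ≠ z k ^ 2)
    (hww : ∀ j k, j ≠ k → w j ≠ w k)
    (hww1 : ∀ j k, j ≠ k → w j * w k ≠ 1)
    (hdet : ∀ i j : Fin M,
      (a ^ (2:ℤ) + a ^ (-2:ℤ) - z i ^ (-2:ℤ) * w j - z i ^ (2:ℤ) * (w j)⁻¹) ≠ 0 ∧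
      (a ^ (2:ℤ) + a ^ (-2:ℤ) - z i ^ (-2:ℤ) * (w j)⁻¹ - z i ^ (2:ℤ) * w j) ≠ 0) :
    ∑ S ∈ Finset.powersetCard N (Finset.univ : Finset (Fin M)),
      FBar a b M (M - N) (fun k => z (Fin.castLE (Nat.sub_le M N) k)) w (xfun Sᶜ) *
      FF a b M N (fun k : Fin N => z ⟨M - N + (k : ℕ), by have := k.isLt; omega⟩) w (xfun S)
    = (a ^ (2:ℤ) - a ^ (-2:ℤ)) ^ M * (∏ i, w i ^ M) *
      (∏ i, (b * (w i)⁻¹ - b⁻¹) * (a ^ (2:ℤ) * z i ^ (2:ℤ) - a ^ (-2:ℤ) * z i ^ (-2:ℤ))) *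
      ((∏ i, ∏ j,
        (a ^ (2:ℤ) + a ^ (-2:ℤ) - z i ^ (-2:ℤ) * w j - z i ^ (2:ℤ) * (w j)⁻¹) *
        (a ^ (2:ℤ) + a ^ (-2:ℤ) - z i ^ (-2:ℤ) * (w j)⁻¹ - z i ^ (2:ℤ) * w j)) /
       (∏ p ∈ Finset.univ.filter (fun p : Fin M × Fin M => p.1 < p.2),
        (-((z p.1)⁻¹ * z p.2) + z p.1 * (z p.2)⁻¹) *
        ((z p.1)⁻¹ * (z p.2)⁻¹ - z p.1 * z p.2) *
        (-(w p.2)⁻¹ + (w p.1)⁻¹) * (w p.1 * w p.2 - 1))) *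
      Matrix.det (Matrix.of fun i j : Fin M =>
        ((a ^ (2:ℤ) + a ^ (-2:ℤ) - z i ^ (-2:ℤ) * w j - z i ^ (2:ℤ) * (w j)⁻¹) *
         (a ^ (2:ℤ) + a ^ (-2:ℤ) - z i ^ (-2:ℤ) * (w j)⁻¹ - z i ^ (2:ℤ) * w j))⁻¹) := by
  have hXX : ∀ i k, i ≠ k → cXX (z i) ≠ cXX (z k) := by
    intro i k hik h
    have h1 := hz i
    have h2 := hz k
    have e : (z i ^ 2 - z k ^ 2) * (z i ^ 2 * z k ^ 2 - 1) = 0 := by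
      unfold cXX at h
      field_simp at h
      linear_combination h
    rcases mul_eq_zero.1 e with e | e
    · exact hzz' i k hik (sub_eq_zero.1 e)
    · exact hzz i k hik (sub_eq_zero.1 e)
  have h4 : ∀ i, z i ^ 2 - ((z i)⁻¹) ^ 2 ≠ 0 := by
    intro i h
    have h1 := hz i
    apply hz4 i
    field_simp at h
    linear_combination h
  have hq : ∀ i j, cqq a (z i) (w j) ≠ 0 := by
    intro i j
    rw [cqq_Q a _ _ ha (hz i) (hw j)]
    exact mul_ne_zero (pow_ne_zero _ (hw j)) (mul_ne_zero (hdet i j).1 (hdet i j).2)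
  have key := cfinal a b hM z w ha hb hz hw
  rw [← cMain2 a b ha hb (cg M N) z w hz hw hq hXX h4 hww hww1, cLL_eq a b hNM z w] at key
  refine Eq.trans ?_ key
  rw [Finset.sum_subtype (p := fun S : Finset (Fin M) => S.card = N) _ (by simp [Finset.mem_powersetCard]),
    Finset.mul_sum]
  refine Finset.sum_congr rfl fun S _ => ?_
  rw [cFBar_eq a b M (M - N) _ w _ _ (cxfun S.1ᶜ (ccompl S.2)), cFF_eq a b M N _ w _ _ (cxfun S.1 S.2),
    ← cpre_mul a hNM z]
  exact mul_mul_mul_comm _ _ _ _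
end

section
/- For nonzero complex numbers a, b with a⁴ ≠ 1 and nonzero complex variables z_1,…,z_M with z_i⁴ ≠ 1, z_i² ≠ z_j², z_i²z_j² ≠ 1 for i ≠ j, and (a²−z_i²)(1−a²z_i²) ≠ 0 for all i, the limit as (w_1,…,w_M) → (1,…,1) of the inhomogeneous determinant expression (a²−a⁻²)^M ∏_{i=1}^M w_i^M ∏_{i=1}^M (b w_i⁻¹−b⁻¹)(a²z_i²−a⁻²z_i⁻²) × [∏_{i,j=1}^M (a²+a⁻²−z_i⁻²w_j−z_i²w_j⁻¹)(a²+a⁻²−z_i⁻²w_j⁻¹−z_i²w_j)] / [∏_{1≤i<j≤M}(−z_i⁻¹z_j+z_i z_j⁻¹)(z_i⁻¹z_j⁻¹−z_i z_j)(−w_j⁻¹+w_i⁻¹)(w_i w_j−1)] × det_{M×M}( 1 / [(a²+a⁻²−z_i⁻²w_j−z_i²w_j⁻¹)(a²+a⁻²−z_i⁻²w_j⁻¹−z_i²w_j)] ) exists and equals a^{2M}(b−b⁻¹)^M ∏_{i=1}^M [(a²z_i²−a⁻²z_i⁻²)/(1−z_i⁻⁴)] × [∏_{i=1}^M (a²+a⁻²−z_i⁻²−z_i²)^{2M}]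 / [∏_{1≤i<j≤M}(−z_i⁻¹z_j+z_i z_j⁻¹)(z_i⁻¹z_j⁻¹−z_i z_j)] × det_{M×M}( (a²z_i²)^{j−1}/(a²−z_i²)^{2j} − (a²z_i²)^{j−1}/(1−a²z_i²)^{2j} ). -/
open Finset

lemma newton_inv (U : ℕ → ℂ) (P x : ℂ) (hx : x - P ≠ 0) (n : ℕ)
    (hU : ∀ m < n, U m - P ≠ 0) :
    (x - P)⁻¹ = (∑ k ∈ range n, (∏ m ∈ range k, (x - U m)) *
      ((-1) ^ k * ∏ m ∈ range (k + 1), (U m - P)⁻¹)) +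
      (∏ m ∈ range n, (x - U m)) * ((-1) ^ n * ∏ m ∈ range n, (U m - P)⁻¹) * (x - P)⁻¹ := by
  induction n with
  | zero => simp
  | succ n ih =>
    have h := ih (fun m hm => hU m (by omega))
    have hn := hU n (by omega)
    rw [sum_range_succ]
    refine h.trans ?_
    rw [add_assoc]
    congr 1
    rw [prod_range_succ (fun m => (x - U m)), prod_range_succ (fun m => (U m - P)⁻¹)]
    have key : (x - P)⁻¹ = (U n - P)⁻¹ - (x - U n) * (U n - P)⁻¹ * (x - P)⁻¹ := by
      field_simp
      ring
    rw [pow_succ]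
    linear_combination (∏ m ∈ range n, (x - U m)) *
      ((-1) ^ n * ∏ m ∈ range n, (U m - P)⁻¹) * key

lemma det_newton (M : ℕ) (t : Fin M → ℂ) (U : ℕ → ℂ) (hU : ∀ i : Fin M, U i = t i)
    (P Q c : Fin M → ℂ) (hP : ∀ i j, t j - P i ≠ 0) (hQ : ∀ i j, t j - Q i ≠ 0) :
    Matrix.det (Matrix.of fun i j : Fin M => c i * ((t j - P i)⁻¹ - (t j - Q i)⁻¹)) =
      Matrix.det (Matrix.of fun i k : Fin M => c i *
        ((-1) ^ (k : ℕ) * (∏ m ∈ range ((k : ℕ) + 1), (U m - P i)⁻¹) -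
         (-1) ^ (k : ℕ) * (∏ m ∈ range ((k : ℕ) + 1), (U m - Q i)⁻¹))) *
      ∏ p ∈ Finset.univ.filter (fun p : Fin M × Fin M => p.1 < p.2), (t p.2 - t p.1) := by
  have hV := Matrix.det_eval_matrixOfPolynomials_eq_det_vandermonde t
    (fun k : Fin M => ∏ m ∈ range (k : ℕ), (Polynomial.X - Polynomial.C (U m)))
    (fun i => by rw [Polynomial.natDegree_finsetProd_X_sub_C_eq_card]; simp)
    (fun i => Polynomial.monic_prod_of_monic _ _ fun m _ => Polynomial.monic_X_sub_C _)
  rw [Matrix.det_vandermonde] at hV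
  have hprod : ∏ p ∈ Finset.univ.filter (fun p : Fin M × Fin M => p.1 < p.2), (t p.2 - t p.1)
      = ∏ i : Fin M, ∏ j ∈ Ioi i, (t j - t i) := by
    rw [prod_filter, ← univ_product_univ, prod_product]
    refine prod_congr rfl fun i _ => ?_
    rw [← prod_filter]
    refine prod_congr ?_ fun _ _ => rfl
    ext j; simp
  rw [hprod, hV, ← Matrix.det_transpose (Matrix.of fun i j => Polynomial.eval _ _),
    ← Matrix.det_mul]
  congr 1
  ext i j
  have hz : ∏ m ∈ range M, (t j - U m) = 0 :=
    prod_eq_zero (mem_range.2 j.2) (by rw [hU, sub_self])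
  have e1 := newton_inv U (P i) (t j) (hP i j) M
    (fun m hm => by have := hU ⟨m, hm⟩; simp only at this; rw [this]; exact hP i _)
  have e2 := newton_inv U (Q i) (t j) (hQ i j) M
    (fun m hm => by have := hU ⟨m, hm⟩; simp only at this; rw [this]; exact hQ i _)
  rw [hz, zero_mul, zero_mul, add_zero] at e1 e2
  rw [Matrix.mul_apply]
  simp only [Matrix.of_apply, Matrix.transpose_apply, Polynomial.eval_prod,
    Polynomial.eval_sub, Polynomial.eval_X, Polynomial.eval_C]
  rw [e1, e2, ← Fin.sum_univ_eq_sum_range (fun k => (∏ m ∈ range k, (t j - U m)) *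
      ((-1) ^ k * ∏ m ∈ range (k + 1), (U m - P i)⁻¹)),
    ← Fin.sum_univ_eq_sum_range (fun k => (∏ m ∈ range k, (t j - U m)) *
      ((-1) ^ k * ∏ m ∈ range (k + 1), (U m - Q i)⁻¹)), ← sum_sub_distrib, mul_sum]
  refine sum_congr rfl fun k _ => ?_
  ring

/-- The extension of the variables `w + 1/w` to a sequence. -/
noncomputable def extU (M : ℕ) (w : Fin M → ℂ) (m : ℕ) : ℂ :=
  if h : m < M then w ⟨m, h⟩ + (w ⟨m, h⟩)⁻¹ else 2

lemma extU_tendsto (M : ℕ) (m : ℕ) :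
    Filter.Tendsto (fun w : Fin M → ℂ => extU M w m) (nhds (fun _ => (1 : ℂ))) (nhds 2) := by
  unfold extU
  split_ifs with h
  · have h1 : Filter.Tendsto (fun w : Fin M → ℂ => w ⟨m, h⟩) (nhds (fun _ => (1 : ℂ)))
      (nhds 1) := (continuous_apply (⟨m, h⟩ : Fin M)).tendsto (fun _ => (1 : ℂ))
    have := h1.add (h1.inv₀ one_ne_zero)
    convert this using 2
    norm_num
  · exact tendsto_const_nhds

/-- First root. -/
noncomputable def rP (a z : ℂ) : ℂ := a ^ 2 * z ^ 2 + (a ^ 2 * z ^ 2)⁻¹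
/-- Second root. -/
noncomputable def rQ (a z : ℂ) : ℂ := a ^ 2 / z ^ 2 + z ^ 2 / a ^ 2
/-- Prefactor. -/
noncomputable def rc (a z : ℂ) : ℂ := ((a ^ 2 - (a ^ 2)⁻¹) * (z ^ 2 - (z ^ 2)⁻¹))⁻¹

lemma two_sub_rP (a z : ℂ) (ha : a ≠ 0) (hz : z ≠ 0) :
    2 - rP a z = -((1 - a ^ 2 * z ^ 2) ^ 2 / (a ^ 2 * z ^ 2)) := by
  unfold rP; field_simp; ring

lemma two_sub_rQ (a z : ℂ) (ha : a ≠ 0) (hz : z ≠ 0) :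
    2 - rQ a z = -((a ^ 2 - z ^ 2) ^ 2 / (a ^ 2 * z ^ 2)) := by
  unfold rQ; field_simp; ring

lemma factor_eq (a z w : ℂ) (ha : a ≠ 0) (hz : z ≠ 0) (hw : w ≠ 0) :
    (a ^ (2:ℤ) + a ^ (-2:ℤ) - z ^ (-2:ℤ) * w - z ^ (2:ℤ) * w⁻¹) *
    (a ^ (2:ℤ) + a ^ (-2:ℤ) - z ^ (-2:ℤ) * w⁻¹ - z ^ (2:ℤ) * w) =
    (w + w⁻¹ - rP a z) * (w + w⁻¹ - rQ a z) := by
  unfold rP rQ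
  simp only [zpow_neg, zpow_ofNat]
  field_simp
  ring

lemma sq_sub_inv_ne (a : ℂ) (ha : a ≠ 0) (ha4 : a ^ 4 ≠ 1) : a ^ 2 - (a ^ 2)⁻¹ ≠ 0 := by
  intro h
  apply ha4
  field_simp at h
  linear_combination h

lemma entry_eq (a z t : ℂ) (ha : a ≠ 0) (hz : z ≠ 0) (ha4 : a ^ 4 ≠ 1) (hz4 : z ^ 4 ≠ 1)
    (h1 : t - rP a z ≠ 0) (h2 : t - rQ a z ≠ 0) :
    ((t - rP a z) * (t - rQ a z))⁻¹ =
      rc a z * ((t - rP a z)⁻¹ - (t - rQ a z)⁻¹) := by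
  have hA := sq_sub_inv_ne a ha ha4
  have hZ := sq_sub_inv_ne z hz hz4
  have hd : rP a z - rQ a z = (a ^ 2 - (a ^ 2)⁻¹) * (z ^ 2 - (z ^ 2)⁻¹) := by
    unfold rP rQ; field_simp; ring
  have hd0 : rP a z - rQ a z ≠ 0 := by rw [hd]; exact mul_ne_zero hA hZ
  unfold rc
  rw [← hd]
  field_simp
  ring

lemma vand_factor (x y : ℂ) (hx : x ≠ 0) (hy : y ≠ 0) :
    (-y⁻¹ + x⁻¹) * (x * y - 1) = (y + y⁻¹) - (x + x⁻¹) := by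
  field_simp; ring

/-- limit entry -/
lemma limit_entry (a z : ℂ) (ha : a ≠ 0) (hz : z ≠ 0)
    (h : (a ^ 2 - z ^ 2) * (1 - a ^ 2 * z ^ 2) ≠ 0) (k : ℕ) :
    rc a z * ((-1) ^ k * (∏ _m ∈ range (k + 1), (2 - rP a z)⁻¹) -
       (-1) ^ k * (∏ _m ∈ range (k + 1), (2 - rQ a z)⁻¹)) =
    (rc a z * (a ^ 2 * z ^ 2)) * ((a ^ 2 * z ^ 2) ^ k / (a ^ 2 - z ^ 2) ^ (2 * (k + 1))
              - (a ^ 2 * z ^ 2) ^ k / (1 - a ^ 2 * z ^ 2) ^ (2 * (k + 1))) := by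
  obtain ⟨h1, h2⟩ := mul_ne_zero_iff.1 h
  rw [two_sub_rP a z ha hz, two_sub_rQ a z ha hz, prod_const, prod_const, card_range,
    mul_assoc]
  congr 1
  have gen : ∀ s : ℂ, (-1 : ℂ) ^ k * (-(s ^ 2 / (a ^ 2 * z ^ 2)))⁻¹ ^ (k + 1) =
      -((a ^ 2 * z ^ 2) * ((a ^ 2 * z ^ 2) ^ k / s ^ (2 * (k + 1)))) := by
    intro s
    rw [← neg_inv, inv_div, neg_pow (a ^ 2 * z ^ 2 / s ^ 2), ← mul_assoc, ← pow_add, div_pow, ← pow_mul]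
    have : (-1 : ℂ) ^ (k + (k + 1)) = -1 := Odd.neg_one_pow ⟨k, by ring⟩
    rw [this]
    ring
  rw [gen, gen]
  ring

/-- Theorem 6.3: the homogeneous limit of the Tsuchiya-Kuperberg determinant formula for
the domain wall boundary partition function of the `U_q(sl_2)` six-vertex model with
reflecting end.  The limit `(w_1,…,w_M) → (1,…,1)` is taken along tuples with the `w_i`
pairwise distinct and `w_i w_j ≠ 1` for `i ≠ j`. -/
theorem homogeneous_limit_determinant (M : ℕ) (a b : ℂ)
    (ha : a ≠ 0) (hb : b ≠ 0) (ha4 : a ^ 4 ≠ 1)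
    (z : Fin M → ℂ) (hz : ∀ i, z i ≠ 0)
    (hz4 : ∀ i, z i ^ 4 ≠ 1)
    (hzz : ∀ i j, i ≠ j → z i ^ 2 ≠ z j ^ 2)
    (hzz1 : ∀ i j, i ≠ j → z i ^ 2 * z j ^ 2 ≠ 1)
    (haz : ∀ i, (a ^ 2 - z i ^ 2) * (1 - a ^ 2 * z i ^ 2) ≠ 0) :
    Filter.Tendsto
      (fun w : Fin M → ℂ =>
        (a ^ (2:ℤ) - a ^ (-2:ℤ)) ^ M * (∏ i, w i ^ M) *
        (∏ i, (b * (w i)⁻¹ - b⁻¹) *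
          (a ^ (2:ℤ) * z i ^ (2:ℤ) - a ^ (-2:ℤ) * z i ^ (-2:ℤ))) *
        ((∏ i, ∏ j,
          (a ^ (2:ℤ) + a ^ (-2:ℤ) - z i ^ (-2:ℤ) * w j - z i ^ (2:ℤ) * (w j)⁻¹) *
          (a ^ (2:ℤ) + a ^ (-2:ℤ) - z i ^ (-2:ℤ) * (w j)⁻¹ - z i ^ (2:ℤ) * w j)) /
         (∏ p ∈ Finset.univ.filter (fun p : Fin M × Fin M => p.1 < p.2),
          (-((z p.1)⁻¹ * z p.2) + z p.1 * (z p.2)⁻¹) *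
          ((z p.1)⁻¹ * (z p.2)⁻¹ - z p.1 * z p.2) *
          (-(w p.2)⁻¹ + (w p.1)⁻¹) * (w p.1 * w p.2 - 1))) *
        Matrix.det (Matrix.of fun i j : Fin M =>
          ((a ^ (2:ℤ) + a ^ (-2:ℤ) - z i ^ (-2:ℤ) * w j - z i ^ (2:ℤ) * (w j)⁻¹) *
           (a ^ (2:ℤ) + a ^ (-2:ℤ) - z i ^ (-2:ℤ) * (w j)⁻¹ - z i ^ (2:ℤ) * w j))⁻¹))
      (nhdsWithin (fun _ => (1 : ℂ))
        {w : Fin M → ℂ | ∀ i j, i ≠ j → w i ≠ w j ∧ w i * w j ≠ 1})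
      (nhds
        (a ^ (2 * M) * (b - b⁻¹) ^ M *
          (∏ i, (a ^ (2:ℤ) * z i ^ (2:ℤ) - a ^ (-2:ℤ) * z i ^ (-2:ℤ)) /
            (1 - z i ^ (-4:ℤ))) *
          ((∏ i, (a ^ (2:ℤ) + a ^ (-2:ℤ) - z i ^ (-2:ℤ) - z i ^ (2:ℤ)) ^ (2 * M)) /
           (∏ p ∈ Finset.univ.filter (fun p : Fin M × Fin M => p.1 < p.2),
            (-((z p.1)⁻¹ * z p.2) + z p.1 * (z p.2)⁻¹) *
            ((z p.1)⁻¹ * (z p.2)⁻¹ - z p.1 * z p.2))) *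
          Matrix.det (Matrix.of fun i j : Fin M =>
            (a ^ 2 * z i ^ 2) ^ (j : ℕ) / (a ^ 2 - z i ^ 2) ^ (2 * ((j : ℕ) + 1))
              - (a ^ 2 * z i ^ 2) ^ (j : ℕ) /
                (1 - a ^ 2 * z i ^ 2) ^ (2 * ((j : ℕ) + 1))))) := by
  have hev0 : ∀ᶠ w : Fin M → ℂ in nhds (fun _ => (1 : ℂ)), ∀ j, w j ≠ 0 := by
    rw [Filter.eventually_all]
    intro j
    exact ((continuous_apply j).tendsto (fun _ => (1 : ℂ))).eventually_ne one_ne_zero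
  have hP2 : ∀ i, 2 - rP a (z i) ≠ 0 := fun i => by
    rw [two_sub_rP a _ ha (hz i)]
    exact neg_ne_zero.2 (div_ne_zero (pow_ne_zero _ (mul_ne_zero_iff.1 (haz i)).2)
      (mul_ne_zero (pow_ne_zero _ ha) (pow_ne_zero _ (hz i))))
  have hQ2 : ∀ i, 2 - rQ a (z i) ≠ 0 := fun i => by
    rw [two_sub_rQ a _ ha (hz i)]
    exact neg_ne_zero.2 (div_ne_zero (pow_ne_zero _ (mul_ne_zero_iff.1 (haz i)).1)
      (mul_ne_zero (pow_ne_zero _ ha) (pow_ne_zero _ (hz i))))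
  have hU : ∀ (w : Fin M → ℂ) (j : Fin M), extU M w j = w j + (w j)⁻¹ := fun w j => by
    simp [extU]
  have hevP : ∀ᶠ w : Fin M → ℂ in nhds (fun _ => (1 : ℂ)), ∀ i j : Fin M,
      w j + (w j)⁻¹ - rP a (z i) ≠ 0 := by
    rw [Filter.eventually_all]; intro i
    rw [Filter.eventually_all]; intro j
    filter_upwards [((extU_tendsto M j).sub_const (rP a (z i))).eventually_ne (hP2 i)] with w hw
    rwa [hU] at hw
  have hevQ : ∀ᶠ w : Fin M → ℂ in nhds (fun _ => (1 : ℂ)), ∀ i j : Fin M,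
      w j + (w j)⁻¹ - rQ a (z i) ≠ 0 := by
    rw [Filter.eventually_all]; intro i
    rw [Filter.eventually_all]; intro j
    filter_upwards [((extU_tendsto M j).sub_const (rQ a (z i))).eventually_ne (hQ2 i)] with w hw
    rwa [hU] at hw
  have hw1 : ∀ j : Fin M, Filter.Tendsto (fun w : Fin M → ℂ => w j)
      (nhds (fun _ => (1 : ℂ))) (nhds 1) :=
    fun j => (continuous_apply j).tendsto (fun _ => (1 : ℂ))
  have hw1i : ∀ j : Fin M, Filter.Tendsto (fun w : Fin M → ℂ => (w j)⁻¹)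
      (nhds (fun _ => (1 : ℂ))) (nhds 1) := fun j => by
    simpa using (hw1 j).inv₀ one_ne_zero
  set Zp : ℂ := ∏ p ∈ Finset.univ.filter (fun p : Fin M × Fin M => p.1 < p.2),
            (-((z p.1)⁻¹ * z p.2) + z p.1 * (z p.2)⁻¹) *
            ((z p.1)⁻¹ * (z p.2)⁻¹ - z p.1 * z p.2) with hZp
  -- the continuous extension
  have hlim : Filter.Tendsto
      (fun w : Fin M → ℂ =>
        (a ^ (2:ℤ) - a ^ (-2:ℤ)) ^ M * (∏ i, w i ^ M) *
        (∏ i, (b * (w i)⁻¹ - b⁻¹) *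
          (a ^ (2:ℤ) * z i ^ (2:ℤ) - a ^ (-2:ℤ) * z i ^ (-2:ℤ))) *
        ((∏ i, ∏ j,
          (a ^ (2:ℤ) + a ^ (-2:ℤ) - z i ^ (-2:ℤ) * w j - z i ^ (2:ℤ) * (w j)⁻¹) *
          (a ^ (2:ℤ) + a ^ (-2:ℤ) - z i ^ (-2:ℤ) * (w j)⁻¹ - z i ^ (2:ℤ) * w j)) / Zp) *
        Matrix.det (Matrix.of fun i k : Fin M => rc a (z i) *
        ((-1) ^ (k : ℕ) * (∏ m ∈ range ((k : ℕ) + 1), (extU M w m - rP a (z i))⁻¹) -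
         (-1) ^ (k : ℕ) * (∏ m ∈ range ((k : ℕ) + 1), (extU M w m - rQ a (z i))⁻¹))))
      (nhds (fun _ => (1 : ℂ)))
      (nhds (
        (a ^ (2:ℤ) - a ^ (-2:ℤ)) ^ M * (∏ i : Fin M, (1 : ℂ) ^ M) *
        (∏ i, (b * 1 - b⁻¹) *
          (a ^ (2:ℤ) * z i ^ (2:ℤ) - a ^ (-2:ℤ) * z i ^ (-2:ℤ))) *
        ((∏ i, ∏ j : Fin M,
          (a ^ (2:ℤ) + a ^ (-2:ℤ) - z i ^ (-2:ℤ) * 1 - z i ^ (2:ℤ) * 1) *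
          (a ^ (2:ℤ) + a ^ (-2:ℤ) - z i ^ (-2:ℤ) * 1 - z i ^ (2:ℤ) * 1)) / Zp) *
        Matrix.det (Matrix.of fun i k : Fin M => rc a (z i) *
        ((-1) ^ (k : ℕ) * (∏ m ∈ range ((k : ℕ) + 1), (2 - rP a (z i))⁻¹) -
         (-1) ^ (k : ℕ) * (∏ m ∈ range ((k : ℕ) + 1), (2 - rQ a (z i))⁻¹))))) := by
    refine Filter.Tendsto.mul (Filter.Tendsto.mul (Filter.Tendsto.mul
      (tendsto_const_nhds.mul ?_) ?_) (Filter.Tendsto.div_const ?_ _)) ?_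
    · exact tendsto_finsetProd _ fun i _ => (hw1 i).pow M
    · exact tendsto_finsetProd _ fun i _ =>
        (((hw1i i).const_mul b).sub_const _).mul_const _
    · exact tendsto_finsetProd _ fun i _ => tendsto_finsetProd _ fun j _ =>
        ((((hw1 j).const_mul _).const_sub _).sub ((hw1i j).const_mul _)).mul
        ((((hw1i j).const_mul _).const_sub _).sub ((hw1 j).const_mul _))
    · refine ((continuous_id.matrix_det).tendsto _).comp ?_
      refine tendsto_pi_nhds.2 fun i => tendsto_pi_nhds.2 fun k => ?_
      refine Filter.Tendsto.const_mul _ (Filter.Tendsto.sub ?_ ?_)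
      · exact (tendsto_finsetProd _ fun m _ =>
          ((extU_tendsto M m).sub_const _).inv₀ (hP2 i)).const_mul _
      · exact (tendsto_finsetProd _ fun m _ =>
          ((extU_tendsto M m).sub_const _).inv₀ (hQ2 i)).const_mul _
  have hval : (a ^ (2:ℤ) - a ^ (-2:ℤ)) ^ M * (∏ i : Fin M, (1 : ℂ) ^ M) *
        (∏ i, (b * 1 - b⁻¹) *
          (a ^ (2:ℤ) * z i ^ (2:ℤ) - a ^ (-2:ℤ) * z i ^ (-2:ℤ))) *
        ((∏ i, ∏ j : Fin M,
          (a ^ (2:ℤ) + a ^ (-2:ℤ) - z i ^ (-2:ℤ) * 1 - z i ^ (2:ℤ) * 1) *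
          (a ^ (2:ℤ) + a ^ (-2:ℤ) - z i ^ (-2:ℤ) * 1 - z i ^ (2:ℤ) * 1)) / Zp) *
        Matrix.det (Matrix.of fun i k : Fin M => rc a (z i) *
        ((-1) ^ (k : ℕ) * (∏ m ∈ range ((k : ℕ) + 1), (2 - rP a (z i))⁻¹) -
         (-1) ^ (k : ℕ) * (∏ m ∈ range ((k : ℕ) + 1), (2 - rQ a (z i))⁻¹))) =
      (a ^ (2 * M) * (b - b⁻¹) ^ M *
          (∏ i, (a ^ (2:ℤ) * z i ^ (2:ℤ) - a ^ (-2:ℤ) * z i ^ (-2:ℤ)) /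
            (1 - z i ^ (-4:ℤ))) *
          ((∏ i, (a ^ (2:ℤ) + a ^ (-2:ℤ) - z i ^ (-2:ℤ) - z i ^ (2:ℤ)) ^ (2 * M)) / Zp) *
          Matrix.det (Matrix.of fun i j : Fin M =>
            (a ^ 2 * z i ^ 2) ^ (j : ℕ) / (a ^ 2 - z i ^ 2) ^ (2 * ((j : ℕ) + 1))
              - (a ^ 2 * z i ^ 2) ^ (j : ℕ) /
                (1 - a ^ 2 * z i ^ 2) ^ (2 * ((j : ℕ) + 1)))) := by
    simp only [fun (i k : Fin M) => limit_entry a (z i) ha (hz i) (haz i) (k : ℕ)]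
    have hdet := Matrix.det_mul_column (fun i : Fin M => rc a (z i) * (a ^ 2 * z i ^ 2))
      (Matrix.of fun i j : Fin M =>
            (a ^ 2 * z i ^ 2) ^ (j : ℕ) / (a ^ 2 - z i ^ 2) ^ (2 * ((j : ℕ) + 1))
              - (a ^ 2 * z i ^ 2) ^ (j : ℕ) /
                (1 - a ^ 2 * z i ^ 2) ^ (2 * ((j : ℕ) + 1)))
    simp only [Matrix.of_apply] at hdet
    rw [hdet]
    have hpp : (∏ i, ∏ j : Fin M,
          (a ^ (2:ℤ) + a ^ (-2:ℤ) - z i ^ (-2:ℤ) * 1 - z i ^ (2:ℤ) * 1) *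
          (a ^ (2:ℤ) + a ^ (-2:ℤ) - z i ^ (-2:ℤ) * 1 - z i ^ (2:ℤ) * 1)) =
        ∏ i, (a ^ (2:ℤ) + a ^ (-2:ℤ) - z i ^ (-2:ℤ) - z i ^ (2:ℤ)) ^ (2 * M) := by
      refine prod_congr rfl fun i _ => ?_
      rw [prod_const, card_univ, Fintype.card_fin, mul_one, mul_one, ← sq, ← pow_mul]
    rw [hpp]
    have hc : ∏ i, rc a (z i) * (a ^ 2 * z i ^ 2) =
        ∏ i, ((a ^ 2 - (a ^ 2)⁻¹)⁻¹ * a ^ 2 * (1 - z i ^ (-4:ℤ))⁻¹) := by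
      refine prod_congr rfl fun i _ => ?_
      have hA := sq_sub_inv_ne a ha ha4
      have hZ := sq_sub_inv_ne (z i) (hz i) (hz4 i)
      have hzi := hz i
      have e : z i ^ 2 - (z i ^ 2)⁻¹ = z i ^ 2 * (1 - z i ^ (-4:ℤ)) := by
        simp only [zpow_neg, zpow_ofNat]; field_simp
      unfold rc
      rw [e, mul_inv, mul_inv]
      field_simp
    rw [hc]
    simp only [prod_mul_distrib, prod_const, card_univ, Fintype.card_fin, one_pow,
      div_eq_mul_inv, mul_one]
    have hA := sq_sub_inv_ne a ha ha4
    have hA' : a ^ (2:ℤ) - a ^ (-2:ℤ) = a ^ 2 - (a ^ 2)⁻¹ := by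
      simp only [zpow_neg, zpow_ofNat]
    have hcan : (a ^ (2:ℤ) - a ^ (-2:ℤ)) ^ M * (a ^ 2 - (a ^ 2)⁻¹)⁻¹ ^ M = 1 := by
      rw [hA', ← mul_pow, mul_inv_cancel₀ hA, one_pow]
    rw [pow_mul a 2 M]
    generalize (a ^ (2:ℤ) - a ^ (-2:ℤ)) ^ M = X1 at *
    generalize (a ^ 2 - (a ^ 2)⁻¹)⁻¹ ^ M = X2 at *
    generalize Matrix.det (_ : Matrix (Fin M) (Fin M) ℂ) = X3
    generalize (∏ i, (a ^ (2:ℤ) + a ^ (-2:ℤ) - z i ^ (-2:ℤ) - z i ^ (2:ℤ)) ^ (2 * M)) = X4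
    generalize (∏ i, (a ^ (2:ℤ) * z i ^ (2:ℤ) - a ^ (-2:ℤ) * z i ^ (-2:ℤ))) = X5
    generalize (∏ i, (1 - z i ^ (-4:ℤ))⁻¹) = X6
    linear_combination ((b - b⁻¹) ^ M * X5 * X4 * Zp⁻¹ * (a ^ 2) ^ M * X6 * X3) * hcan
  rw [hval] at hlim
  refine (hlim.mono_left nhdsWithin_le_nhds).congr' ?_
  filter_upwards [nhdsWithin_le_nhds hev0, nhdsWithin_le_nhds hevP, nhdsWithin_le_nhds hevQ,
    self_mem_nhdsWithin] with w h0 hp hq hS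
  have hdet : Matrix.det (Matrix.of fun i j : Fin M =>
          ((a ^ (2:ℤ) + a ^ (-2:ℤ) - z i ^ (-2:ℤ) * w j - z i ^ (2:ℤ) * (w j)⁻¹) *
           (a ^ (2:ℤ) + a ^ (-2:ℤ) - z i ^ (-2:ℤ) * (w j)⁻¹ - z i ^ (2:ℤ) * w j))⁻¹) =
      Matrix.det (Matrix.of fun i j : Fin M => rc a (z i) *
        ((w j + (w j)⁻¹ - rP a (z i))⁻¹ - (w j + (w j)⁻¹ - rQ a (z i))⁻¹)) := by
    congr 1
    ext i j
    simp only [Matrix.of_apply]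
    rw [factor_eq a (z i) (w j) ha (hz i) (h0 j),
      entry_eq a (z i) _ ha (hz i) ha4 (hz4 i) (hp i j) (hq i j)]
  rw [hdet, det_newton M (fun j => w j + (w j)⁻¹) (extU M w) (hU w) (fun i => rP a (z i))
    (fun i => rQ a (z i)) (fun i => rc a (z i)) hp hq]
  have hden : (∏ p ∈ Finset.univ.filter (fun p : Fin M × Fin M => p.1 < p.2),
          (-((z p.1)⁻¹ * z p.2) + z p.1 * (z p.2)⁻¹) *
          ((z p.1)⁻¹ * (z p.2)⁻¹ - z p.1 * z p.2) *
          (-(w p.2)⁻¹ + (w p.1)⁻¹) * (w p.1 * w p.2 - 1)) =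
      Zp * ∏ p ∈ Finset.univ.filter (fun p : Fin M × Fin M => p.1 < p.2),
        ((w p.2 + (w p.2)⁻¹) - (w p.1 + (w p.1)⁻¹)) := by
    rw [hZp, ← prod_mul_distrib]
    refine prod_congr rfl fun p _ => ?_
    rw [← vand_factor _ _ (h0 p.1) (h0 p.2)]
    ring
  have hV0 : ∏ p ∈ Finset.univ.filter (fun p : Fin M × Fin M => p.1 < p.2),
        ((w p.2 + (w p.2)⁻¹) - (w p.1 + (w p.1)⁻¹)) ≠ 0 := by
    refine prod_ne_zero_iff.2 fun p hpp => ?_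
    have hlt : p.1 < p.2 := (mem_filter.1 hpp).2
    obtain ⟨d1, d2⟩ := hS p.1 p.2 hlt.ne
    rw [← vand_factor _ _ (h0 p.1) (h0 p.2)]
    refine mul_ne_zero ?_ (sub_ne_zero.2 d2)
    intro h
    apply d1
    have : (w p.1)⁻¹ = (w p.2)⁻¹ := by linear_combination h
    exact inv_injective this
  rw [hden]
  generalize (∏ p ∈ Finset.univ.filter (fun p : Fin M × Fin M => p.1 < p.2),
        ((w p.2 + (w p.2)⁻¹) - (w p.1 + (w p.1)⁻¹))) = V at *
  generalize Matrix.det (_ : Matrix (Fin M) (Fin M) ℂ) = X3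
  rw [div_mul_eq_div_div]
  field_simp
end

section
/- For M ≥ 1 and 0 ≤ N ≤ M, the following homogeneous Cauchy-type identity holds: Σ_{x ⊔ x̄ = {1,2,…,M}} F̄_{M,M−N}(z_1,…,z_{M−N}|1,…,1|x̄_1,…,x̄_{M−N}) · F_{M,N}(z_{M−N+1},…,z_M|1,…,1|x_1,…,x_N) = a^{2M}(b−b⁻¹)^M ∏_{i=1}^M [(a²z_i²−a⁻²z_i⁻²)/(1−z_i⁻⁴)] × [∏_{i=1}^M (a²+a⁻²−z_i⁻²−z_i²)^{2M}] / [∏_{1≤i<j≤M}(−z_i⁻¹z_j+z_i z_j⁻¹)(z_i⁻¹z_j⁻¹−z_i z_j)] × det_{M×M}( (a²z_i²)^{j−1}/(a²−z_i²)^{2j} − (a²z_i²)^{j−1}/(1−a²z_i²)^{2j} ), where the sum is over all pairs of increasing sequences x = {x_1 < ⋯ < x_N} and x̄ = {x̄_1 < ⋯ < x̄_{M−N}} of integers in {1,…,M} whose disjoint union is {1,2,…,M}. -/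
open Finset

def rfn (Δ x : ℂ) : ℂ := x ^ 2 + Δ * x + 1

noncomputable def facR (Δ X x : ℂ) : ℂ := 1 + X * (x + Δ) + (x + Δ) ^ 2
noncomputable def facL (X x : ℂ) : ℂ := x ^ 2 + 1 - X * x

lemma facR_eq (Δ X x : ℂ) : facR Δ X x = rfn Δ x + (X + Δ) * (x + Δ) := by
  unfold facR rfn; ring
lemma facL_eq (Δ X x : ℂ) : facL X x = rfn Δ x - (X + Δ) * x := by
  unfold facL rfn; ring
lemma facR_refl (Δ X x : ℂ) : facR Δ X (-Δ - x) = facL X x := by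
  unfold facR facL; ring
lemma facL_refl (Δ X x : ℂ) : facL X (-Δ - x) = facR Δ X x := by
  unfold facR facL; ring
lemma rfn_refl (Δ x : ℂ) : rfn Δ (-Δ - x) = rfn Δ x := by
  unfold rfn; ring

noncomputable def fac (Δ : ℂ) (same : Prop) [Decidable same] (X x : ℂ) : ℂ :=
  if same then facR Δ X x else facL X x

lemma prod_decomp {ι : Type*} [DecidableEq ι] (Δ : ℂ) (p : ι → Prop) [DecidablePred p]
    (X : ι → ℂ) (s : Finset ι) :
    ∃ A C : Polynomial ℂ, (∀ m, s.card < m → A.coeff m = 0) ∧ A.coeff s.card = 1 ∧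
      (∀ m, s.card ≤ m → C.coeff m = 0) ∧
      ∀ x, ∏ i ∈ s, fac Δ (p i) (X i) x = A.eval (rfn Δ x) + x * C.eval (rfn Δ x) := by
  induction s using Finset.induction_on with
  | empty =>
    refine ⟨1, 0, ?_, by simp, by simp, by simp⟩
    intro m hm
    rw [Polynomial.coeff_one, if_neg]
    simp at hm; omega
  | insert i s hi ih =>
    obtain ⟨A, C, hA, hA1, hC, h⟩ := ih
    obtain ⟨d, e, hde⟩ : ∃ d e : ℂ, ∀ x, fac Δ (p i) (X i) x = rfn Δ x + d + e * x := by
      unfold fac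
      split_ifs
      · exact ⟨(X i + Δ) * Δ, X i + Δ, fun x => by rw [facR_eq]; ring⟩
      · exact ⟨0, -(X i + Δ), fun x => by rw [facL_eq Δ]; ring⟩
    refine ⟨Polynomial.X * (A + Polynomial.C e * C) + Polynomial.C d * A - Polynomial.C e * C,
      Polynomial.C e * A + Polynomial.X * C + Polynomial.C (d - e * Δ) * C, ?_, ?_, ?_, ?_⟩
    · intro m hm
      rw [card_insert_of_notMem hi] at hm
      obtain ⟨m, rfl⟩ : ∃ k, m = k + 1 := ⟨m - 1, by omega⟩
      simp only [Polynomial.coeff_add, Polynomial.coeff_sub, Polynomial.coeff_X_mul,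
        Polynomial.coeff_C_mul]
      rw [hA m (by omega), hA (m + 1) (by omega), hC m (by omega), hC (m + 1) (by omega)]; ring
    · rw [card_insert_of_notMem hi]
      simp only [Polynomial.coeff_add, Polynomial.coeff_sub, Polynomial.coeff_X_mul,
        Polynomial.coeff_C_mul]
      rw [hA1, hA (_ + 1) (by omega), hC _ le_rfl, hC (_ + 1) (by omega)]; ring
    · intro m hm
      rw [card_insert_of_notMem hi] at hm
      obtain ⟨m, rfl⟩ : ∃ k, m = k + 1 := ⟨m - 1, by omega⟩
      simp only [Polynomial.coeff_add, Polynomial.coeff_X_mul,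
        Polynomial.coeff_C_mul]
      rw [hA (m + 1) (by omega), hC m (by omega), hC (m + 1) (by omega)]; ring
    · intro x
      rw [prod_insert hi, h, hde]
      simp only [Polynomial.eval_add, Polynomial.eval_sub, Polynomial.eval_mul, Polynomial.eval_X,
        Polynomial.eval_C]
      generalize A.eval (rfn Δ x) = α
      generalize C.eval (rfn Δ x) = γ
      unfold rfn; ring

noncomputable def Psi {n : ℕ} (Δ B : ℂ) (β : Bool → ℂ) (X : Fin n → ℂ) (g : Fin n → Bool)
    (c : Bool) (x : ℂ) : ℂ := (B * x + β c) * ∏ i, fac Δ (g i = c) (X i) x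

lemma Psi_refl {n : ℕ} (Δ B : ℂ) (β : Bool → ℂ) (hβ : β true + β false = Δ * B)
    (X : Fin n → ℂ) (g : Fin n → Bool) (c : Bool) (x : ℂ) :
    Psi Δ B β X g c (-Δ - x) = - Psi Δ B β X g (!c) x := by
  unfold Psi
  have h1 : ∏ i, fac Δ (g i = c) (X i) (-Δ - x) = ∏ i, fac Δ (g i = !c) (X i) x := by
    apply prod_congr rfl
    intro i _
    unfold fac
    by_cases h : g i = c
    · have h' : ¬ (g i = !c) := by rw [h]; cases c <;> simp
      rw [if_pos h, if_neg h', facR_refl]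
    · have h' : (g i = !c) := by revert h; cases c <;> cases g i <;> simp
      rw [if_neg h, if_pos h', facL_refl]
  rw [h1]
  have h2 : β c + β (!c) = Δ * B := by cases c <;> simp [← hβ, add_comm]
  linear_combination (-(∏ i, fac Δ (g i = !c) (X i) x)) * (- h2)

lemma exists_T {n : ℕ} (Δ B : ℂ) (β : Bool → ℂ) (hβ : β true + β false = Δ * B)
    (X : Fin n → ℂ) (g : Fin n → Bool) :
    ∃ T : Polynomial ℂ, (∀ m, n < m → T.coeff m = 0) ∧ T.coeff n = B ∧
      ∀ c x, Psi Δ B β X g c x - Psi Δ B β X g c (-Δ - x) = (2 * x + Δ) * T.eval (rfn Δ x) := by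
  obtain ⟨A, C, hA, hA1, hC, h⟩ := prod_decomp Δ (fun i => g i = true) X univ
  simp only [card_univ, Fintype.card_fin] at hA hA1 hC
  refine ⟨Polynomial.C B * A + Polynomial.C (β true - Δ * B) * C, ?_, ?_, ?_⟩
  · intro m hm
    simp only [Polynomial.coeff_add, Polynomial.coeff_C_mul]
    rw [hA m hm, hC m hm.le]; ring
  · simp only [Polynomial.coeff_add, Polynomial.coeff_C_mul]
    rw [hA1, hC n le_rfl]; ring
  · have key : ∀ x, Psi Δ B β X g true x - Psi Δ B β X g true (-Δ - x) =
        (2 * x + Δ) * (Polynomial.C B * A + Polynomial.C (β true - Δ * B) * C).eval (rfn Δ x) := by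
      intro x
      unfold Psi
      rw [h, h, rfn_refl]
      simp only [Polynomial.eval_add, Polynomial.eval_mul, Polynomial.eval_C]
      generalize A.eval (rfn Δ x) = α
      generalize C.eval (rfn Δ x) = γ
      ring
    intro c x
    cases c
    · rw [← key, Psi_refl _ _ _ hβ, Psi_refl _ _ _ hβ]
      simp; ring
    · exact key x

lemma T_eval {n : ℕ} (Δ B : ℂ) (β : Bool → ℂ)
    (X : Fin n → ℂ) (g : Fin n → Bool) (T : Polynomial ℂ)
    (hT : ∀ c x, Psi Δ B β X g c x - Psi Δ B β X g c (-Δ - x) = (2 * x + Δ) * T.eval (rfn Δ x))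
    (k : Fin n) (u : ℂ) (hu : rfn Δ u = u * (X k + Δ)) :
    T.eval (rfn Δ u) = (X k + Δ) * ((B * u + β (g k)) *
      ∏ i ∈ univ.erase k, fac Δ (g i = g k) (X i) u) := by
  obtain ⟨A, C, -, -, -, h⟩ := prod_decomp Δ (fun i => g i = g k) X (univ.erase k)
  have hP : ∀ x, Psi Δ B β X g (g k) x = (B * x + β (g k)) * (facR Δ (X k) x *
      (A.eval (rfn Δ x) + x * C.eval (rfn Δ x))) := by
    intro x
    unfold Psi
    rw [← mul_prod_erase univ _ (mem_univ k), h]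
    simp [fac]
  have hr : Continuous (rfn Δ) := by unfold rfn; fun_prop
  have key : (fun x => T.eval (rfn Δ x)) = fun x =>
      rfn Δ x * (B * A.eval (rfn Δ x) + (β (g k) - Δ * B) * C.eval (rfn Δ x)) +
      (X k + Δ) * (β (g k) * A.eval (rfn Δ x) + B * (rfn Δ x - 1) * C.eval (rfn Δ x)) := by
    refine Continuous.ext_on (dense_compl_singleton (-Δ / 2)) ?_ ?_ ?_
    · exact T.continuous.comp hr
    · have h1 := A.continuous.comp hr
      have h2 := C.continuous.comp hr
      simp only [Function.comp_def] at h1 h2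
      fun_prop
    · intro x hx
      have hx' : 2 * x + Δ ≠ 0 := by
        intro h0
        apply hx
        simp only [Set.mem_singleton_iff]
        linear_combination h0 / 2
      apply mul_left_cancel₀ hx'
      simp only
      rw [← hT (g k) x, hP, hP, rfn_refl, facR_refl, facR_eq, facL_eq Δ]
      generalize A.eval (rfn Δ x) = α
      generalize C.eval (rfn Δ x) = γ
      unfold rfn; ring
  have h1 := congrFun key u
  rw [h1, h]
  generalize A.eval (rfn Δ u) = α
  generalize C.eval (rfn Δ u) = γ
  have e : u ^ 2 = rfn Δ u - 1 - Δ * u := by unfold rfn; ring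
  linear_combination (B * α + (β (g k) - Δ * B) * γ) * hu - (X k + Δ) * B * γ * e


noncomputable def hh (Δ u : ℂ) (j : ℕ) : ℂ := (u ^ (j + 1) - u⁻¹ ^ (j + 1)) * (u + u⁻¹ + Δ) ^ j

noncomputable def fl (e : Bool) (x : ℂ) : ℂ := if e then x else x⁻¹
def sg (e : Bool) : ℂ := if e then 1 else -1

noncomputable def Xf (u : ℂ) : ℂ := u + u⁻¹

lemma Xf_fl (e : Bool) (u : ℂ) : Xf (fl e u) = Xf u := by
  cases e <;> simp [Xf, fl, add_comm]

lemma rfn_Xf (Δ u : ℂ) (hu : u ≠ 0) : rfn Δ u = u * (Xf u + Δ) := by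
  unfold rfn Xf; field_simp; ring

lemma q_expand {n : ℕ} (Δ B : ℂ) (β : Bool → ℂ)
    (u : Fin (n + 1) → ℂ) (g : Fin (n + 1) → Bool) (T : Polynomial ℂ)
    (hT0 : ∀ m, n + 1 < m → T.coeff m = 0)
    (hT : ∀ c x, Psi Δ B β (fun i => Xf (u i)) g c x - Psi Δ B β (fun i => Xf (u i)) g c (-Δ - x)
      = (2 * x + Δ) * T.eval (rfn Δ x))
    (k : Fin (n + 1)) (hu : u k ≠ 0) (hD : Xf (u k) + Δ ≠ 0) :
    ∑ e : Bool, sg e * ((B * fl e (u k) + β (g k)) *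
      ∏ i ∈ univ.erase k, fac Δ (g i = g k) (Xf (u i)) (fl e (u k))) =
    ∑ j : Fin (n + 1), T.coeff (j + 1) * hh Δ (u k) j := by
  apply mul_left_cancel₀ hD
  have hu' : (u k)⁻¹ ≠ 0 := inv_ne_zero hu
  have hX' : Xf (u k)⁻¹ = Xf (u k) := Xf_fl false (u k)
  have e1 := T_eval Δ B β (fun i => Xf (u i)) g T hT k (u k) (rfn_Xf _ _ hu)
  have e2 := T_eval Δ B β (fun i => Xf (u i)) g T hT k (u k)⁻¹
    (by rw [rfn_Xf _ _ hu', hX'])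
  have hn : T.natDegree < n + 2 := by
    apply Nat.lt_succ_of_le
    rw [Polynomial.natDegree_le_iff_coeff_eq_zero]
    exact hT0
  rw [Polynomial.eval_eq_sum_range' hn, sum_range_succ', rfn_Xf _ _ hu] at e1
  rw [Polynomial.eval_eq_sum_range' hn, sum_range_succ', rfn_Xf _ _ hu', hX'] at e2
  have : ∑ e : Bool, sg e * ((B * fl e (u k) + β (g k)) *
      ∏ i ∈ univ.erase k, fac Δ (g i = g k) (Xf (u i)) (fl e (u k))) =
      ((B * (u k) + β (g k)) *
      ∏ i ∈ univ.erase k, fac Δ (g i = g k) (Xf (u i)) (u k)) -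
      ((B * (u k)⁻¹ + β (g k)) *
      ∏ i ∈ univ.erase k, fac Δ (g i = g k) (Xf (u i)) (u k)⁻¹) := by
    simp [sg, fl]; ring
  rw [this, mul_sub, ← e1, ← e2, add_sub_add_comm, ← sum_sub_distrib, mul_sum, ← Fin.sum_univ_eq_sum_range]
  simp only [pow_zero, sub_self, add_zero]
  apply sum_congr rfl
  intro j _
  rw [mul_pow, mul_pow, hh, show u k + (u k)⁻¹ + Δ = Xf (u k) + Δ from rfl]
  ring

noncomputable def HM {n : ℕ} (Δ : ℂ) (u : Fin n → ℂ) : Matrix (Fin n) (Fin n) ℂ :=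
  Matrix.of fun i j => hh Δ (u i) j

lemma det_step {n : ℕ} (Δ : ℂ) (u : Fin (n + 1) → ℂ) (c : Fin (n + 1) → ℂ) :
    ∑ k : Fin (n + 1), (-1) ^ ((k : ℕ) + n) * (∑ j : Fin (n + 1), c j * hh Δ (u k) j) *
      (HM Δ (fun i => u (k.succAbove i))).det = c (Fin.last n) * (HM Δ u).det := by
  have h1 : ∀ j : Fin (n + 1), ∑ k : Fin (n + 1), (-1) ^ ((k : ℕ) + n) * hh Δ (u k) j *
      (HM Δ (fun i => u (k.succAbove i))).det =
      ((HM Δ u).updateCol (Fin.last n) (fun i => HM Δ u i j)).det := by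
    intro j
    rw [Matrix.det_succ_column _ (Fin.last n)]
    apply sum_congr rfl
    intro k _
    simp only [Fin.val_last, Matrix.updateCol_self, Fin.succAbove_last]
    congr 2
    ext i l
    simp [HM, Matrix.updateCol_apply, Fin.castSucc_ne_last]
  have h2 : ∀ j : Fin (n + 1), ((HM Δ u).updateCol (Fin.last n) (fun i => HM Δ u i j)).det =
      if j = Fin.last n then (HM Δ u).det else 0 := by
    intro j
    split_ifs with h
    · subst h
      congr 1
      exact Matrix.updateCol_eq_self _ _
    · exact Matrix.det_zero_of_column_eq h (by intro i; simp [Matrix.updateCol_apply, h])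
  have h3 : ∀ k : Fin (n + 1), (-1 : ℂ) ^ ((k : ℕ) + n) * (∑ j : Fin (n + 1), c j * hh Δ (u k) j) *
      (HM Δ (fun i => u (k.succAbove i))).det = ∑ j : Fin (n + 1), c j * ((-1) ^ ((k : ℕ) + n) * hh Δ (u k) j *
      (HM Δ (fun i => u (k.succAbove i))).det) := by
    intro k
    rw [mul_sum, sum_mul]
    apply sum_congr rfl
    intros; ring
  simp_rw [h3]
  rw [sum_comm]
  simp_rw [← mul_sum, h1, h2]
  simp

noncomputable def VV {n : ℕ} (v : Fin n → ℂ) : ℂ := ∏ j, ∏ i, if i < j then v j - v i else 1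

lemma VV_step {n : ℕ} (v : Fin (n + 1) → ℂ) (k : Fin (n + 1)) :
    VV v = (-1) ^ ((k : ℕ) + n) * (∏ i : Fin n, (v k - v (k.succAbove i))) *
      VV (fun i => v (k.succAbove i)) := by
  have h1 : VV v = (∏ i : Fin n, (if k.succAbove i < k then v k - v (k.succAbove i) else 1)) *
      (∏ i : Fin n, (if k < k.succAbove i then v (k.succAbove i) - v k else 1)) *
      VV (fun i => v (k.succAbove i)) := by
    unfold VV
    rw [Fin.prod_univ_succAbove _ k]
    simp_rw [Fin.prod_univ_succAbove _ k]
    simp only [lt_self_iff_false, if_false, one_mul, prod_mul_distrib,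
      Fin.succAbove_lt_succAbove_iff]
    ring
  rw [h1, ← prod_mul_distrib]
  congr 1
  have h2 : (-1 : ℂ) ^ ((k : ℕ) + n) = ∏ i : Fin n, if (i : ℕ) < k then (1 : ℂ) else -1 := by
    have : ∀ m ≤ n, ∀ k : ℕ, k ≤ n → (-1 : ℂ) ^ (k + n) = ∏ i : Fin n, if (i : ℕ) < k then (1 : ℂ) else -1 := by
      intro m hm k hk
      rw [prod_ite]
      simp only [prod_const_one, one_mul, prod_const]
      have : #{x : Fin n | ¬ (x : ℕ) < k} = n - k := by
        rw [filter_not, card_sdiff_of_subset (filter_subset _ _)]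
        simp [Fin.card_filter_val_lt, hk]
      rw [this]
      rw [show k + n = 2 * k + (n - k) by omega, pow_add, pow_mul]; simp
    exact this n le_rfl k (Nat.lt_succ_iff.mp k.isLt)
  rw [h2, ← prod_mul_distrib]
  apply prod_congr rfl
  intro i _
  by_cases h : (i : ℕ) < k
  · have h' : k.succAbove i < k := by
      rw [Fin.succAbove_lt_iff_castSucc_lt]; exact h
    rw [if_pos h', if_neg (not_lt.mpr h'.le), if_pos h]; ring
  · have h' : k < k.succAbove i := by
      rw [Fin.lt_succAbove_iff_le_castSucc]; exact not_lt.mp h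
    rw [if_neg (not_lt.mpr h'.le), if_pos h', if_neg h]; ring


noncomputable def WW (Δ : ℂ) (same : Prop) [Decidable same] (x y : ℂ) : ℂ :=
  if same then facR Δ (Xf x) y / (y * (Xf y - Xf x)) else 1

lemma WW_fl (Δ : ℂ) (same : Prop) [Decidable same] (e : Bool) (x y : ℂ) :
    WW Δ same (fl e x) y = WW Δ same x y := by
  unfold WW; rw [Xf_fl]

/-- the summand -/
noncomputable def PT {n : ℕ} (Δ B : ℂ) (β : Bool → ℂ) (u : Fin n → ℂ) (g : Fin n → Bool)
    (π : Equiv.Perm (Fin n)) (τ : Fin n → Bool) : ℂ :=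
  (∏ i, (sg (τ i) * (B * fl (τ i) (u i) + β (g i)))) *
  (∏ j, ∏ i, if i < j then
    WW Δ (g (π i) = g (π j)) (fl (τ (π i)) (u (π i))) (fl (τ (π j)) (u (π j))) else 1) *
  ∏ i, fl (τ (π i)) (u (π i)) ^ (i : ℕ)

noncomputable def PP {n : ℕ} (Δ B : ℂ) (β : Bool → ℂ) (u : Fin n → ℂ) (g : Fin n → Bool) : ℂ :=
  ∑ π : Equiv.Perm (Fin n), ∑ τ : Fin n → Bool, PT Δ B β u g π τ

def extP {n : ℕ} (k : Fin (n + 1)) (π : Equiv.Perm (Fin n)) : Equiv.Perm (Fin (n + 1)) :=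
  (finSuccEquiv' (Fin.last n)).trans ((Equiv.optionCongr π).trans (finSuccEquiv' k).symm)

lemma extP_last {n : ℕ} (k : Fin (n + 1)) (π : Equiv.Perm (Fin n)) :
    extP k π (Fin.last n) = k := by simp [extP]

lemma extP_castSucc {n : ℕ} (k : Fin (n + 1)) (π : Equiv.Perm (Fin n)) (i : Fin n) :
    extP k π i.castSucc = k.succAbove (π i) := by
  have : finSuccEquiv' (Fin.last n) i.castSucc = some i := by
    rw [← Fin.succAbove_last]; exact finSuccEquiv'_succAbove _ _
  simp [extP, this]

lemma extP_bij (n : ℕ) : Function.Bijective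
    (fun p : Fin (n + 1) × Equiv.Perm (Fin n) => extP p.1 p.2) := by
  rw [Fintype.bijective_iff_injective_and_card]
  constructor
  · rintro ⟨k, π⟩ ⟨k', π'⟩ h
    simp only at h
    have hk : k = k' := by rw [← extP_last k π, h, extP_last]
    subst hk
    congr 1
    ext i
    have := congrArg (fun f => f i.castSucc) h
    simp only [extP_castSucc] at this
    rw [Fin.succAbove_right_injective this]
  · simp [Fintype.card_perm, Nat.factorial_succ]

noncomputable def kap {n : ℕ} (Δ B : ℂ) (β : Bool → ℂ) (u : Fin (n + 1) → ℂ) (g : Fin (n + 1) → Bool)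
    (k : Fin (n + 1)) (e : Bool) : ℂ :=
  sg e * (B * fl e (u k) + β (g k)) * fl e (u k) ^ n *
    ∏ i : Fin n, WW Δ (g (k.succAbove i) = g k) (u (k.succAbove i)) (fl e (u k))

lemma PT_rec {n : ℕ} (Δ B : ℂ) (β : Bool → ℂ) (u : Fin (n + 1) → ℂ) (g : Fin (n + 1) → Bool)
    (k : Fin (n + 1)) (π : Equiv.Perm (Fin n)) (e : Bool) (τ : Fin n → Bool) :
    PT Δ B β u g (extP k π) (Fin.insertNthEquiv (fun _ => Bool) k (e, τ)) =
    kap Δ B β u g k e *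
      PT Δ B β (fun i => u (k.succAbove i)) (fun i => g (k.succAbove i)) π τ := by
  unfold PT
  rw [Fin.prod_univ_succAbove _ k]
  rw [Fin.prod_univ_castSucc (fun j => ∏ i, _)]
  simp_rw [Fin.prod_univ_castSucc]
  simp only [extP_last, extP_castSucc, Fin.insertNthEquiv_apply, Fin.insertNth_apply_same,
    Fin.insertNth_apply_succAbove, Fin.castSucc_lt_castSucc_iff, Fin.castSucc_lt_last, if_true,
    lt_self_iff_false, if_false, mul_one, not_lt.mpr (Fin.castSucc_lt_last _).le, WW_fl,
    Fin.val_castSucc, Fin.val_last]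
  rw [Equiv.prod_comp π (fun i => WW Δ (g (k.succAbove i) = g k) (u (k.succAbove i)) (fl e (u k)))]
  unfold kap
  ring

lemma PP_rec {n : ℕ} (Δ B : ℂ) (β : Bool → ℂ) (u : Fin (n + 1) → ℂ) (g : Fin (n + 1) → Bool) :
    PP Δ B β u g = ∑ k, (∑ e, kap Δ B β u g k e) *
      PP Δ B β (fun i => u (k.succAbove i)) (fun i => g (k.succAbove i)) := by
  unfold PP
  rw [← (extP_bij n).sum_comp (fun π => ∑ τ, PT Δ B β u g π τ), Fintype.sum_prod_type]
  apply sum_congr rfl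
  intro k _
  rw [mul_sum]
  apply sum_congr rfl
  intro π _
  rw [← (Fin.insertNthEquiv (fun _ => Bool) k).sum_comp, Fintype.sum_prod_type, sum_mul]
  apply sum_congr rfl
  intro e _
  rw [mul_sum]
  apply sum_congr rfl
  intro τ _
  exact PT_rec Δ B β u g k π e τ

lemma fl_ne {e : Bool} {x : ℂ} (hx : x ≠ 0) : fl e x ≠ 0 := by
  cases e <;> simp [fl, hx]

lemma kap_mul {n : ℕ} (Δ B : ℂ) (β : Bool → ℂ) (u : Fin (n + 1) → ℂ) (g : Fin (n + 1) → Bool)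
    (hu : ∀ i, u i ≠ 0) (hX : ∀ i j, i ≠ j → Xf (u i) ≠ Xf (u j)) (k : Fin (n + 1)) (e : Bool) :
    kap Δ B β u g k e * ∏ i : Fin n, (Xf (u k) - Xf (u (k.succAbove i))) =
    sg e * ((B * fl e (u k) + β (g k)) *
      ∏ i ∈ univ.erase k, fac Δ (g i = g k) (Xf (u i)) (fl e (u k))) := by
  have h1 : ∏ i ∈ univ.erase k, fac Δ (g i = g k) (Xf (u i)) (fl e (u k)) =
      ∏ i : Fin n, fac Δ (g (k.succAbove i) = g k) (Xf (u (k.succAbove i))) (fl e (u k)) := by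
    rw [← compl_singleton, ← Fin.image_succAbove_univ, prod_image]
    intro i _ j _ h
    exact Fin.succAbove_right_injective h
  have h2 : ∀ i : Fin n, fac Δ (g (k.succAbove i) = g k) (Xf (u (k.succAbove i))) (fl e (u k)) =
      fl e (u k) * WW Δ (g (k.succAbove i) = g k) (u (k.succAbove i)) (fl e (u k)) *
        (Xf (u k) - Xf (u (k.succAbove i))) := by
    intro i
    have hx : fl e (u k) ≠ 0 := fl_ne (hu k)
    have hk : Xf (u k) - Xf (u (k.succAbove i)) ≠ 0 :=
      sub_ne_zero.mpr (hX _ _ (Fin.succAbove_ne k i).symm)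
    unfold fac WW
    split_ifs
    · rw [Xf_fl]; field_simp
    · rw [← Xf_fl e (u k)]
      generalize Xf (u (k.succAbove i)) = Y
      unfold facL Xf
      field_simp
  rw [h1]
  simp_rw [h2]
  rw [prod_mul_distrib, prod_mul_distrib, prod_const, card_univ, Fintype.card_fin]
  unfold kap
  ring

theorem core (Δ B : ℂ) (β : Bool → ℂ) (hβ : β true + β false = Δ * B) : ∀ (n : ℕ)
    (u : Fin n → ℂ) (g : Fin n → Bool)
    (_ : ∀ i, u i ≠ 0) (_ : ∀ i j, i ≠ j → Xf (u i) ≠ Xf (u j))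
    (_ : ∀ i, Xf (u i) + Δ ≠ 0),
    PP Δ B β u g * VV (fun i => Xf (u i)) = B ^ n * (HM Δ u).det := by
  intro n
  induction n with
  | zero => intro u g _ _ _; simp [PP, PT, VV]
  | succ n ih =>
    intro u g hu hX hD
    obtain ⟨T, hT0, hT1, hT⟩ := exists_T Δ B β hβ (fun i => Xf (u i)) g
    have hs := det_step Δ u (fun j => T.coeff (j + 1))
    simp only [Fin.val_last, hT1] at hs
    rw [pow_succ, mul_assoc, ← hs, PP_rec, sum_mul, mul_sum]
    apply sum_congr rfl
    intro k _
    rw [← q_expand Δ B β u g T hT0 hT k (hu k) (hD k)]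
    simp_rw [← kap_mul Δ B β u g hu hX k]
    rw [← sum_mul, VV_step _ k]
    have := ih (fun i => u (k.succAbove i)) (fun i => g (k.succAbove i)) (fun i => hu _)
      (fun i j hij => hX _ _ (fun h => hij (Fin.succAbove_right_injective h))) (fun i => hD _)
    linear_combination (∑ i, kap Δ B β u g k i) * (-1) ^ ((k : ℕ) + n) *
      (∏ i : Fin n, (Xf (u k) - Xf (u (k.succAbove i)))) * this



lemma xfun_eq {M n : ℕ} (T : Finset (Fin M)) (h : T.card = n) (k : Fin n) :
    xfun T k = (T.orderEmbOfFin h k : ℕ) + 1 := by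
  unfold xfun
  rw [List.getD_eq_getElem _ _ (by simp [h])]
  simp [Finset.orderEmbOfFin_apply]

noncomputable def half {n : ℕ} (Δ B β : ℂ) (u : Fin n → ℂ) (x : ℕ → ℕ)
    (σ : Equiv.Perm (Fin n)) (τ : Fin n → Bool) : ℂ :=
  (∏ i, (sg (τ i) * (B * fl (τ i) (u i) + β))) *
  (∏ j, ∏ i, if i < j then
    WW Δ True (fl (τ (σ i)) (u (σ i))) (fl (τ (σ j)) (u (σ j))) else 1) *
  ∏ i : Fin n, fl (τ (σ i)) (u (σ i)) ^ (x i - 1)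

section
variable {M n m : ℕ} (G : Fin n ⊕ Fin m ≃ Fin M)

lemma compl_card_aux (G : Fin n ⊕ Fin m ≃ Fin M) (S : Finset (Fin M)) (h : S.card = n) :
    Sᶜ.card = m := by
  have := Fintype.card_congr G
  simp at this
  rw [card_compl, h, Fintype.card_fin]; omega

noncomputable def piOf (S : {S : Finset (Fin M) // S ∈ powersetCard n (univ : Finset (Fin M))})
    (σ : Equiv.Perm (Fin n)) (ρ : Equiv.Perm (Fin m)) : Equiv.Perm (Fin M) :=
  (finSumEquivOfFinset (mem_powersetCard.mp S.2).2
    (compl_card_aux G S.1 (mem_powersetCard.mp S.2).2)).symm.trans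
    ((Equiv.sumCongr σ ρ).trans G)

lemma piOf_apply (S : {S : Finset (Fin M) // S ∈ powersetCard n (univ : Finset (Fin M))})
    (σ : Equiv.Perm (Fin n)) (ρ : Equiv.Perm (Fin m)) (x : Fin n ⊕ Fin m) :
    piOf G S σ ρ (finSumEquivOfFinset (mem_powersetCard.mp S.2).2
    (compl_card_aux G S.1 (mem_powersetCard.mp S.2).2) x) = G (Sum.map σ ρ x) := by
  simp only [piOf, Equiv.trans_apply, Equiv.symm_apply_apply, Equiv.sumCongr_apply]

lemma piOf_mem (S : {S : Finset (Fin M) // S ∈ powersetCard n (univ : Finset (Fin M))})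
    (σ : Equiv.Perm (Fin n)) (ρ : Equiv.Perm (Fin m)) (i : Fin M) :
    i ∈ S.1 ↔ (G.symm (piOf G S σ ρ i)).isLeft = true := by
  obtain ⟨x, rfl⟩ := (finSumEquivOfFinset (mem_powersetCard.mp S.2).2
    (compl_card_aux G S.1 (mem_powersetCard.mp S.2).2)).surjective i
  rw [piOf_apply]
  cases x with
  | inl k => simp
  | inr k =>
    have := orderEmbOfFin_mem S.1ᶜ (compl_card_aux G S.1 (mem_powersetCard.mp S.2).2) k
    rw [mem_compl] at this
    simp [this]

lemma piOf_bij : Function.Bijective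
    (fun p : {S : Finset (Fin M) // S ∈ powersetCard n (univ : Finset (Fin M))} ×
      Equiv.Perm (Fin n) × Equiv.Perm (Fin m) => piOf G p.1 p.2.1 p.2.2) := by
  rw [Fintype.bijective_iff_injective_and_card]
  constructor
  · rintro ⟨S, σ, ρ⟩ ⟨S', σ', ρ'⟩ h
    simp only at h
    have hS : S = S' := by
      apply Subtype.ext
      ext i
      rw [piOf_mem G S σ ρ, h, ← piOf_mem]
    subst hS
    unfold piOf at h
    have h2 : Equiv.sumCongr σ ρ = Equiv.sumCongr σ' ρ' := by
      ext x
      have := congrArg (fun f => G.symm (f ((finSumEquivOfFinset (mem_powersetCard.mp S.2).2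
        (compl_card_aux G S.1 (mem_powersetCard.mp S.2).2)) x))) h
      simpa only [Equiv.trans_apply, Equiv.symm_apply_apply] using this
    have h3 : σ = σ' := by
      ext i
      have := congrArg (fun f => f (Sum.inl i)) h2
      simp at this
      rw [this]
    have h4 : ρ = ρ' := by
      ext i
      have := congrArg (fun f => f (Sum.inr i)) h2
      simp at this
      rw [this]
    rw [h3, h4]
  · have := Fintype.card_congr G
    simp at this
    subst this
    simp [Fintype.card_perm]
    have := Nat.choose_mul_factorial_mul_factorial (Nat.le_add_right n m)
    rw [Nat.add_sub_cancel_left] at this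
    rw [← this]; ring

def tauEquiv : (Fin n → Bool) × (Fin m → Bool) ≃ (Fin M → Bool) :=
  (Equiv.sumArrowEquivProdArrow (Fin n) (Fin m) Bool).symm.trans (Equiv.arrowCongr G (Equiv.refl _))

lemma tauEquiv_apply (t : (Fin n → Bool) × (Fin m → Bool)) (x) :
    tauEquiv G t (G x) = Sum.elim t.1 t.2 x := by
  rcases x with x | x <;> simp [tauEquiv, Equiv.sumArrowEquivProdArrow]

lemma WW_congr (Δ : ℂ) (p q : Prop) [Decidable p] [Decidable q] (h : p ↔ q) (x y : ℂ) :
    WW Δ p x y = WW Δ q x y := by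
  unfold WW; simp [h]

lemma PT_piOf (Δ B : ℂ) (β : Bool → ℂ) (u : Fin M → ℂ)
    (S : {S : Finset (Fin M) // S ∈ powersetCard n (univ : Finset (Fin M))})
    (σ : Equiv.Perm (Fin n)) (ρ : Equiv.Perm (Fin m)) (t : (Fin n → Bool) × (Fin m → Bool)) :
    PT Δ B β u (fun i => (G.symm i).isLeft) (piOf G S σ ρ) (tauEquiv G t) =
    half Δ B (β true) (fun i => u (G (Sum.inl i))) (xfun S.1) σ t.1 *
    half Δ B (β false) (fun i => u (G (Sum.inr i))) (xfun S.1ᶜ) ρ t.2 := by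
  unfold PT
  have hS := (mem_powersetCard.mp S.2).2
  have hS' := compl_card_aux G S.1 hS
  set E := finSumEquivOfFinset hS hS' with hE
  have hl : ∀ k, piOf G S σ ρ (E (Sum.inl k)) = G (Sum.inl (σ k)) := by
    intro k; exact piOf_apply G S σ ρ _
  have hr : ∀ k, piOf G S σ ρ (E (Sum.inr k)) = G (Sum.inr (ρ k)) := by
    intro k; exact piOf_apply G S σ ρ _
  have hEl : ∀ k, E (Sum.inl k) = S.1.orderEmbOfFin hS k := by intro k; simp [hE]
  have hEr : ∀ k, E (Sum.inr k) = S.1ᶜ.orderEmbOfFin hS' k := by intro k; simp [hE]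
  have hxl : ∀ k : Fin n, (E (Sum.inl k) : ℕ) = xfun S.1 k - 1 := by
    intro k; rw [xfun_eq _ hS, hEl]; simp
  have hxr : ∀ k : Fin m, (E (Sum.inr k) : ℕ) = xfun S.1ᶜ k - 1 := by
    intro k; rw [xfun_eq _ hS', hEr]; simp
  have h1 : ∏ i, (sg (tauEquiv G t i) * (B * fl (tauEquiv G t i) (u i) + β (G.symm i).isLeft)) =
      (∏ i, (sg (t.1 i) * (B * fl (t.1 i) (u (G (Sum.inl i))) + β true))) *
      (∏ i, (sg (t.2 i) * (B * fl (t.2 i) (u (G (Sum.inr i))) + β false))) := by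
    rw [← G.prod_comp, Fintype.prod_sum_type]
    simp [tauEquiv_apply]
  rw [h1]
  rw [← E.prod_comp, Fintype.prod_sum_type]
  simp_rw [← E.prod_comp (fun i => if i < _ then _ else _), Fintype.prod_sum_type]
  rw [← E.prod_comp, Fintype.prod_sum_type]
  simp only [hl, hr, tauEquiv_apply, Equiv.symm_apply_apply, Sum.isLeft_inl, Sum.isLeft_inr,
    Sum.elim_inl, Sum.elim_inr, hxl, hxr]
  have hmix : ∀ x y : ℂ, WW Δ (true = false) x y = 1 := by intros; simp [WW]
  have hmix' : ∀ x y : ℂ, WW Δ (false = true) x y = 1 := by intros; simp [WW]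
  simp only [hmix, hmix', ite_self, prod_const_one, mul_one, one_mul]
  have hlt : ∀ i j, E (Sum.inl i) < E (Sum.inl j) ↔ i < j := by
    intro i j; rw [hEl, hEl]; exact OrderEmbedding.lt_iff_lt _
  have hlt' : ∀ i j, E (Sum.inr i) < E (Sum.inr j) ↔ i < j := by
    intro i j; rw [hEr, hEr]; exact OrderEmbedding.lt_iff_lt _
  simp only [hlt, hlt']
  unfold half
  ring

lemma bridge (Δ B : ℂ) (β : Bool → ℂ) (u : Fin M → ℂ) :
    PP Δ B β u (fun i => (G.symm i).isLeft) =
    ∑ S ∈ powersetCard n (univ : Finset (Fin M)),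
      (∑ σ, ∑ τ, half Δ B (β true) (fun i => u (G (Sum.inl i))) (xfun S) σ τ) *
      (∑ σ, ∑ τ, half Δ B (β false) (fun i => u (G (Sum.inr i))) (xfun Sᶜ) σ τ) := by
  unfold PP
  rw [← (piOf_bij G).sum_comp (fun π => ∑ τ, PT Δ B β u _ π τ), Fintype.sum_prod_type]
  rw [← sum_coe_sort (powersetCard n (univ : Finset (Fin M)))]
  apply sum_congr rfl
  intro S _
  rw [Fintype.sum_prod_type, sum_mul_sum]
  apply sum_congr rfl
  intro σ _
  apply sum_congr rfl
  intro ρ _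
  rw [← (tauEquiv G).sum_comp, Fintype.sum_prod_type, sum_mul_sum]
  apply sum_congr rfl
  intro τ _
  apply sum_congr rfl
  intro τ' _
  exact PT_piOf G Δ B β u S σ ρ (τ, τ')
end

noncomputable def pp (a y : ℂ) : ℂ := a * y⁻¹ - a⁻¹ * y
noncomputable def qq (a y : ℂ) : ℂ := a * y - a⁻¹ * y⁻¹
noncomputable def uu (a y : ℂ) : ℂ := pp a y / qq a y
noncomputable def kk (a y : ℂ) : ℂ := a ^ (2:ℤ) + a ^ (-2:ℤ) - y ^ (-2:ℤ) - y ^ (2:ℤ)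
noncomputable def dl (a : ℂ) : ℂ := a ^ (2:ℤ) + a ^ (-2:ℤ)
noncomputable def cc (a : ℂ) : ℂ := a ^ (2:ℤ) - a ^ (-2:ℤ)

lemma zp2 (x : ℂ) : x ^ (-2:ℤ) = x⁻¹ ^ 2 := by
  rw [zpow_neg, inv_pow]; norm_cast
lemma zp2' (x : ℂ) : x ^ (2:ℤ) = x ^ 2 := by norm_cast

lemma pp_inv (a y : ℂ) : pp a y⁻¹ = qq a y := by unfold pp qq; simp
lemma qq_inv (a y : ℂ) : qq a y⁻¹ = pp a y := by unfold pp qq; simp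
lemma uu_inv (a y : ℂ) : uu a y⁻¹ = (uu a y)⁻¹ := by
  unfold uu; rw [pp_inv, qq_inv, inv_div]
lemma uu_fl (a y : ℂ) (e : Bool) : uu a (fl e y) = fl e (uu a y) := by
  cases e <;> simp [fl, uu_inv]
lemma kk_inv (a y : ℂ) : kk a y⁻¹ = kk a y := by
  unfold kk; simp only [zp2, zp2', inv_inv]; ring
lemma kk_fl (a y : ℂ) (e : Bool) : kk a (fl e y) = kk a y := by
  cases e <;> simp [fl, kk_inv]
lemma pq_eq (a y : ℂ) (ha : a ≠ 0) (hy : y ≠ 0) : pp a y * qq a y = kk a y := by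
  unfold pp qq kk; simp only [zp2, zp2']; field_simp; ring
lemma conic (a y : ℂ) (ha : a ≠ 0) (hy : y ≠ 0) :
    pp a y ^ 2 + qq a y ^ 2 + dl a * (pp a y * qq a y) = cc a ^ 2 := by
  unfold pp qq dl cc; simp only [zp2, zp2']; field_simp; ring
lemma Xf_uu (a y : ℂ) (ha : a ≠ 0) (hy : y ≠ 0) (hp : pp a y ≠ 0) (hq : qq a y ≠ 0) :
    Xf (uu a y) + dl a = cc a ^ 2 / kk a y := by
  rw [← pq_eq a y ha hy, ← conic a y ha hy]
  unfold Xf uu; field_simp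

lemma kk_sub (a y z : ℂ) : kk a y - kk a z = z ^ 2 + z⁻¹ ^ 2 - y ^ 2 - y⁻¹ ^ 2 := by
  unfold kk; simp only [zp2, zp2']; ring

lemma Xf_sub (a y z : ℂ) (ha : a ≠ 0) (hy : y ≠ 0) (hp : pp a y ≠ 0) (hq : qq a y ≠ 0)
    (hz : z ≠ 0) (hpz : pp a z ≠ 0) (hqz : qq a z ≠ 0) :
    Xf (uu a z) - Xf (uu a y) = cc a ^ 2 * (kk a y - kk a z) / (kk a y * kk a z) := by
  have h1 := Xf_uu a y ha hy hp hq
  have h2 := Xf_uu a z ha hz hpz hqz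
  have hk : kk a y ≠ 0 := by rw [← pq_eq a y ha hy]; exact mul_ne_zero hp hq
  have hk' : kk a z ≠ 0 := by rw [← pq_eq a z ha hz]; exact mul_ne_zero hpz hqz
  have : Xf (uu a z) - Xf (uu a y) = cc a ^ 2 / kk a z - cc a ^ 2 / kk a y := by
    rw [← h1, ← h2]; ring
  rw [this]; field_simp

lemma zpow_eps {N : ℕ} (τ : Fin N → Bool) (j : Fin N) (z : ℂ) : z ^ eps τ j = fl (τ j) z := by
  unfold eps fl; cases τ j <;> simp
lemma zpow_neg_eps {N : ℕ} (τ : Fin N → Bool) (j : Fin N) (z : ℂ) :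
    z ^ (-eps τ j) = (fl (τ j) z)⁻¹ := by
  rw [zpow_neg, zpow_eps]
lemma zpow_two_eps {N : ℕ} (τ : Fin N → Bool) (j : Fin N) (z : ℂ) :
    (z ^ (2 * eps τ j) - z ^ (-(2 * eps τ j)))⁻¹ = sg (τ j) * (z ^ 2 - z⁻¹ ^ 2)⁻¹ := by
  have h : z ^ (-(2 * eps τ j)) = (z ^ (2 * eps τ j))⁻¹ := zpow_neg _ _
  rw [h]
  unfold eps sg
  cases τ j
  · simp only [Bool.false_eq_true, if_false, mul_neg, mul_one, zp2, zp2', inv_pow, inv_inv]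
    rw [← neg_sub, inv_neg]; ring
  · simp [zp2']

lemma pair_eq (a Z1 Z2 : ℂ) {N : ℕ} (τ : Fin N → Bool) (i j : Fin N)
    (ha : a ≠ 0) (hc : cc a ≠ 0) (hy : Z1 ≠ 0) (hp : pp a Z1 ≠ 0) (hq : qq a Z1 ≠ 0)
    (hz : Z2 ≠ 0) (hpz : pp a Z2 ≠ 0) (hqz : qq a Z2 ≠ 0) (hne : kk a Z1 ≠ kk a Z2) :
    pairFactor a Z1 Z2 (eps τ i) (eps τ j) =
      WW (dl a) True (fl (τ i) (uu a Z1)) (fl (τ j) (uu a Z2)) := by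
  rw [WW_fl, ← uu_fl]
  unfold pairFactor
  rw [zpow_eps, zpow_eps, zpow_neg_eps, zpow_neg_eps]
  have hw : fl (τ j) Z2 ≠ 0 := fl_ne hz
  have hpw : pp a (fl (τ j) Z2) ≠ 0 := by
    cases τ j <;> simp [fl, pp_inv, hpz, hqz]
  have hqw : qq a (fl (τ j) Z2) ≠ 0 := by
    cases τ j <;> simp [fl, qq_inv, hpz, hqz]
  have hne' : kk a Z1 - kk a (fl (τ j) Z2) ≠ 0 := by rw [kk_fl]; exact sub_ne_zero.mpr hne
  generalize fl (τ j) Z2 = w at *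
  have hy' : fl (τ i) Z1 ≠ 0 := fl_ne hy
  have hkf : kk a Z1 = kk a (fl (τ i) Z1) := (kk_fl _ _ _).symm
  have hk1 : kk a Z1 ≠ 0 := by rw [← pq_eq a Z1 ha hy]; exact mul_ne_zero hp hq
  have hkw : kk a w ≠ 0 := by rw [← pq_eq a w ha hw]; exact mul_ne_zero hpw hqw
  unfold WW
  rw [if_pos trivial, facR_eq, rfn_Xf (dl a) (uu a w) (div_ne_zero hpw hqw), Xf_uu a w ha hw hpw hqw,
    Xf_uu a Z1 ha hy hp hq, Xf_sub a Z1 w ha hy hp hq hw hpw hqw]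
  have e1 : (uu a w * (cc a ^ 2 / kk a w) + cc a ^ 2 / kk a Z1 * (uu a w + dl a)) /
      (uu a w * (cc a ^ 2 * (kk a Z1 - kk a w) / (kk a Z1 * kk a w))) =
      (kk a Z1 + kk a w + dl a * qq a w ^ 2) / (kk a Z1 - kk a w) := by
    have hkw2 := pq_eq a w ha hw
    rw [← hkw2] at hkw hne' ⊢
    unfold uu
    field_simp
    ring
  rw [e1]
  have e2 : (fl (τ i) Z1 * w - (fl (τ i) Z1)⁻¹ * w⁻¹) * ((fl (τ i) Z1)⁻¹ * w - fl (τ i) Z1 * w⁻¹) =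
      kk a Z1 - kk a w := by
    rw [hkf, kk_sub]; field_simp; ring
  rw [e2]
  congr 1
  rw [hkf]
  generalize fl (τ i) Z1 = v at *
  unfold kk dl qq
  simp only [zp2, zp2']
  field_simp
  ring

lemma bfac_FF (a b y : ℂ) (M v : ℕ) (hv : v < M) (ha : a ≠ 0) (hb : b ≠ 0) (hc : cc a ≠ 0)
    (hy : y ≠ 0) (hq : qq a y ≠ 0) :
    (b * a⁻¹ * y⁻¹ - b⁻¹ * a * y) * pp a y ^ M * pp a y ^ v * qq a y ^ (M - 1 - v) * cc a =
    kk a y ^ M * (((b - b⁻¹) * uu a y + (b * a⁻¹ ^ 2 - b⁻¹ * a ^ 2)) * uu a y ^ v) := by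
  obtain ⟨w, rfl⟩ : ∃ w, M = v + 1 + w := ⟨M - 1 - v, by omega⟩
  rw [show v + 1 + w - 1 - v = w by omega, ← pq_eq a y ha hy]
  have e : (b * a⁻¹ * y⁻¹ - b⁻¹ * a * y) * cc a =
      (b - b⁻¹) * pp a y + (b * a⁻¹ ^ 2 - b⁻¹ * a ^ 2) * qq a y := by
    unfold cc pp qq; simp only [zp2, zp2']; field_simp; ring
  have e' : (b - b⁻¹) * uu a y + (b * a⁻¹ ^ 2 - b⁻¹ * a ^ 2) =
      ((b * a⁻¹ * y⁻¹ - b⁻¹ * a * y) * cc a) / qq a y := by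
    rw [e]; unfold uu; field_simp
  rw [e']
  unfold uu
  generalize pp a y = p at *
  generalize qq a y = q at *
  generalize b * a⁻¹ * y⁻¹ - b⁻¹ * a * y = r
  rw [div_pow, mul_pow, pow_add q (v+1) w, pow_succ q v]
  field_simp

lemma bfac_FBar (a b y : ℂ) (M v : ℕ) (hv : v < M) (ha : a ≠ 0) (hb : b ≠ 0) (hc : cc a ≠ 0)
    (hy : y ≠ 0) (hq : qq a y ≠ 0) :
    (b * a * y - b⁻¹ * a⁻¹ * y⁻¹) * pp a y ^ M * pp a y ^ v * qq a y ^ (M - 1 - v) * cc a =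
    kk a y ^ M * (((b - b⁻¹) * uu a y + (b * a ^ 2 - b⁻¹ * a⁻¹ ^ 2)) * uu a y ^ v) := by
  obtain ⟨w, rfl⟩ : ∃ w, M = v + 1 + w := ⟨M - 1 - v, by omega⟩
  rw [show v + 1 + w - 1 - v = w by omega, ← pq_eq a y ha hy]
  have e : (b * a * y - b⁻¹ * a⁻¹ * y⁻¹) * cc a =
      (b - b⁻¹) * pp a y + (b * a ^ 2 - b⁻¹ * a⁻¹ ^ 2) * qq a y := by
    unfold cc pp qq; simp only [zp2, zp2']; field_simp; ring
  have e' : (b - b⁻¹) * uu a y + (b * a ^ 2 - b⁻¹ * a⁻¹ ^ 2) =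
      ((b * a * y - b⁻¹ * a⁻¹ * y⁻¹) * cc a) / qq a y := by
    rw [e]; unfold uu; field_simp
  rw [e']
  unfold uu
  generalize pp a y = p at *
  generalize qq a y = q at *
  generalize b * a * y - b⁻¹ * a⁻¹ * y⁻¹ = r
  rw [div_pow, mul_pow, pow_add q (v+1) w, pow_succ q v]
  field_simp

noncomputable def Cj (a : ℂ) (M : ℕ) (z : ℂ) : ℂ :=
  (-(a ^ (2:ℤ) * z ^ (2:ℤ)) + a ^ (-2:ℤ) * z ^ (-2:ℤ)) * (z ^ 2 - z⁻¹ ^ 2)⁻¹ * kk a z ^ M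

lemma filt1 {M : ℕ} (x : ℕ) (h1 : 1 ≤ x) (h2 : x ≤ M) (p : ℂ) :
    ∏ _j ∈ univ.filter (fun j : Fin M => (j : ℕ) + 1 < x), p = p ^ (x - 1) := by
  rw [prod_const]
  congr 1
  have : (univ.filter (fun j : Fin M => (j : ℕ) + 1 < x)) =
      univ.filter (fun j : Fin M => (j : ℕ) < x - 1) := by
    ext j; simp; omega
  rw [this, Fin.card_filter_val_lt]; omega

lemma filt2 {M : ℕ} (x : ℕ) (h1 : 1 ≤ x) (h2 : x ≤ M) (p : ℂ) :
    ∏ _j ∈ univ.filter (fun j : Fin M => x ≤ (j : ℕ)), p = p ^ (M - 1 - (x - 1)) := by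
  rw [prod_const]
  congr 1
  have : (univ.filter (fun j : Fin M => x ≤ (j : ℕ))) =
      univ \ univ.filter (fun j : Fin M => (j : ℕ) < x) := by
    ext j; simp
  rw [this, card_sdiff_of_subset (filter_subset _ _), Fin.card_filter_val_lt]; simp; omega

lemma pairs_eq (a : ℂ) {N : ℕ} (z : Fin N → ℂ) (σ : Equiv.Perm (Fin N)) (τ : Fin N → Bool)
    (ha : a ≠ 0) (hc : cc a ≠ 0) (hz : ∀ j, z j ≠ 0) (hp : ∀ j, pp a (z j) ≠ 0)
    (hq : ∀ j, qq a (z j) ≠ 0) (hk : ∀ i j, i ≠ j → kk a (z i) ≠ kk a (z j)) :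
    (∏ p ∈ Finset.univ.filter (fun p : Fin N × Fin N => p.1 < p.2),
      pairFactor a (z (σ p.1)) (z (σ p.2)) (eps τ (σ p.1)) (eps τ (σ p.2))) =
    ∏ j, ∏ i, if i < j then
      WW (dl a) True (fl (τ (σ i)) (uu a (z (σ i)))) (fl (τ (σ j)) (uu a (z (σ j)))) else 1 := by
  rw [prod_filter, Fintype.prod_prod_type_right]
  apply prod_congr rfl; intro j _
  apply prod_congr rfl; intro i _
  simp only
  split_ifs with h
  · exact pair_eq a _ _ τ _ _ ha hc (hz _) (hp _) (hq _) (hz _) (hp _) (hq _)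
      (hk _ _ (fun h' => h.ne (σ.injective h')))
  · rfl

lemma qq_fl_ne (a z : ℂ) (e : Bool) (hp : pp a z ≠ 0) (hq : qq a z ≠ 0) : qq a (fl e z) ≠ 0 := by
  cases e <;> simp [fl, qq_inv, hp, hq]

lemma FF_eq (a b : ℂ) (M N : ℕ) (z : Fin N → ℂ) (x : ℕ → ℕ)
    (hx1 : ∀ k : Fin N, 1 ≤ x k) (hx2 : ∀ k : Fin N, x k ≤ M)
    (ha : a ≠ 0) (hb : b ≠ 0) (hc : cc a ≠ 0) (hz : ∀ j, z j ≠ 0) (hp : ∀ j, pp a (z j) ≠ 0)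
    (hq : ∀ j, qq a (z j) ≠ 0) (hk : ∀ i j, i ≠ j → kk a (z i) ≠ kk a (z j)) :
    FF a b M N z (fun _ => 1) x = (∏ j, Cj a M (z j)) *
      ∑ σ, ∑ τ, half (dl a) (b - b⁻¹) (b * a⁻¹ ^ 2 - b⁻¹ * a ^ 2) (fun j => uu a (z j)) x σ τ := by
  unfold FF
  simp_rw [mul_sum]
  apply sum_congr rfl; intro σ _
  apply sum_congr rfl; intro τ _
  rw [pairs_eq a z σ τ ha hc hz hp hq hk]
  simp_rw [zpow_eps, zpow_neg_eps, zpow_two_eps, mul_one]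
  have e1 : ∀ k : Fin N, ((b * a⁻¹ * (fl (τ (σ k)) (z (σ k)))⁻¹ - b⁻¹ * a * fl (τ (σ k)) (z (σ k))) *
      (∏ _j : Fin M, pp a (fl (τ (σ k)) (z (σ k)))) *
      (∏ _j ∈ univ.filter (fun j : Fin M => (j : ℕ) + 1 < x k), pp a (fl (τ (σ k)) (z (σ k)))) *
      (∏ _j ∈ univ.filter (fun j : Fin M => x k ≤ (j : ℕ)), qq a (fl (τ (σ k)) (z (σ k))))) * cc a =
      (kk a (z (σ k)) ^ M *
        ((b - b⁻¹) * fl (τ (σ k)) (uu a (z (σ k))) + (b * a⁻¹ ^ 2 - b⁻¹ * a ^ 2))) *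
        fl (τ (σ k)) (uu a (z (σ k))) ^ (x k - 1) := by
    intro k
    rw [filt1 _ (hx1 k) (hx2 k), filt2 _ (hx1 k) (hx2 k), prod_const, card_univ, Fintype.card_fin,
      bfac_FF a b _ M (x k - 1) (by have := hx1 k; have := hx2 k; omega) ha hb hc (fl_ne (hz _))
      (qq_fl_ne _ _ _ (hp _) (hq _)), kk_fl, uu_fl]
    ring
  have e2 := prod_congr rfl (fun k (_ : k ∈ (univ : Finset (Fin N))) => e1 k)
  simp only [prod_mul_distrib, prod_const, card_univ, Fintype.card_fin] at e2
  rw [Equiv.prod_comp σ (fun j => kk a (z j) ^ M),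
    Equiv.prod_comp σ (fun j => (b - b⁻¹) * fl (τ j) (uu a (z j)) + (b * a⁻¹ ^ 2 - b⁻¹ * a ^ 2))] at e2
  unfold half Cj
  simp only [prod_mul_distrib, prod_const, card_univ, Fintype.card_fin]
  rw [show (a ^ (2:ℤ) - a ^ (-2:ℤ)) = cc a from rfl]
  unfold pp qq at e2
  linear_combination (∏ j, (-(a ^ (2:ℤ) * z j ^ (2:ℤ)) + a ^ (-2:ℤ) * z j ^ (-2:ℤ))) *
    (∏ j, sg (τ j)) * (∏ j, (z j ^ 2 - (z j)⁻¹ ^ 2)⁻¹) * (∏ j, ∏ i, if i < j then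
      WW (dl a) True (fl (τ (σ i)) (uu a (z (σ i)))) (fl (τ (σ j)) (uu a (z (σ j)))) else 1) * e2

lemma FBar_eq (a b : ℂ) (M N : ℕ) (z : Fin N → ℂ) (x : ℕ → ℕ)
    (hx1 : ∀ k : Fin N, 1 ≤ x k) (hx2 : ∀ k : Fin N, x k ≤ M)
    (ha : a ≠ 0) (hb : b ≠ 0) (hc : cc a ≠ 0) (hz : ∀ j, z j ≠ 0) (hp : ∀ j, pp a (z j) ≠ 0)
    (hq : ∀ j, qq a (z j) ≠ 0) (hk : ∀ i j, i ≠ j → kk a (z i) ≠ kk a (z j)) :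
    FBar a b M N z (fun _ => 1) x = (∏ j, Cj a M (z j)) *
      ∑ σ, ∑ τ, half (dl a) (b - b⁻¹) (b * a ^ 2 - b⁻¹ * a⁻¹ ^ 2) (fun j => uu a (z j)) x σ τ := by
  unfold FBar
  simp_rw [mul_sum]
  apply sum_congr rfl; intro σ _
  apply sum_congr rfl; intro τ _
  rw [pairs_eq a z σ τ ha hc hz hp hq hk]
  simp_rw [zpow_eps, zpow_neg_eps, zpow_two_eps, mul_one]
  have e1 : ∀ k : Fin N, ((b * a * fl (τ (σ k)) (z (σ k)) - b⁻¹ * a⁻¹ * (fl (τ (σ k)) (z (σ k)))⁻¹) *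
      (∏ _j : Fin M, pp a (fl (τ (σ k)) (z (σ k)))) *
      (∏ _j ∈ univ.filter (fun j : Fin M => (j : ℕ) + 1 < x k), pp a (fl (τ (σ k)) (z (σ k)))) *
      (∏ _j ∈ univ.filter (fun j : Fin M => x k ≤ (j : ℕ)), qq a (fl (τ (σ k)) (z (σ k))))) * cc a =
      (kk a (z (σ k)) ^ M *
        ((b - b⁻¹) * fl (τ (σ k)) (uu a (z (σ k))) + (b * a ^ 2 - b⁻¹ * a⁻¹ ^ 2))) *
        fl (τ (σ k)) (uu a (z (σ k))) ^ (x k - 1) := by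
    intro k
    rw [filt1 _ (hx1 k) (hx2 k), filt2 _ (hx1 k) (hx2 k), prod_const, card_univ, Fintype.card_fin,
      bfac_FBar a b _ M (x k - 1) (by have := hx1 k; have := hx2 k; omega) ha hb hc (fl_ne (hz _))
      (qq_fl_ne _ _ _ (hp _) (hq _)), kk_fl, uu_fl]
    ring
  have e2 := prod_congr rfl (fun k (_ : k ∈ (univ : Finset (Fin N))) => e1 k)
  simp only [prod_mul_distrib, prod_const, card_univ, Fintype.card_fin] at e2
  rw [Equiv.prod_comp σ (fun j => kk a (z j) ^ M),
    Equiv.prod_comp σ (fun j => (b - b⁻¹) * fl (τ j) (uu a (z j)) + (b * a ^ 2 - b⁻¹ * a⁻¹ ^ 2))] at e2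
  unfold half Cj
  simp only [prod_mul_distrib, prod_const, card_univ, Fintype.card_fin]
  rw [show (a ^ (2:ℤ) - a ^ (-2:ℤ)) = cc a from rfl]
  unfold pp qq at e2
  linear_combination (∏ j, (-(a ^ (2:ℤ) * z j ^ (2:ℤ)) + a ^ (-2:ℤ) * z j ^ (-2:ℤ))) *
    (∏ j, sg (τ j)) * (∏ j, (z j ^ 2 - (z j)⁻¹ ^ 2)⁻¹) * (∏ j, ∏ i, if i < j then
      WW (dl a) True (fl (τ (σ i)) (uu a (z (σ i)))) (fl (τ (σ j)) (uu a (z (σ j)))) else 1) * e2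

lemma xfun_bounds {M n : ℕ} (T : Finset (Fin M)) (h : T.card = n) (k : Fin n) :
    1 ≤ xfun T k ∧ xfun T k ≤ M := by
  rw [xfun_eq T h]; have := (T.orderEmbOfFin h k).isLt; omega

lemma prod_pairs {M : ℕ} (f : Fin M → ℂ) :
    ∏ p ∈ Finset.univ.filter (fun p : Fin M × Fin M => p.1 < p.2), (f p.1 * f p.2) =
      (∏ i, f i) ^ (M - 1) := by
  have h1 : ∏ p ∈ Finset.univ.filter (fun p : Fin M × Fin M => p.1 < p.2), f p.2 =
      ∏ p ∈ Finset.univ.filter (fun p : Fin M × Fin M => p.2 < p.1), f p.1 := by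
    rw [prod_filter, prod_filter, ← (Equiv.prodComm (Fin M) (Fin M)).prod_comp]
    rfl
  rw [prod_mul_distrib, h1, ← prod_union]
  · have : (Finset.univ.filter (fun p : Fin M × Fin M => p.1 < p.2)) ∪
        (Finset.univ.filter (fun p : Fin M × Fin M => p.2 < p.1)) =
        univ.filter (fun p : Fin M × Fin M => p.1 ≠ p.2) := by
      ext p; simp
    rw [this, prod_filter, Fintype.prod_prod_type, ← prod_pow]
    apply prod_congr rfl
    intro i _
    simp only
    rw [← prod_filter, prod_const]
    congr 1
    simp only [ne_eq]
    rw [filter_ne]; simp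
  · rw [disjoint_filter]
    intro p _ h; exact not_lt.mpr h.le

noncomputable def rr (a z : ℂ) : ℂ := -((a * z) ^ 2)⁻¹ * (cc a ^ 2 / kk a z)

lemma entry_eq_s16 (a z : ℂ) (j : ℕ) (ha : a ≠ 0) (hc : cc a ≠ 0) (hz : z ≠ 0) (hp : pp a z ≠ 0)
    (hq : qq a z ≠ 0) :
    (a ^ 2 * z ^ 2) ^ j / (a ^ 2 - z ^ 2) ^ (2 * (j + 1))
          - (a ^ 2 * z ^ 2) ^ j / (1 - a ^ 2 * z ^ 2) ^ (2 * (j + 1)) =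
    rr a z * ((cc a ^ (2 * (j + 1)))⁻¹ * hh (dl a) (uu a z) j) := by
  have e1 : a ^ 2 - z ^ 2 = a * z * pp a z := by unfold pp; field_simp
  have e2 : 1 - a ^ 2 * z ^ 2 = -(a * z * qq a z) := by unfold qq; field_simp; ring
  have hX := Xf_uu a z ha hz hp hq
  unfold Xf at hX
  unfold rr hh
  rw [e1, e2, hX, ← pq_eq a z ha hz]
  unfold uu
  generalize pp a z = p at *
  generalize qq a z = q at *
  generalize cc a = c at *
  have e3 : (-(a * z * q)) ^ (2 * (j + 1)) = (a * z * q) ^ (2 * (j + 1)) :=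
    Even.neg_pow (even_two_mul _) _
  rw [e3, inv_div, div_pow, div_pow, div_pow]
  simp only [pow_mul, mul_pow, pow_succ]
  field_simp
  ring

lemma prod_cc (c : ℂ) (M : ℕ) :
    ∏ j : Fin M, c ^ (2 * ((j : ℕ) + 1)) = (c ^ 2) ^ M * (c ^ M) ^ (M - 1) := by
  induction M with
  | zero => simp
  | succ n ih =>
    rw [Fin.prod_univ_castSucc]
    simp only [Fin.val_castSucc, Fin.val_last]
    rw [ih]
    cases n with
    | zero => simp
    | succ m => simp only [Nat.add_sub_cancel, ← pow_mul, ← pow_add]; congr 1; ring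

lemma VV_eq (a : ℂ) {M : ℕ} (z : Fin M → ℂ) (ha : a ≠ 0) (hz : ∀ j, z j ≠ 0)
    (hp : ∀ j, pp a (z j) ≠ 0) (hq : ∀ j, qq a (z j) ≠ 0) :
    VV (fun i => Xf (uu a (z i))) * (∏ i, kk a (z i)) ^ (M - 1) =
    (cc a ^ M) ^ (M - 1) *
      ∏ p ∈ Finset.univ.filter (fun p : Fin M × Fin M => p.1 < p.2),
        (-((z p.1)⁻¹ * z p.2) + z p.1 * (z p.2)⁻¹) *
        ((z p.1)⁻¹ * (z p.2)⁻¹ - z p.1 * z p.2) := by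
  have h1 : (cc a ^ M) ^ (M - 1) =
      ∏ p ∈ Finset.univ.filter (fun p : Fin M × Fin M => p.1 < p.2), (cc a * cc a) := by
    rw [prod_pairs (fun _ => cc a)]; simp
  rw [h1, ← prod_pairs, ← prod_mul_distrib]
  have h2 : VV (fun i => Xf (uu a (z i))) =
      ∏ p ∈ Finset.univ.filter (fun p : Fin M × Fin M => p.1 < p.2),
        (Xf (uu a (z p.2)) - Xf (uu a (z p.1))) := by
    unfold VV
    rw [prod_filter, Fintype.prod_prod_type_right]
  rw [h2, ← prod_mul_distrib]
  apply prod_congr rfl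
  intro p _
  have k1 : kk a (z p.1) ≠ 0 := by rw [← pq_eq a _ ha (hz _)]; exact mul_ne_zero (hp _) (hq _)
  have k2 : kk a (z p.2) ≠ 0 := by rw [← pq_eq a _ ha (hz _)]; exact mul_ne_zero (hp _) (hq _)
  rw [Xf_sub a _ _ ha (hz _) (hp _) (hq _) (hz _) (hp _) (hq _), div_mul_cancel₀ _ (mul_ne_zero k1 k2),
    kk_sub]
  have := hz p.1
  have := hz p.2
  field_simp
  ring

lemma Cj_eq (a : ℂ) (M : ℕ) (z : ℂ) (ha : a ≠ 0) (hz : z ≠ 0) (hz4 : z ^ 4 ≠ 1)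
    (hk : kk a z ≠ 0) :
    Cj a M z * cc a ^ 2 = a ^ 2 *
      ((a ^ (2:ℤ) * z ^ (2:ℤ) - a ^ (-2:ℤ) * z ^ (-2:ℤ)) / (1 - z ^ (-4:ℤ))) * rr a z *
      kk a z ^ (M + 1) := by
  have h4 : z ^ (-4:ℤ) = (z ^ 4)⁻¹ := by rw [zpow_neg]; norm_cast
  have n1 : z ^ 2 - z⁻¹ ^ 2 ≠ 0 := by
    intro h; apply hz4; field_simp at h; linear_combination h
  have n2 : 1 - (z ^ 4)⁻¹ ≠ 0 := by
    intro h; apply hz4; field_simp at h; linear_combination h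
  have n3 : z ^ 4 - 1 ≠ 0 := sub_ne_zero.mpr hz4
  have e1 : z ^ 2 - z⁻¹ ^ 2 = (z ^ 4 - 1) / z ^ 2 := by field_simp
  have e2 : 1 - (z ^ 4)⁻¹ = (z ^ 4 - 1) / z ^ 4 := by field_simp
  unfold Cj rr
  rw [h4, e1, e2]
  simp only [zp2, zp2']
  generalize cc a = c
  generalize kk a z = k at *
  rw [pow_succ]
  field_simp
  ring

lemma det_eq (a : ℂ) {M : ℕ} (z : Fin M → ℂ) (ha : a ≠ 0) (hc : cc a ≠ 0) (hz : ∀ j, z j ≠ 0)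
    (hp : ∀ j, pp a (z j) ≠ 0) (hq : ∀ j, qq a (z j) ≠ 0) :
    Matrix.det (Matrix.of fun i j : Fin M =>
        (a ^ 2 * z i ^ 2) ^ (j : ℕ) / (a ^ 2 - z i ^ 2) ^ (2 * ((j : ℕ) + 1))
          - (a ^ 2 * z i ^ 2) ^ (j : ℕ) / (1 - a ^ 2 * z i ^ 2) ^ (2 * ((j : ℕ) + 1))) =
    (∏ i, rr a (z i)) * ((∏ j : Fin M, cc a ^ (2 * ((j : ℕ) + 1)))⁻¹ *
      (HM (dl a) (fun i => uu a (z i))).det) := by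
  rw [← prod_inv_distrib, ← Matrix.det_mul_row, ← Matrix.det_mul_column]
  congr 1
  ext i j
  simp only [Matrix.of_apply, HM]
  exact entry_eq_s16 a (z i) j ha hc (hz i) (hp i) (hq i)

lemma zero_case (a b : ℂ) (M N : ℕ) (hM : 1 ≤ M) (z : Fin M → ℂ) (hc : cc a = 0)
    (hNM : N ≤ M) (y : Fin (M - N) → ℂ) (y' : Fin N → ℂ) (x x' : ℕ → ℕ) :
    FBar a b M (M - N) y (fun _ => (1 : ℂ)) x * FF a b M N y' (fun _ => (1 : ℂ)) x' = 0 := by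
  unfold cc at hc
  by_cases h : N = 0
  · have : M - N ≠ 0 := by omega
    unfold FBar; rw [hc, zero_pow this]; simp
  · unfold FF; rw [hc, zero_pow h]; simp

lemma zero_det (a : ℂ) {M : ℕ} (hM : 1 ≤ M) (z : Fin M → ℂ) (ha : a ≠ 0) (hc : cc a = 0) :
    Matrix.det (Matrix.of fun i j : Fin M =>
        (a ^ 2 * z i ^ 2) ^ (j : ℕ) / (a ^ 2 - z i ^ 2) ^ (2 * ((j : ℕ) + 1))
          - (a ^ 2 * z i ^ 2) ^ (j : ℕ) / (1 - a ^ 2 * z i ^ 2) ^ (2 * ((j : ℕ) + 1))) = 0 := by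
  apply Matrix.det_eq_zero_of_row_eq_zero (⟨0, by omega⟩ : Fin M)
  intro j
  simp only [Matrix.of_apply]
  rw [sub_eq_zero]
  have h4 : a ^ 4 = 1 := by
    unfold cc at hc; simp only [zp2, zp2'] at hc; field_simp at hc; linear_combination hc
  congr 1
  rw [pow_mul, pow_mul]
  congr 1
  linear_combination (1 - z ⟨0, by omega⟩ ^ 4) * h4

lemma nonzero_case (a b : ℂ) (M N : ℕ) (hNM : N ≤ M)
    (z : Fin M → ℂ)
    (ha : a ≠ 0) (hb : b ≠ 0) (hc : cc a ≠ 0) (hz : ∀ j, z j ≠ 0)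
    (hp : ∀ j, pp a (z j) ≠ 0) (hq : ∀ j, qq a (z j) ≠ 0)
    (hk : ∀ i j, i ≠ j → kk a (z i) ≠ kk a (z j)) (g : Fin M → Bool)
    (G : Fin N ⊕ Fin (M - N) ≃ Fin M) :
    ∑ S ∈ Finset.powersetCard N (Finset.univ : Finset (Fin M)),
      FBar a b M (M - N) (fun k => z (G (Sum.inr k))) (fun _ => (1 : ℂ)) (xfun Sᶜ) *
      FF a b M N (fun k => z (G (Sum.inl k))) (fun _ => (1 : ℂ)) (xfun S)
    = (∏ i, Cj a M (z i)) * PP (dl a) (b - b⁻¹)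
        (fun e => if e then b * a⁻¹ ^ 2 - b⁻¹ * a ^ 2 else b * a ^ 2 - b⁻¹ * a⁻¹ ^ 2)
        (fun i => uu a (z i)) (fun i => (G.symm i).isLeft) := by
  rw [bridge G, mul_sum]
  apply sum_congr rfl
  intro S hS
  have hS1 : S.card = N := (mem_powersetCard.mp hS).2
  have hS2 : Sᶜ.card = M - N := compl_card_aux G S hS1
  rw [FBar_eq a b M (M - N) _ (xfun Sᶜ) (fun k => (xfun_bounds Sᶜ hS2 k).1)
      (fun k => (xfun_bounds Sᶜ hS2 k).2) ha hb hc (fun _ => hz _) (fun _ => hp _) (fun _ => hq _)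
      (fun i j hij => hk _ _ (fun h => hij (Sum.inr_injective (G.injective h)))),
    FF_eq a b M N _ (xfun S) (fun k => (xfun_bounds S hS1 k).1)
      (fun k => (xfun_bounds S hS1 k).2) ha hb hc (fun _ => hz _) (fun _ => hp _) (fun _ => hq _)
      (fun i j hij => hk _ _ (fun h => hij (Sum.inl_injective (G.injective h)))),
    ← G.prod_comp, Fintype.prod_sum_type]
  simp only [if_true, Bool.false_eq_true, if_false]
  ring


/-- Theorem 6.4: the homogeneous (`w_1 = ⋯ = w_M = 1`) Cauchy-type identity for the
symmetric functions `F` and `F̄`, with the homogeneous-limit determinant of the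
reflecting-end domain wall boundary partition function on the right-hand side. -/
theorem cauchy_identity_homogeneous (a b : ℂ) (M N : ℕ) (hM : 1 ≤ M) (hNM : N ≤ M)
    (z : Fin M → ℂ)
    (ha : a ≠ 0) (hb : b ≠ 0) (hz : ∀ j, z j ≠ 0)
    (hz4 : ∀ j, z j ^ 4 ≠ 1)
    (hzz : ∀ j k, j ≠ k → z j ^ 2 * z k ^ 2 ≠ 1)
    (hzz' : ∀ j k, j ≠ k → z j ^ 2 ≠ z k ^ 2)
    (haz : ∀ i, (a ^ 2 - z i ^ 2) * (1 - a ^ 2 * z i ^ 2) ≠ 0) :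
    ∑ S ∈ Finset.powersetCard N (Finset.univ : Finset (Fin M)),
      FBar a b M (M - N) (fun k => z (Fin.castLE (Nat.sub_le M N) k))
        (fun _ => (1 : ℂ)) (xfun Sᶜ) *
      FF a b M N (fun k : Fin N => z ⟨M - N + (k : ℕ), by have := k.isLt; omega⟩)
        (fun _ => (1 : ℂ)) (xfun S)
    = a ^ (2 * M) * (b - b⁻¹) ^ M *
      (∏ i, (a ^ (2:ℤ) * z i ^ (2:ℤ) - a ^ (-2:ℤ) * z i ^ (-2:ℤ)) / (1 - z i ^ (-4:ℤ))) *
      ((∏ i, (a ^ (2:ℤ) + a ^ (-2:ℤ) - z i ^ (-2:ℤ) - z i ^ (2:ℤ)) ^ (2 * M)) /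
       (∏ p ∈ Finset.univ.filter (fun p : Fin M × Fin M => p.1 < p.2),
        (-((z p.1)⁻¹ * z p.2) + z p.1 * (z p.2)⁻¹) *
        ((z p.1)⁻¹ * (z p.2)⁻¹ - z p.1 * z p.2))) *
      Matrix.det (Matrix.of fun i j : Fin M =>
        (a ^ 2 * z i ^ 2) ^ (j : ℕ) / (a ^ 2 - z i ^ 2) ^ (2 * ((j : ℕ) + 1))
          - (a ^ 2 * z i ^ 2) ^ (j : ℕ) / (1 - a ^ 2 * z i ^ 2) ^ (2 * ((j : ℕ) + 1))) := by
  by_cases hc : cc a = 0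
  · rw [zero_det a hM z ha hc, mul_zero]
    exact sum_eq_zero fun S _ => zero_case a b M N hM z hc hNM _ _ _ _
  have hp : ∀ j, pp a (z j) ≠ 0 := by
    intro j h
    apply haz j
    have e1 : a ^ 2 - z j ^ 2 = a * z j * pp a (z j) := by
      have := hz j
      unfold pp; field_simp
    rw [e1, h]; ring
  have hq : ∀ j, qq a (z j) ≠ 0 := by
    intro j h
    apply haz j
    have e1 : 1 - a ^ 2 * z j ^ 2 = -(a * z j * qq a (z j)) := by
      have := hz j
      unfold qq; field_simp; ring
    rw [e1, h]; ring
  have hk0 : ∀ j, kk a (z j) ≠ 0 := fun j => by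
    rw [← pq_eq a _ ha (hz _)]; exact mul_ne_zero (hp _) (hq _)
  have hk : ∀ i j, i ≠ j → kk a (z i) ≠ kk a (z j) := by
    intro i j hij h
    have h1 := kk_sub a (z i) (z j)
    rw [h, sub_self] at h1
    have h2 : (z i ^ 2 - z j ^ 2) * (z i ^ 2 * z j ^ 2 - 1) = 0 := by
      have := hz i
      have := hz j
      field_simp at h1
      linear_combination h1
    rcases mul_eq_zero.mp h2 with h3 | h3
    · exact hzz' i j hij (sub_eq_zero.mp h3)
    · exact hzz i j hij (sub_eq_zero.mp h3)
  let G : Fin N ⊕ Fin (M - N) ≃ Fin M :=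
    (Equiv.sumComm _ _).trans (finSumFinEquiv.trans (finCongr (by omega)))
  have hL := nonzero_case a b M N hNM z ha hb hc hz hp hq hk (fun _ => true) G
  refine Eq.trans ?_ (hL.trans ?_)
  · rfl
  have hcore := core (dl a) (b - b⁻¹)
    (fun e => if e then b * a⁻¹ ^ 2 - b⁻¹ * a ^ 2 else b * a ^ 2 - b⁻¹ * a⁻¹ ^ 2)
    (by simp only [if_true, Bool.false_eq_true, if_false]; unfold dl; simp only [zp2, zp2']; ring)
    M (fun i => uu a (z i)) (fun i => (G.symm i).isLeft)
    (fun i => div_ne_zero (hp i) (hq i))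
    (fun i j hij h => by
      have h1 := Xf_sub a (z j) (z i) ha (hz _) (hp _) (hq _) (hz _) (hp _) (hq _)
      rw [h, sub_self] at h1
      exact div_ne_zero (mul_ne_zero (pow_ne_zero 2 hc) (sub_ne_zero.mpr (hk _ _ hij.symm)))
        (mul_ne_zero (hk0 _) (hk0 _)) h1.symm)
    (fun i => by
      rw [Xf_uu a _ ha (hz _) (hp _) (hq _)]
      exact div_ne_zero (pow_ne_zero 2 hc) (hk0 _))
  have hV := VV_eq a z ha hz hp hq
  have hC : (∏ i, Cj a M (z i)) * (cc a ^ 2) ^ M = a ^ (2 * M) *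
      (∏ i, (a ^ (2:ℤ) * z i ^ (2:ℤ) - a ^ (-2:ℤ) * z i ^ (-2:ℤ)) / (1 - z i ^ (-4:ℤ))) *
      (∏ i, rr a (z i)) * (∏ i, kk a (z i)) ^ (M + 1) := by
    have := prod_congr rfl (fun i (_ : i ∈ (univ : Finset (Fin M))) =>
      Cj_eq a M (z i) ha (hz i) (hz4 i) (hk0 i))
    simp only [prod_mul_distrib, prod_const, card_univ, Fintype.card_fin, prod_pow,
      ← pow_mul] at this
    rw [← pow_mul]; exact this
  have hD : (∏ p ∈ Finset.univ.filter (fun p : Fin M × Fin M => p.1 < p.2),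
        (-((z p.1)⁻¹ * z p.2) + z p.1 * (z p.2)⁻¹) *
        ((z p.1)⁻¹ * (z p.2)⁻¹ - z p.1 * z p.2)) ≠ 0 := by
    rw [prod_ne_zero_iff]
    intro p hpm
    have hlt : p.1 < p.2 := (mem_filter.mp hpm).2
    have e : (-((z p.1)⁻¹ * z p.2) + z p.1 * (z p.2)⁻¹) *
        ((z p.1)⁻¹ * (z p.2)⁻¹ - z p.1 * z p.2) = kk a (z p.1) - kk a (z p.2) := by
      rw [kk_sub]
      have := hz p.1
      have := hz p.2
      field_simp
      ring
    rw [e]; exact sub_ne_zero.mpr (hk _ _ hlt.ne)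
  rw [det_eq a z ha hc hz hp hq, prod_cc, prod_pow]
  rw [show (∏ i, (a ^ (2:ℤ) + a ^ (-2:ℤ) - z i ^ (-2:ℤ) - z i ^ (2:ℤ))) = ∏ i, kk a (z i) from rfl]
  have hKs : (∏ i, kk a (z i)) ^ (2 * M) =
      (∏ i, kk a (z i)) ^ (M + 1) * (∏ i, kk a (z i)) ^ (M - 1) := by
    rw [← pow_add]; congr 1; omega
  rw [hKs]
  have hE : (cc a ^ M) ^ (M - 1) ≠ 0 := pow_ne_zero _ (pow_ne_zero _ hc)
  have hE2 : (cc a ^ 2) ^ M ≠ 0 := pow_ne_zero _ (pow_ne_zero _ hc)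
  generalize (∏ p ∈ Finset.univ.filter (fun p : Fin M × Fin M => p.1 < p.2),
        (-((z p.1)⁻¹ * z p.2) + z p.1 * (z p.2)⁻¹) *
        ((z p.1)⁻¹ * (z p.2)⁻¹ - z p.1 * z p.2)) = D at *
  generalize (cc a ^ M) ^ (M - 1) = E1 at *
  generalize (cc a ^ 2) ^ M = E2 at *
  generalize (∏ i, kk a (z i)) ^ (M - 1) = K1 at *
  generalize (∏ i, kk a (z i)) ^ (M + 1) = K2 at *
  generalize (HM (dl a) fun i => uu a (z i)).det = H at *
  generalize (∏ i, rr a (z i)) = R at *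
  generalize (∏ i, Cj a M (z i)) = C at *
  generalize (∏ i, (a ^ (2:ℤ) * z i ^ (2:ℤ) - a ^ (-2:ℤ) * z i ^ (-2:ℤ)) / (1 - z i ^ (-4:ℤ))) = A at *
  generalize VV (fun i => Xf (uu a (z i))) = V at *
  generalize PP (dl a) (b - b⁻¹) _ _ _ = P at *
  generalize a ^ (2 * M) = aM at *
  generalize (b - b⁻¹) ^ M = BM at *
  clear hL
  have key : C * P * (E2 * E1 * D) = aM * A * R * K2 * K1 * (BM * H) := by
    rw [← hcore]
    linear_combination P * E1 * D * hC - aM * A * R * K2 * P * hV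
  field_simp
  linear_combination key
end
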